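/- Let N ∈ ℕ with N ≥ 2, p ∈ (2,∞), κ ∈ (0,1), and s > 0. Then Q_κ is bounded on H^s(ℝ^N) \ {0} (i.e. sup{ Q_κ(u) : u ∈ H^s(ℝ^N) \ {0} } < ∞) if and only if κ ≥ 1/2 and (N/s)(1/2 - 1/p) ≤ 1 - κ ≤ ((N+1)/2)(1/2 - 1/p). -/

import Mathlib

open MeasureTheory Filter Topology SchwartzMap

noncomputable section

abbrev Esp (N : ℕ) := EuclideanSpace ℝ (Fin N)

/-- An element of the Sobolev space `H^s(ℝ^N, ℂ)`: an `L²` function `u` together with (a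
representative of) its distributional Fourier transform `hat`, satisfying
`(1+|ξ|²)^{s/2}·hat ∈ L²`. The relation between `u` and `hat` is expressed by duality
against Schwartz functions (the multiplication formula `∫ u · 𝓕φ = ∫ û · φ`). -/
structure Hs (N : ℕ) (s : ℝ) where
  u : Esp N → ℂ
  hat : Esp N → ℂ
  u_mem : MemLp u 2 (volume : Measure (Esp N))
  hat_mem : MemLp (fun ξ => (((1 + ‖ξ‖ ^ 2) ^ (s / 2) : ℝ) : ℂ) * hat ξ) 2
    (volume : Measure (Esp N))
  fourier_spec : ∀ φ : SchwartzMap (Esp N) ℂ,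
    ∫ x, u x * (FourierTransform.fourierCLE ℂ (SchwartzMap (Esp N) ℂ) φ) x = ∫ ξ, hat ξ * φ ξ

/-- `u` does not vanish almost everywhere. -/
def Hs.Nontriv {N : ℕ} {s : ℝ} (U : Hs N s) : Prop :=
  ¬ (U.u =ᵐ[(volume : Measure (Esp N))] 0)

/-- `‖(|D|^s - 1) u‖_{L²}`: by Plancherel this is the `L²` norm of `(|ξ|^s - 1)·û`. -/
def dNorm {N : ℕ} {s : ℝ} (U : Hs N s) : ENNReal :=
  eLpNorm (fun ξ => ((‖ξ‖ ^ s - 1 : ℝ) : ℂ) * U.hat ξ) 2 (volume : Measure (Esp N))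

/-- The quotient `Q_κ(u) = ‖u‖_{L^p} / (‖u‖_{L²}^κ ‖(|D|^s - 1)u‖_{L²}^{1-κ})`,
computed in `[0,∞]`. -/
def Qquot {N : ℕ} {s : ℝ} (p κ : ℝ) (U : Hs N s) : ENNReal :=
  eLpNorm U.u (ENNReal.ofReal p) (volume : Measure (Esp N)) /
    (eLpNorm U.u 2 (volume : Measure (Esp N)) ^ κ * dNorm U ^ (1 - κ))

section PartA
open scoped FourierTransform ENNReal ComplexInnerProductSpace

/-- If `u ∈ L²` and `h` is locally integrable and represents the distributional Fourier transform,
then the `L²` Fourier transform of `u` is `h`. -/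
theorem fourier_ae_eq_of_spec {N : ℕ} {u h : Esp N → ℂ}
    (hu : MemLp u 2 (volume : Measure (Esp N)))
    (hh : LocallyIntegrable h (volume : Measure (Esp N)))
    (H : ∀ φ : SchwartzMap (Esp N) ℂ, ∫ x, u x * (𝓕 φ) x = ∫ ξ, h ξ * φ ξ) :
    (𝓕 (hu.toLp u) : Lp ℂ 2 (volume : Measure (Esp N))) =ᵐ[volume] h := by
  have h1 := Lp.fourier_toTemperedDistribution_eq (hu.toLp u)
  apply ae_eq_of_integral_contDiff_smul_eq
  · exact (Lp.memLp _).locallyIntegrable (by norm_num)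
  · exact hh
  intro g hg hgs
  have hgs' : HasCompactSupport (fun x => (g x : ℂ)) := hgs.comp_left (g := fun t : ℝ => (t : ℂ)) (by simp)
  have hg' : ContDiff ℝ (⊤ : ℕ∞) (fun x => (g x : ℂ)) := Complex.ofRealCLM.contDiff.comp hg
  let φ : SchwartzMap (Esp N) ℂ := hgs'.toSchwartzMap hg'
  have hφ : ∀ x, φ x = (g x : ℂ) := fun x => rfl
  have h2 := congrArg (fun T : 𝓢'(Esp N, ℂ) => T φ) h1
  simp only [TemperedDistribution.fourier_apply, Lp.toTemperedDistribution_apply] at h2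
  have h3 : ∫ x, (𝓕 φ) x • (hu.toLp u : Esp N → ℂ) x = ∫ x, u x * (𝓕 φ) x := by
    apply integral_congr_ae
    filter_upwards [hu.coeFn_toLp] with x hx
    rw [hx, smul_eq_mul, mul_comm]
  rw [h3, H] at h2
  calc _ = ∫ x, φ x • (𝓕 (hu.toLp u) : Lp ℂ 2 (volume : Measure (Esp N))) x := by
        congr 1
    _ = _ := by
        rw [← h2]; congr 1; ext x; rw [hφ, mul_comm]; simp

/-- Multiplication formula for an integrable function and a Schwartz function. -/
theorem mult_formula {N : ℕ} {f : Esp N → ℂ} (hf : Integrable f (volume : Measure (Esp N)))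
    (φ : SchwartzMap (Esp N) ℂ) :
    ∫ x, f x * (𝓕 φ) x = ∫ ξ, (𝓕 f) ξ * φ ξ := by
  have := VectorFourier.integral_fourierIntegral_smul_eq_flip (μ := (volume : Measure (Esp N)))
    (ν := (volume : Measure (Esp N))) (L := innerₗ (Esp N)) (e := Real.fourierChar) 
    Real.continuous_fourierChar continuous_inner hf (φ.integrable (μ := volume))
  simp only [flip_innerₗ] at this
  exact this.symm

theorem fourier_toLp_ae {N : ℕ} {f : Esp N → ℂ} (hf : Integrable f (volume : Measure (Esp N)))
    (hf2 : MemLp f 2 (volume : Measure (Esp N))) :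
    (𝓕 (hf2.toLp f) : Lp ℂ 2 (volume : Measure (Esp N))) =ᵐ[volume] 𝓕 f := by
  apply fourier_ae_eq_of_spec hf2 _ (mult_formula hf)
  apply Continuous.locallyIntegrable
  exact VectorFourier.fourierIntegral_continuous Real.continuous_fourierChar continuous_inner hf

theorem eLpNorm_fourier_Lp {N : ℕ} (v : Lp ℂ 2 (volume : Measure (Esp N))) :
    eLpNorm (𝓕 v : Lp ℂ 2 (volume : Measure (Esp N))) 2 volume = eLpNorm v 2 volume := by
  have := Lp.norm_fourier_eq v
  rw [Lp.norm_def, Lp.norm_def, ENNReal.toReal_eq_toReal_iff' (Lp.eLpNorm_ne_top _) (Lp.eLpNorm_ne_top _)] at this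
  exact this

theorem memLp_fourier {N : ℕ} {f : Esp N → ℂ} (hf : Integrable f (volume : Measure (Esp N)))
    (hf2 : MemLp f 2 (volume : Measure (Esp N))) : MemLp (𝓕 f) 2 (volume : Measure (Esp N)) :=
  (memLp_congr_ae (fourier_toLp_ae hf hf2)).1 (Lp.memLp _)

theorem eLpNorm_fourier {N : ℕ} {f : Esp N → ℂ} (hf : Integrable f (volume : Measure (Esp N)))
    (hf2 : MemLp f 2 (volume : Measure (Esp N))) : 
    eLpNorm (𝓕 f) 2 (volume : Measure (Esp N)) = eLpNorm f 2 volume := by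
  rw [← eLpNorm_congr_ae (fourier_toLp_ae hf hf2), eLpNorm_fourier_Lp, eLpNorm_congr_ae hf2.coeFn_toLp]

/-- Parseval. -/
theorem parseval {N : ℕ} (v : Lp ℂ 2 (volume : Measure (Esp N))) {f : Esp N → ℂ}
    (hf : Integrable f (volume : Measure (Esp N)))
    (hf2 : MemLp f 2 (volume : Measure (Esp N))) :
    ∫ x, v x * (starRingEnd ℂ) (f x) =
      ∫ ξ, (𝓕 v : Lp ℂ 2 (volume : Measure (Esp N))) ξ * (starRingEnd ℂ) (𝓕 f ξ) := by
  have h := Lp.inner_fourier_eq (hf2.toLp f) v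
  rw [L2.inner_def, L2.inner_def] at h
  have e1 : ∫ x, v x * (starRingEnd ℂ) (f x) = ∫ x, ⟪(hf2.toLp f : Esp N → ℂ) x, v x⟫ := by
    apply integral_congr_ae
    filter_upwards [hf2.coeFn_toLp] with x hx
    rw [hx]; simp
  have e2 : ∫ ξ, (𝓕 v : Lp ℂ 2 (volume : Measure (Esp N))) ξ * (starRingEnd ℂ) (𝓕 f ξ) = 
      ∫ x, ⟪(𝓕 (hf2.toLp f) : Lp ℂ 2 (volume : Measure (Esp N))) x, (𝓕 v : Lp ℂ 2 (volume : Measure (Esp N))) x⟫ := by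
    apply integral_congr_ae
    filter_upwards [fourier_toLp_ae hf hf2] with x hx
    rw [hx]; simp
  rw [e1, e2, h]

end PartA

section PartB
open Set Real

theorem glasser_aux {c : ℝ} (hc : 0 < c) :
    IntegrableOn (fun u : ℝ => (1 + c / u ^ 2) * exp (-(u - c / u) ^ 2)) (Ioi 0) ∧
    ∫ u in Ioi (0 : ℝ), (1 + c / u ^ 2) * exp (-(u - c / u) ^ 2) = √π := by
  have hd : ∀ u ∈ Ioi (0 : ℝ), HasDerivWithinAt (fun u : ℝ => u - c / u) (1 + c / u ^ 2) (Ioi 0) u := by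
    intro u hu
    have hu : u ≠ 0 := ne_of_gt hu
    have := ((hasDerivAt_id u).sub ((hasDerivAt_const u c).div (hasDerivAt_id u) hu)).hasDerivWithinAt (s := Ioi 0)
    convert! this using 1
    simp; ring
  have hinj : InjOn (fun u : ℝ => u - c / u) (Ioi 0) := by
    apply StrictMonoOn.injOn
    intro x hx y hy hxy
    have hx : 0 < x := hx
    have hy : 0 < y := hy
    have : c / y < c / x := div_lt_div_of_pos_left hc hx hxy
    simp only; linarith
  have him : (fun u : ℝ => u - c / u) '' (Ioi 0) = univ := by
    apply eq_univ_of_forall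
    intro t
    have h1 : t ^ 2 < t ^ 2 + 4 * c := by linarith
    have hs : |t| < √(t ^ 2 + 4 * c) := by
      rw [← Real.sqrt_sq_eq_abs]; exact Real.sqrt_lt_sqrt (sq_nonneg _) h1
    have hsq : √(t ^ 2 + 4 * c) ^ 2 = t ^ 2 + 4 * c := Real.sq_sqrt (by positivity)
    set S := √(t ^ 2 + 4 * c)
    have hp : 0 < (t + S) / 2 := by
      have := neg_abs_le t; linarith
    refine ⟨(t + S) / 2, hp, ?_⟩
    have : t + S ≠ 0 := by intro h; rw [h] at hp; simp at hp
    simp only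
    field_simp
    nlinarith
  have e : ∀ u ∈ Ioi (0:ℝ), |1 + c / u ^ 2| • exp (-(u - c / u) ^ 2) = (1 + c / u ^ 2) * exp (-(u - c / u) ^ 2) := by
    intro u hu
    rw [abs_of_nonneg (by positivity), smul_eq_mul]
  have hI := integrableOn_image_iff_integrableOn_abs_deriv_smul measurableSet_Ioi hd hinj
    (fun y => exp (-y ^ 2))
  have hE := integral_image_eq_integral_abs_deriv_smul measurableSet_Ioi hd hinj
    (fun y => exp (-y ^ 2))
  rw [him] at hI hE
  have g1 : Integrable (fun y : ℝ => exp (-y ^ 2)) := by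
    simpa using integrable_exp_neg_mul_sq (b := 1) one_pos
  have g2 : ∫ y : ℝ, exp (-y ^ 2) = √π := by
    simpa using integral_gaussian 1
  constructor
  · exact ((hI.1 g1.integrableOn).congr_fun e measurableSet_Ioi)
  · rw [setIntegral_univ] at hE
    rw [← g2, hE]
    exact (setIntegral_congr_fun measurableSet_Ioi e).symm

theorem glasser_aux2 {c : ℝ} (hc : 0 < c) :
    ∫ u in Ioi (0 : ℝ), exp (-(u - c / u) ^ 2) = ∫ u in Ioi (0 : ℝ), (c / u ^ 2) * exp (-(u - c / u) ^ 2) := by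
  have hd : ∀ u ∈ Ioi (0 : ℝ), HasDerivWithinAt (fun u : ℝ => c / u) (- (c / u ^ 2)) (Ioi 0) u := by
    intro u hu
    have hu : u ≠ 0 := ne_of_gt hu
    have := (((hasDerivAt_const u c).div (hasDerivAt_id u) hu)).hasDerivWithinAt (s := Ioi 0)
    convert! this using 1
    simp; ring
  have hinj : InjOn (fun u : ℝ => c / u) (Ioi 0) := by
    intro x hx y hy hxy
    have hx : x ≠ 0 := ne_of_gt hx
    have hy : y ≠ 0 := ne_of_gt hy
    simp only at hxy
    field_simp at hxy
    exact hxy.symm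
  have him : (fun u : ℝ => c / u) '' (Ioi 0) = Ioi 0 := by
    ext t; constructor
    · rintro ⟨u, hu, rfl⟩; exact div_pos hc hu
    · intro ht
      have ht : 0 < t := ht
      exact ⟨c / t, div_pos hc ht, by simp only; field_simp⟩
  have hE := integral_image_eq_integral_abs_deriv_smul measurableSet_Ioi hd hinj
    (fun u => exp (-(u - c / u) ^ 2))
  rw [him] at hE
  rw [hE]
  apply setIntegral_congr_fun measurableSet_Ioi
  intro u hu
  have hu : 0 < u := hu
  simp only
  rw [abs_neg, abs_of_nonneg (by positivity), smul_eq_mul]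
  congr 2
  field_simp; ring

theorem subord_aux {c : ℝ} (hc : 0 < c) :
    ∫ u in Ioi (0 : ℝ), exp (-u ^ 2 - c ^ 2 / u ^ 2) = √π / 2 * exp (-2 * c) := by
  obtain ⟨h1, h2⟩ := glasser_aux hc
  have h3 := glasser_aux2 hc
  have hi1 : IntegrableOn (fun u : ℝ => exp (-(u - c / u) ^ 2)) (Ioi 0) := by
    refine Integrable.mono' h1 (by fun_prop) ?_
    filter_upwards [ae_restrict_mem measurableSet_Ioi] with u hu
    have hu : 0 < u := hu
    rw [Real.norm_of_nonneg (exp_pos _).le]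
    have : 0 ≤ c / u ^ 2 := by positivity
    nlinarith [exp_pos (-(u - c / u) ^ 2)]
  have hi2 : IntegrableOn (fun u : ℝ => (c / u ^ 2) * exp (-(u - c / u) ^ 2)) (Ioi 0) := by
    refine (h1.sub hi1).congr (ae_of_all _ fun u => ?_)
    simp only [Pi.sub_apply]; ring
  have h4 : ∫ u in Ioi (0 : ℝ), (1 + c / u ^ 2) * exp (-(u - c / u) ^ 2) =
      (∫ u in Ioi (0 : ℝ), exp (-(u - c / u) ^ 2)) + ∫ u in Ioi (0 : ℝ), (c / u ^ 2) * exp (-(u - c / u) ^ 2) := by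
    rw [← integral_add hi1 hi2]; congr 1; ext u; ring
  have h5 : ∫ u in Ioi (0 : ℝ), exp (-u ^ 2 - c ^ 2 / u ^ 2) =
      ∫ u in Ioi (0 : ℝ), exp (-2 * c) * exp (-(u - c / u) ^ 2) := by
    apply setIntegral_congr_fun measurableSet_Ioi
    intro u hu
    have hu : 0 < u := hu
    simp only
    rw [← exp_add]; congr 1; field_simp; ring
  rw [h5, integral_const_mul]
  rw [h2, ← h3] at h4
  have h6 : ∫ u in Ioi (0 : ℝ), exp (-(u - c / u) ^ 2) = √π / 2 := by linarith
  rw [h6]; ring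

theorem integrable_pow_exp_norm {N : ℕ} (hN : 2 ≤ N) (m : ℕ) {w : ℝ} (hw : 0 < w) :
    Integrable (fun x : Esp N => ‖x‖ ^ m * exp (-w * ‖x‖)) := by
  have : Nontrivial (Esp N) := by
    have : Nonempty (Fin N) := ⟨⟨0, by omega⟩⟩
    infer_instance
  rw [integrable_fun_norm_addHaar volume (f := fun y => y ^ m * exp (-w * y))]
  have := integrableOn_rpow_mul_exp_neg_mul_rpow (p := 1) (s := ((N - 1 + m : ℕ) : ℝ)) (b := w) (by
    have : (0 : ℝ) ≤ ((N - 1 + m : ℕ) : ℝ) := Nat.cast_nonneg _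
    linarith) one_pos hw
  refine this.congr_fun ?_ measurableSet_Ioi
  intro u hu
  simp only [finrank_euclideanSpace, Fintype.card_fin, smul_eq_mul, Real.rpow_one, Real.rpow_natCast]
  rw [pow_add]; ring

end PartB

section PartC
open Set Real
open scoped FourierTransform

/-- The constant in the Fourier transform of `exp(-w|x|)`. -/
def cN (N : ℕ) : ℝ := (√π)⁻¹ * (4 * π) ^ ((N : ℝ) / 2) * Gamma (((N : ℝ) + 1) / 2)

theorem cN_pos (N : ℕ) : 0 < cN N := by
  unfold cN
  have : 0 < Gamma (((N : ℝ) + 1) / 2) := Gamma_pos_of_pos (by positivity)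
  positivity

theorem subord_norm {r w : ℝ} (hr : 0 < r) (hw : 0 < w) :
    ∫ u in Ioi (0 : ℝ), exp (-u ^ 2 - (w ^ 2 / (4 * u ^ 2)) * r ^ 2) = √π / 2 * exp (-w * r) := by
  have := subord_aux (c := w * r / 2) (by positivity)
  rw [show -w * r = -2 * (w * r / 2) by ring, ← this]
  apply setIntegral_congr_fun measurableSet_Ioi
  intro u hu
  have hu : 0 < u := hu
  simp only; congr 1; field_simp; ring

theorem fourier_exp_norm_real {N : ℕ} (hN : 2 ≤ N) {w : ℝ} (hw : 0 < w) (ξ : Esp N) :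
    𝓕 (fun x : Esp N => ((exp (-w * ‖x‖) : ℝ) : ℂ)) ξ =
      ((cN N * w * (w ^ 2 + 4 * π ^ 2 * ‖ξ‖ ^ 2) ^ (-(((N : ℝ) + 1) / 2)) : ℝ) : ℂ) := by
  have : Nonempty (Fin N) := ⟨⟨0, by omega⟩⟩
  have hnt : Nontrivial (Esp N) := inferInstance
  rw [fourier_eq']
  let F : Esp N → ℝ → ℂ := fun x u => Complex.exp (((-2 * π * inner ℝ x ξ : ℝ) : ℂ) * Complex.I) *
    ((exp (-u ^ 2 - (w ^ 2 / (4 * u ^ 2)) * ‖x‖ ^ 2) : ℝ) : ℂ)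
  have hFn : ∀ x u, ‖F x u‖ = exp (-u ^ 2 - (w ^ 2 / (4 * u ^ 2)) * ‖x‖ ^ 2) := by
    intro x u
    simp only [F, norm_mul, Complex.norm_exp_ofReal_mul_I, one_mul, Complex.norm_real]
    exact Real.norm_of_nonneg (exp_pos _).le
  have hne : ∀ᵐ x : Esp N, 0 < ‖x‖ := by
    have : ∀ᵐ x : Esp N, x ≠ 0 := by simp [ae_iff]
    filter_upwards [this] with x hx using norm_pos_iff.2 hx
  have hFm : AEStronglyMeasurable (Function.uncurry F) ((volume : Measure (Esp N)).prod (volume.restrict (Ioi 0))) := by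
    apply Measurable.aestronglyMeasurable
    simp only [F, Function.uncurry_def]
    fun_prop
  have hintg : Integrable (Function.uncurry F) ((volume : Measure (Esp N)).prod (volume.restrict (Ioi 0))) := by
    rw [integrable_prod_iff hFm]
    constructor
    · refine ae_of_all _ fun x => ?_
      have g1 : Integrable (fun y : ℝ => exp (-y ^ 2)) := by
        simpa using integrable_exp_neg_mul_sq (b := 1) one_pos
      refine Integrable.mono' g1.restrict (by simp only [F, Function.uncurry_def]; apply Measurable.aestronglyMeasurable; fun_prop) (ae_of_all _ fun u => ?_)
      simp only [Function.uncurry_apply_pair]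
      rw [hFn]
      apply exp_le_exp.2
      have : 0 ≤ (w ^ 2 / (4 * u ^ 2)) * ‖x‖ ^ 2 := by positivity
      linarith
    · have := (integrable_pow_exp_norm hN 0 hw).const_mul (√π / 2)
      refine this.congr ?_
      filter_upwards [hne] with x hx
      simp only [Function.uncurry_apply_pair, hFn, pow_zero, one_mul]
      rw [subord_norm hx hw]
  have h1 : ∫ x : Esp N, Complex.exp (((-2 * π * inner ℝ x ξ : ℝ) : ℂ) * Complex.I) • ((exp (-w * ‖x‖) : ℝ) : ℂ)
      = ∫ x : Esp N, ((2 / √π : ℝ) : ℂ) * ∫ u in Ioi (0:ℝ), F x u := by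
    apply integral_congr_ae
    filter_upwards [hne] with x hx
    simp only [F]
    rw [integral_const_mul, integral_complex_ofReal, subord_norm hx hw, smul_eq_mul, mul_left_comm, ← Complex.ofReal_mul]
    congr 2
    field_simp
  rw [h1, integral_const_mul, integral_integral_swap hintg]
  set B : ℝ := 1 + 4 * π ^ 2 * ‖ξ‖ ^ 2 / w ^ 2 with hB
  have hBpos : 0 < B := by positivity
  have h2 : ∀ u ∈ Ioi (0:ℝ), ∫ x : Esp N, F x u = (((4 * π) ^ ((N : ℝ) / 2) * (w ^ N)⁻¹ *
      (u ^ (N : ℝ) * exp (-B * u ^ (2 : ℝ))) : ℝ) : ℂ) := by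
    intro u hu
    have hu : 0 < u := hu
    have := fourier_gaussian_innerProductSpace (V := Esp N) (b := ((w ^ 2 / (4 * u ^ 2) : ℝ) : ℂ)) (by
      rw [Complex.ofReal_re]; positivity) ξ
    rw [fourier_eq'] at this
    have e : ∀ x, F x u = ((exp (-u ^ 2) : ℝ) : ℂ) * (Complex.exp (((-2 * π * inner ℝ x ξ : ℝ) : ℂ) * Complex.I) • Complex.exp (-((w ^ 2 / (4 * u ^ 2) : ℝ) : ℂ) * ‖x‖ ^ 2)) := by
      intro x
      simp only [F]
      rw [sub_eq_add_neg, exp_add, smul_eq_mul, Complex.ofReal_mul, mul_left_comm]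
      congr 2
      push_cast
      congr 1; ring
    simp_rw [e]
    rw [integral_const_mul, this]
    have e3 : ((π : ℂ) / ((w ^ 2 / (4 * u ^ 2) : ℝ) : ℂ)) = (((4 * π) * u ^ 2 / w ^ 2 : ℝ) : ℂ) := by
      push_cast; field_simp
    rw [e3]
    simp only [finrank_euclideanSpace, Fintype.card_fin]
    rw [show ((N : ℂ) / 2) = (((N : ℝ) / 2 : ℝ) : ℂ) by push_cast; rfl, ← Complex.ofReal_cpow (by positivity)]
    have e4 : Complex.exp (-(π : ℂ) ^ 2 * (‖ξ‖ : ℂ) ^ 2 / ((w ^ 2 / (4 * u ^ 2) : ℝ) : ℂ)) = ((exp (-(4 * π ^ 2 * ‖ξ‖ ^ 2 / w ^ 2) * u ^ 2) : ℝ) : ℂ) := by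
      push_cast; congr 1; field_simp
    rw [e4, ← Complex.ofReal_mul, ← Complex.ofReal_mul]
    congr 1
    have e5 : exp (-B * u ^ (2 : ℝ)) = exp (-u ^ 2) * exp (-(4 * π ^ 2 * ‖ξ‖ ^ 2 / w ^ 2) * u ^ 2) := by
      rw [← exp_add, hB, Real.rpow_two]; congr 1; ring
    have e6 : ((4 * π) * u ^ 2 / w ^ 2) ^ ((N : ℝ) / 2) = (4 * π) ^ ((N : ℝ) / 2) * (w ^ N)⁻¹ * u ^ (N : ℝ) := by
      rw [div_rpow (by positivity) (by positivity), mul_rpow (by positivity) (by positivity), ← Real.rpow_natCast u 2, ← Real.rpow_natCast w 2, ← rpow_mul hu.le, ← rpow_mul hw.le]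
      rw [show ((2:ℕ):ℝ) * ((N : ℝ) / 2) = N by push_cast; ring, Real.rpow_natCast w, Real.rpow_natCast u]
      ring
    rw [e5, e6]; ring
  rw [setIntegral_congr_fun measurableSet_Ioi h2, integral_complex_ofReal, integral_const_mul, integral_rpow_mul_exp_neg_mul_rpow (by norm_num) (by
    have : (0:ℝ) ≤ N := Nat.cast_nonneg _
    linarith) hBpos, ← Complex.ofReal_mul]
  congr 1
  have e7 : w ^ 2 + 4 * π ^ 2 * ‖ξ‖ ^ 2 = w ^ 2 * B := by rw [hB]; field_simp
  rw [e7, mul_rpow (by positivity) hBpos.le, ← Real.rpow_natCast w 2, ← rpow_mul hw.le, neg_div, cN]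
  rw [show ((2:ℕ):ℝ) * -(((N : ℝ) + 1) / 2) = -(N + 1 : ℕ) by push_cast; ring, Real.rpow_neg hw.le, Real.rpow_natCast, pow_succ]
  field_simp

end PartC

section PartD
open Set
open scoped FourierTransform

theorem slit_aux {w : ℂ} (hw : 0 < w.re) (t : ℝ) :
    w ^ 2 + ((4 * Real.pi ^ 2 * t ^ 2 : ℝ) : ℂ) ∈ Complex.slitPlane := by
  rw [Complex.mem_slitPlane_iff]
  by_cases h : w.im = 0
  · left
    have : (w ^ 2).re = w.re ^ 2 := by rw [pow_two, Complex.mul_re, h]; ring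
    rw [Complex.add_re, this, Complex.ofReal_re]
    positivity
  · right
    have : (w ^ 2).im = 2 * w.re * w.im := by rw [pow_two, Complex.mul_im]; ring
    rw [Complex.add_im, this, Complex.ofReal_im, add_zero]
    positivity

theorem norm_cexp_neg_mul (w : ℂ) (r : ℝ) : ‖Complex.exp (-w * r)‖ = Real.exp (-w.re * r) := by
  rw [Complex.norm_exp]; simp

theorem integrable_cexp_norm {N : ℕ} (hN : 2 ≤ N) {w : ℂ} (hw : 0 < w.re) :
    Integrable (fun x : Esp N => Complex.exp (-w * ‖x‖)) := by
  refine Integrable.mono' (integrable_pow_exp_norm hN 0 hw) (by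
    apply Measurable.aestronglyMeasurable; fun_prop) (ae_of_all _ fun x => ?_)
  rw [norm_cexp_neg_mul]; simp

theorem differentiableAt_fourier_exp {N : ℕ} (hN : 2 ≤ N) {w : ℂ} (hw : 0 < w.re) (ξ : Esp N) :
    DifferentiableAt ℂ (fun w : ℂ => 𝓕 (fun x : Esp N => Complex.exp (-w * ‖x‖)) ξ) w := by
  simp_rw [Real.fourier_eq']
  have hs : {z : ℂ | w.re / 2 < z.re} ∈ 𝓝 w :=
    (isOpen_lt continuous_const Complex.continuous_re).mem_nhds (by simp; linarith)
  have := hasDerivAt_integral_of_dominated_loc_of_deriv_le (μ := (volume : Measure (Esp N))) (𝕜 := ℂ)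
    (F := fun w x => Complex.exp (((-2 * Real.pi * inner ℝ x ξ : ℝ) : ℂ) * Complex.I) • Complex.exp (-w * ‖x‖))
    (F' := fun w x => Complex.exp (((-2 * Real.pi * inner ℝ x ξ : ℝ) : ℂ) * Complex.I) • (Complex.exp (-w * ‖x‖) * (-‖x‖)))
    (x₀ := w) (bound := fun x => ‖x‖ ^ 1 * Real.exp (-(w.re / 2) * ‖x‖)) hs
    (Filter.Eventually.of_forall fun z => by apply Measurable.aestronglyMeasurable; fun_prop)
    (by
      refine Integrable.mono' (integrable_pow_exp_norm hN 0 hw) (by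
        apply Measurable.aestronglyMeasurable; fun_prop) (ae_of_all _ fun x => ?_)
      rw [norm_smul, Complex.norm_exp_ofReal_mul_I, norm_cexp_neg_mul]; simp)
    (by apply Measurable.aestronglyMeasurable; fun_prop)
    (ae_of_all _ fun x z hz => by
      have hz : w.re / 2 < z.re := hz
      rw [norm_smul, Complex.norm_exp_ofReal_mul_I, norm_mul, norm_cexp_neg_mul]
      simp only [norm_neg, Complex.norm_real, norm_norm, one_mul, pow_one]
      rw [mul_comm]
      gcongr)
    (integrable_pow_exp_norm hN 1 (by linarith))
    (ae_of_all _ fun x z hz => by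
      have h1 : HasDerivAt (fun z : ℂ => -z * ‖x‖) (-‖x‖ : ℂ) z := by
        simpa using (hasDerivAt_id z).neg.mul_const (‖x‖ : ℂ)
      exact h1.cexp.const_smul (Complex.exp (((-2 * Real.pi * inner ℝ x ξ : ℝ) : ℂ) * Complex.I)))
  exact this.2.differentiableAt

theorem fourier_exp_norm {N : ℕ} (hN : 2 ≤ N) {w : ℂ} (hw : 0 < w.re) (ξ : Esp N) :
    𝓕 (fun x : Esp N => Complex.exp (-w * ‖x‖)) ξ =
      cN N * w * (w ^ 2 + ((4 * Real.pi ^ 2 * ‖ξ‖ ^ 2 : ℝ) : ℂ)) ^ (((-(((N : ℝ) + 1) / 2)) : ℝ) : ℂ) := by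
  have hO : IsOpen {z : ℂ | 0 < z.re} := isOpen_lt continuous_const Complex.continuous_re
  have hf : AnalyticOnNhd ℂ (fun w : ℂ => 𝓕 (fun x : Esp N => Complex.exp (-w * ‖x‖)) ξ) {z : ℂ | 0 < z.re} := by
    apply DifferentiableOn.analyticOnNhd _ hO
    intro z hz
    exact (differentiableAt_fourier_exp hN hz ξ).differentiableWithinAt
  have hg : AnalyticOnNhd ℂ (fun w : ℂ => cN N * w * (w ^ 2 + ((4 * Real.pi ^ 2 * ‖ξ‖ ^ 2 : ℝ) : ℂ)) ^ (((-(((N : ℝ) + 1) / 2)) : ℝ) : ℂ)) {z : ℂ | 0 < z.re} := by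
    apply DifferentiableOn.analyticOnNhd _ hO
    intro z hz
    apply DifferentiableAt.differentiableWithinAt
    apply DifferentiableAt.mul (by fun_prop)
    exact DifferentiableAt.cpow (by fun_prop) (by fun_prop) (slit_aux hz _)
  have hc : IsPreconnected {z : ℂ | 0 < z.re} := by
    apply Convex.isPreconnected
    exact convex_halfSpace_re_gt 0
  refine hf.eqOn_of_preconnected_of_frequently_eq hg hc (z₀ := 1) (by simp) ?_ hw
  have key : ∀ r : ℝ, 0 < r → 𝓕 (fun x : Esp N => Complex.exp (-(r : ℂ) * ‖x‖)) ξ =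
      cN N * (r : ℂ) * ((r : ℂ) ^ 2 + ((4 * Real.pi ^ 2 * ‖ξ‖ ^ 2 : ℝ) : ℂ)) ^ (((-(((N : ℝ) + 1) / 2)) : ℝ) : ℂ) := by
    intro r hr
    have := fourier_exp_norm_real hN hr ξ
    rw [Complex.ofReal_mul, Complex.ofReal_cpow (by positivity)] at this
    push_cast at this ⊢
    exact this
  have ht : Tendsto (fun n : ℕ => ((1 + 1 / ((n : ℝ) + 1) : ℝ) : ℂ)) atTop (𝓝[≠] 1) := by
    rw [tendsto_nhdsWithin_iff]
    constructor
    · have : Tendsto (fun n : ℕ => (1 + 1 / ((n : ℝ) + 1) : ℝ)) atTop (𝓝 (1 + 0)) := tendsto_const_nhds.add tendsto_one_div_add_atTop_nhds_zero_nat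
      have h2 := (Complex.continuous_ofReal.tendsto _).comp this
      rw [add_zero, Complex.ofReal_one] at h2
      exact h2
    · refine Filter.Eventually.of_forall fun n => ?_
      simp only [mem_compl_iff, mem_singleton_iff, Complex.ofReal_eq_one]
      have : (0:ℝ) < 1 / ((n : ℝ) + 1) := by positivity
      linarith
  apply ht.frequently
  refine Filter.Frequently.of_forall fun n => ?_
  exact key _ (by positivity)

end PartD

section PartE
open Set
open scoped FourierTransform

/-- The symbol `4π²(|ξ|²-1)`. -/
def xs {N : ℕ} (ξ : Esp N) : ℝ := 4 * Real.pi ^ 2 * (‖ξ‖ ^ 2 - 1)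

/-- The multiplier `(x + i t)^{-a}`. -/
def Mk {N : ℕ} (a t : ℝ) (ξ : Esp N) : ℂ := ((xs ξ : ℂ) + t * Complex.I) ^ ((-a : ℝ) : ℂ)

theorem continuous_xs {N : ℕ} : Continuous (xs (N := N)) := by
  unfold xs; fun_prop

theorem base_slit (x : ℝ) {t : ℝ} (ht : 0 < t) : (x : ℂ) + t * Complex.I ∈ Complex.slitPlane := by
  rw [Complex.mem_slitPlane_iff]; right; simp; exact ht.ne'

theorem base_ne (x : ℝ) {t : ℝ} (ht : 0 < t) : (x : ℂ) + t * Complex.I ≠ 0 :=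
  Complex.slitPlane_ne_zero (base_slit x ht)

theorem base_norm_ge (x : ℝ) {t : ℝ} (ht : 0 < t) : t ≤ ‖(x : ℂ) + t * Complex.I‖ := by
  have := Complex.abs_im_le_norm ((x : ℂ) + t * Complex.I)
  simp at this
  exact (le_abs_self t).trans this

theorem base_norm_ge' (x : ℝ) (t : ℝ) : |x| ≤ ‖(x : ℂ) + t * Complex.I‖ := by
  have := Complex.abs_re_le_norm ((x : ℂ) + t * Complex.I)
  simpa using this

theorem base_norm_sq (x : ℝ) (t : ℝ) : ‖(x : ℂ) + t * Complex.I‖ ^ 2 = x ^ 2 + t ^ 2 := by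
  rw [Complex.sq_norm, Complex.normSq_apply]; simp; ring

theorem norm_Mk {N : ℕ} (a t : ℝ) (ξ : Esp N) : ‖Mk a t ξ‖ = ‖(xs ξ : ℂ) + t * Complex.I‖ ^ (-a) := by
  unfold Mk; rw [Complex.norm_cpow_real]

theorem norm_Mk_le {N : ℕ} {a t : ℝ} (ha : 0 ≤ a) (ht : 0 < t) (ξ : Esp N) : ‖Mk a t ξ‖ ≤ t ^ (-a) := by
  rw [norm_Mk]
  exact Real.rpow_le_rpow_of_nonpos ht (base_norm_ge _ ht) (by linarith)

theorem continuous_Mk {N : ℕ} (a : ℝ) {t : ℝ} (ht : 0 < t) : Continuous (Mk (N := N) a t) := by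
  unfold Mk
  apply Continuous.cpow
  · have := continuous_xs (N := N); fun_prop
  · fun_prop
  · intro ξ; exact base_slit _ ht

theorem integrable_Mk {N : ℕ} {t : ℝ} (ht : 0 < t) : Integrable (Mk (N := N) (((N : ℝ) + 1) / 2) t) := by
  have h := integrable_rpow_neg_one_add_norm_sq (E := Esp N) (μ := volume) (r := (N : ℝ) + 1) (by simp)
  set c : ℝ := 1 / (4 * Real.pi ^ 2) + 2 / t with hc
  have hcp : 0 < c := by positivity
  refine Integrable.mono' (h.const_mul (c ^ (((N : ℝ) + 1) / 2))) (continuous_Mk _ ht).aestronglyMeasurable (ae_of_all _ fun ξ => ?_)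
  rw [norm_Mk]
  have h1 : 1 + ‖ξ‖ ^ 2 ≤ c * ‖(xs ξ : ℂ) + t * Complex.I‖ := by
    have h2 := base_norm_ge (xs ξ) ht
    have h3 := (le_abs_self _).trans (base_norm_ge' (xs ξ) t)
    have h4 : 1 + ‖ξ‖ ^ 2 = 1 / (4 * Real.pi ^ 2) * xs ξ + 2 / t * t := by
      unfold xs; field_simp; ring
    rw [h4, hc, add_mul]
    gcongr
  have h5 : 0 < ‖(xs ξ : ℂ) + t * Complex.I‖ := norm_pos_iff.2 (base_ne _ ht)
  have h6 : (c * ‖(xs ξ : ℂ) + t * Complex.I‖) ^ (-(((N : ℝ) + 1) / 2)) ≤ (1 + ‖ξ‖ ^ 2) ^ (-(((N : ℝ) + 1) / 2)) :=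
    Real.rpow_le_rpow_of_nonpos (by positivity) h1 (by have : (0:ℝ) ≤ N := Nat.cast_nonneg _
                                                       linarith)
  rw [Real.mul_rpow hcp.le h5.le, Real.rpow_neg hcp.le] at h6
  rw [neg_div]
  rwa [inv_mul_le_iff₀ (by positivity)] at h6

theorem sqrt_aux {t : ℝ} (ht : 0 < t) : ∃ w : ℂ, 0 < w.re ∧ 1 ≤ ‖w‖ ∧
    w ^ 2 = ((-(4 * Real.pi ^ 2) : ℝ) : ℂ) + t * Complex.I := by
  set z : ℂ := ((-(4 * Real.pi ^ 2) : ℝ) : ℂ) + t * Complex.I with hz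
  have hz0 : z ≠ 0 := base_ne _ ht
  have hsq : (z ^ (1 / 2 : ℂ)) ^ 2 = z := by
    rw [← Complex.cpow_nat_mul]; norm_num
  refine ⟨z ^ (1 / 2 : ℂ), ?_, ?_, hsq⟩
  · rw [Complex.cpow_def_of_ne_zero hz0, Complex.exp_re]
    apply mul_pos (Real.exp_pos _)
    apply Real.cos_pos_of_mem_Ioo
    have him : (Complex.log z * (1 / 2)).im = Complex.arg z / 2 := by
      rw [Complex.mul_im]; simp [Complex.log_im]; ring
    rw [him]
    have h1 := Complex.neg_pi_lt_arg z
    have h2 : Complex.arg z < Real.pi := by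
      have := Complex.arg_le_pi z
      refine lt_of_le_of_ne this ?_
      have := Complex.mem_slitPlane_iff_arg.1 (base_slit (-(4 * Real.pi ^ 2)) ht)
      exact this.1
    constructor <;> linarith
  · have h1 : ‖z ^ (1 / 2 : ℂ)‖ ^ 2 = ‖z‖ := by rw [← norm_pow, hsq]
    have h2 : 1 ≤ ‖z‖ := by
      refine le_trans ?_ (base_norm_ge' _ t)
      rw [abs_neg, abs_of_nonneg (by positivity)]
      nlinarith [Real.pi_gt_three]
    by_contra! h3
    have := norm_nonneg (z ^ (1 / 2 : ℂ))
    nlinarith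

theorem fourierInv_Mk_bound {N : ℕ} (hN : 2 ≤ N) {t : ℝ} (ht : 0 < t) (x : Esp N) :
    ‖𝓕⁻ (Mk (N := N) (((N : ℝ) + 1) / 2) t) x‖ ≤ (cN N)⁻¹ := by
  obtain ⟨w, hw, hw1, hw2⟩ := sqrt_aux ht
  have hc : (cN N : ℂ) * w ≠ 0 := by
    apply mul_ne_zero
    · exact_mod_cast (cN_pos N).ne'
    · intro h; rw [h] at hw; simp at hw
  have h1 : 𝓕 (fun x : Esp N => Complex.exp (-w * ‖x‖)) = fun ξ => (cN N * w) • Mk (N := N) (((N : ℝ) + 1) / 2) t ξ := by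
    ext ξ
    rw [fourier_exp_norm hN hw, smul_eq_mul, Mk]
    congr 2
    rw [hw2, xs]; push_cast; ring
  have h2 := Continuous.fourierInv_fourier_eq (f := fun x : Esp N => Complex.exp (-w * ‖x‖)) (by fun_prop) (integrable_cexp_norm hN hw) (by
    rw [h1]; exact (integrable_Mk ht).smul ((cN N : ℂ) * w))
  rw [h1] at h2
  have h3 := congrFun h2 x
  rw [Real.fourierInv_eq] at h3 ⊢
  have h4 : ∀ v : Esp N, Real.fourierChar (inner ℝ v x) • ((cN N * w) • Mk (N := N) (((N : ℝ) + 1) / 2) t v) = (cN N * w) • (Real.fourierChar (inner ℝ v x) • Mk (N := N) (((N : ℝ) + 1) / 2) t v) := by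
    intro v; rw [smul_comm]
  simp_rw [h4] at h3
  rw [integral_smul] at h3
  set J := ∫ v : Esp N, Real.fourierChar (inner ℝ v x) • Mk (N := N) (((N : ℝ) + 1) / 2) t v
  have h5 : ‖(cN N * w) • J‖ ≤ 1 := by
    rw [h3, norm_cexp_neg_mul, Real.exp_le_one_iff]
    have := norm_nonneg x
    nlinarith
  rw [norm_smul, norm_mul, Complex.norm_real, Real.norm_of_nonneg (cN_pos N).le] at h5
  rw [← mul_one (cN N)⁻¹, le_inv_mul_iff₀ (cN_pos N)]
  refine le_trans ?_ h5
  have := cN_pos N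
  have := norm_nonneg J
  rw [mul_assoc]
  gcongr
  nlinarith

theorem fourier_Mk_bound {N : ℕ} (hN : 2 ≤ N) {t : ℝ} (ht : 0 < t) (x : Esp N) :
    ‖𝓕 (Mk (N := N) (((N : ℝ) + 1) / 2) t) x‖ ≤ (cN N)⁻¹ := by
  have := fourierInv_Mk_bound hN ht (-x)
  rwa [Real.fourierInv_eq_fourier_neg, neg_neg] at this

theorem norm_fourier_le {N : ℕ} (f : Esp N → ℂ) (ξ : Esp N) : ‖𝓕 f ξ‖ ≤ ∫ x, ‖f x‖ := by
  rw [Real.fourier_eq]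
  refine (norm_integral_le_integral_norm _).trans (le_of_eq ?_)
  simp

theorem continuous_fourier {N : ℕ} {f : Esp N → ℂ} (hf : Integrable f) : Continuous (𝓕 f) :=
  VectorFourier.fourierIntegral_continuous Real.continuous_fourierChar continuous_inner hf

theorem flip_formula {N : ℕ} {f g : Esp N → ℂ} (hf : Integrable f) (hg : Integrable g) :
    ∫ ξ, 𝓕 f ξ * g ξ = ∫ x, f x * 𝓕 g x := by
  have := VectorFourier.integral_fourierIntegral_smul_eq_flip (μ := (volume : Measure (Esp N)))
    (ν := (volume : Measure (Esp N))) (L := innerₗ (Esp N)) (e := Real.fourierChar) 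
    Real.continuous_fourierChar continuous_inner hf hg
  simp only [flip_innerₗ] at this
  exact this

theorem conj_fourier {N : ℕ} (g : Esp N → ℂ) (ξ : Esp N) :
    (starRingEnd ℂ) (𝓕 g ξ) = 𝓕 (fun y => (starRingEnd ℂ) (g (-y))) ξ := by
  rw [Real.fourier_eq', Real.fourier_eq', ← integral_conj]
  rw [← integral_neg_eq_self]
  congr 1; ext y
  simp [← Complex.exp_conj, Complex.conj_ofNat]

theorem bilin_bound {N : ℕ} {M f g : Esp N → ℂ} (hM : Integrable M) {C : ℝ}
    (hC : ∀ y, ‖𝓕 M y‖ ≤ C) (hf : Integrable f) (hg : Integrable g) :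
    ‖∫ ξ, M ξ * 𝓕 f ξ * (starRingEnd ℂ) (𝓕 g ξ)‖ ≤ C * (∫ x, ‖f x‖) * ∫ x, ‖g x‖ := by
  set g' : Esp N → ℂ := fun y => (starRingEnd ℂ) (g (-y)) with hg'
  have hg'i : Integrable g' := by
    have h1 : Integrable (fun y => g (-y)) := hg.comp_neg
    exact h1.norm.mono' (Complex.continuous_conj.comp_aestronglyMeasurable h1.1) (ae_of_all _ fun x => (RCLike.norm_conj (K := ℂ) _).le)
  have hg'n : ∫ x, ‖g' x‖ = ∫ x, ‖g x‖ := by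
    rw [← integral_neg_eq_self]
    simp [hg']
  have hMg : Integrable (fun ξ => M ξ * 𝓕 g' ξ) := by
    have := hM.bdd_mul (f := 𝓕 g') (c := ∫ x, ‖g' x‖) (continuous_fourier hg'i).aestronglyMeasurable (ae_of_all _ fun x => norm_fourier_le _ _)
    refine this.congr (ae_of_all _ fun x => ?_)
    simp only; ring
  have h1 : ∫ ξ, M ξ * 𝓕 f ξ * (starRingEnd ℂ) (𝓕 g ξ) = ∫ x, f x * 𝓕 (fun ξ => M ξ * 𝓕 g' ξ) x := by
    rw [← flip_formula hf hMg]
    congr 1; ext ξ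
    rw [conj_fourier]; ring
  have h2 : ∀ x, ‖𝓕 (fun ξ => M ξ * 𝓕 g' ξ) x‖ ≤ C * ∫ x, ‖g x‖ := by
    intro x
    have hMx : Integrable (fun ξ => Real.fourierChar (-inner ℝ ξ x) • M ξ) := by
      refine hM.mono ?_ (ae_of_all _ fun ξ => by simp)
      apply AEStronglyMeasurable.smul _ hM.1
      apply Continuous.aestronglyMeasurable
      have := Real.continuous_fourierChar
      fun_prop
    have h3 : 𝓕 (fun ξ => M ξ * 𝓕 g' ξ) x = ∫ y, g' y * 𝓕 (fun ξ => Real.fourierChar (-inner ℝ ξ x) • M ξ) y := by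
      rw [← flip_formula hg'i hMx, Real.fourier_eq]
      congr 1; ext ξ
      simp only [Circle.smul_def, smul_eq_mul]; ring
    have h4 : ∀ y, 𝓕 (fun ξ => Real.fourierChar (-inner ℝ ξ x) • M ξ) y = 𝓕 M (x + y) := by
      intro y
      rw [Real.fourier_eq, Real.fourier_eq]
      congr 1; ext ξ
      rw [smul_smul, ← AddChar.map_add_eq_mul, inner_add_right]
      congr 2; ring
    rw [h3]
    simp_rw [h4]
    calc _ ≤ ∫ y, ‖g' y * 𝓕 M (x + y)‖ := norm_integral_le_integral_norm _
      _ ≤ ∫ y, C * ‖g' y‖ := by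
        apply integral_mono_of_nonneg (ae_of_all _ fun _ => norm_nonneg _) (hg'i.norm.const_mul _)
        refine ae_of_all _ fun y => ?_
        simp only
        rw [norm_mul, mul_comm]
        gcongr
        exact hC _
      _ = _ := by rw [integral_const_mul, hg'n]
  rw [h1]
  calc _ ≤ ∫ y, ‖f y * 𝓕 (fun ξ => M ξ * 𝓕 g' ξ) y‖ := norm_integral_le_integral_norm _
      _ ≤ ∫ y, (C * ∫ x, ‖g x‖) * ‖f y‖ := by
        apply integral_mono_of_nonneg (ae_of_all _ fun _ => norm_nonneg _) (hf.norm.const_mul _)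
        refine ae_of_all _ fun y => ?_
        simp only
        rw [norm_mul, mul_comm]
        gcongr
        exact h2 _
      _ = _ := by rw [integral_const_mul]; ring

end PartE

section PartF
open Set

theorem split_integrable {b c T A D : ℝ} (hb : 0 < b) (hc : 0 < c) (hT : 0 < T) :
    Integrable (fun σ : ℝ => (Ioc 0 T).indicator (fun σ => A * σ ^ (b - 1)) σ +
      (Ioi T).indicator (fun σ => D * σ ^ (-1 - c)) σ) ∧
    ∫ σ, ((Ioc 0 T).indicator (fun σ => A * σ ^ (b - 1)) σ +
      (Ioi T).indicator (fun σ => D * σ ^ (-1 - c)) σ) = A * T ^ b / b + D * T ^ (-c) / c := by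
  have h1 : IntegrableOn (fun σ : ℝ => A * σ ^ (b - 1)) (Ioc 0 T) := by
    apply Integrable.const_mul
    exact (intervalIntegrable_iff_integrableOn_Ioc_of_le hT.le).1 (intervalIntegral.intervalIntegrable_rpow' (by linarith))
  have h2 : IntegrableOn (fun σ : ℝ => D * σ ^ (-1 - c)) (Ioi T) := by
    apply Integrable.const_mul
    exact integrableOn_Ioi_rpow_of_lt (by linarith) hT
  refine ⟨(h1.integrable_indicator measurableSet_Ioc).add (h2.integrable_indicator measurableSet_Ioi), ?_⟩
  rw [integral_add (h1.integrable_indicator measurableSet_Ioc) (h2.integrable_indicator measurableSet_Ioi),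
    integral_indicator measurableSet_Ioc, integral_indicator measurableSet_Ioi, integral_const_mul, integral_const_mul,
    ← intervalIntegral.integral_of_le hT.le, integral_rpow (Or.inl (by linarith)), integral_Ioi_rpow_of_lt (by linarith) hT]
  congr 1
  · rw [sub_add_cancel, Real.zero_rpow hb.ne']; ring
  · rw [show -1 - c + 1 = -c by ring, neg_div_neg_eq]; ring

theorem int_weight {b : ℝ} (hb : 0 < b) {ε : ℝ} (hε : 0 < ε) :
    IntegrableOn (fun σ : ℝ => σ ^ (b - 1) * (ε + σ) ^ (-(b + 1))) (Ioi 0) := by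
  obtain ⟨h, -⟩ := split_integrable (A := ε ^ (-(b + 1))) (D := 1) hb one_pos hε
  refine Integrable.mono' h.restrict (by apply Measurable.aestronglyMeasurable; fun_prop) ?_
  filter_upwards [ae_restrict_mem measurableSet_Ioi] with σ hσ
  have hσ : 0 < σ := hσ
  rw [Real.norm_of_nonneg (by positivity)]
  by_cases h : σ ≤ ε
  · rw [indicator_of_mem (show σ ∈ Ioc 0 ε from ⟨hσ, h⟩), indicator_of_notMem (show σ ∉ Ioi ε by simpa using h), add_zero, mul_comm]
    exact mul_le_mul_of_nonneg_right (Real.rpow_le_rpow_of_nonpos hε (by linarith) (by linarith)) (by positivity)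
  · rw [indicator_of_notMem (show σ ∉ Ioc 0 ε from fun h' => h h'.2), indicator_of_mem (show σ ∈ Ioi ε by simpa using h), zero_add, one_mul]
    calc σ ^ (b - 1) * (ε + σ) ^ (-(b + 1)) ≤ σ ^ (b - 1) * σ ^ (-(b + 1)) := by
          exact mul_le_mul_of_nonneg_left (Real.rpow_le_rpow_of_nonpos hσ (by linarith) (by linarith)) (by positivity)
      _ = _ := by rw [← Real.rpow_add hσ]; congr 1; ring

theorem base_add (x ε σ : ℝ) : (x : ℂ) + ((ε + σ : ℝ) : ℂ) * Complex.I = ((x : ℂ) + ε * Complex.I) + σ * Complex.I := by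
  push_cast; ring

theorem pos_mul_cpow {r : ℝ} (hr : 0 < r) {z : ℂ} (hz : z ≠ 0) (c : ℂ) :
    ((r : ℂ) * z) ^ c = (r : ℂ) ^ c * z ^ c := by
  have hr' : (r : ℂ) ≠ 0 := by exact_mod_cast hr.ne'
  rw [Complex.cpow_def_of_ne_zero (mul_ne_zero hr' hz), Complex.cpow_def_of_ne_zero hr', Complex.cpow_def_of_ne_zero hz,
    Complex.log_ofReal_mul hr hz, ← Complex.exp_add, Complex.ofReal_log hr.le, add_mul]

/-- The subordination identity. -/
theorem subord_resolvent {b : ℝ} (hb : 0 < b) (x : ℝ) {ε : ℝ} (hε : 0 < ε) :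
    ∫ σ in Ioi (0:ℝ), ((σ ^ (b - 1) : ℝ) : ℂ) * ((x : ℂ) + ((ε + σ : ℝ) : ℂ) * Complex.I) ^ ((-(b + 1) : ℝ) : ℂ)
      = Complex.I ^ ((-b : ℝ) : ℂ) / (b * ((x : ℂ) + ε * Complex.I)) := by
  set Y : ℂ := (x : ℂ) + ε * Complex.I with hY
  have hY0 : Y ≠ 0 := base_ne x hε
  have hb' : (b : ℂ) ≠ 0 := by exact_mod_cast hb.ne'
  have hsl : ∀ σ : ℝ, 0 ≤ σ → (Y + σ * Complex.I) ∈ Complex.slitPlane := by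
    intro σ hσ
    rw [hY, ← base_add]; exact base_slit x (by linarith)
  let G : ℝ → ℂ := fun σ => ((σ ^ b : ℝ) : ℂ) * (Y + σ * Complex.I) ^ ((-b : ℝ) : ℂ) / (b * Y)
  have hd : ∀ σ ∈ Ioi (0:ℝ), HasDerivAt G (((σ ^ (b - 1) : ℝ) : ℂ) * ((x : ℂ) + ((ε + σ : ℝ) : ℂ) * Complex.I) ^ ((-(b + 1) : ℝ) : ℂ)) σ := by
    intro σ hσ
    have hσ : 0 < σ := hσ
    have d1 : HasDerivAt (fun σ : ℝ => ((σ ^ b : ℝ) : ℂ)) ((b * σ ^ (b - 1) : ℝ) : ℂ) σ :=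
      (Real.hasDerivAt_rpow_const (Or.inl hσ.ne')).ofReal_comp
    have d2 : HasDerivAt (fun σ : ℝ => (Y + σ * Complex.I)) Complex.I σ := by
      have := ((hasDerivAt_id σ).ofReal_comp.mul_const Complex.I).const_add Y
      simpa using this
    have d3 : HasDerivAt (fun σ : ℝ => (Y + σ * Complex.I) ^ ((-b : ℝ) : ℂ)) (((-b : ℝ) : ℂ) * (Y + σ * Complex.I) ^ (((-b : ℝ) : ℂ) - 1) * Complex.I) σ := by
      have e := HasDerivAt.cpow_const (f := fun z : ℂ => z) (c := ((-b : ℝ) : ℂ)) (hasDerivAt_id (Y + σ * Complex.I)) (hsl σ hσ.le)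
      have := HasDerivAt.comp_of_eq σ e d2 rfl
      refine this.congr_deriv ?_
      simp
    have d4 := (d1.mul d3).div_const ((b : ℂ) * Y)
    refine d4.congr_deriv ?_
    rw [base_add, ← hY]
    have hz : Y + σ * Complex.I ≠ 0 := Complex.slitPlane_ne_zero (hsl σ hσ.le)
    have e1 : ((σ ^ b : ℝ) : ℂ) = ((σ ^ (b - 1) : ℝ) : ℂ) * σ := by
      rw [← Complex.ofReal_mul, ← Real.rpow_add_one hσ.ne', sub_add_cancel]
    have e2 : (Y + σ * Complex.I) ^ ((-b : ℝ) : ℂ) = (Y + σ * Complex.I) ^ ((-(b + 1) : ℝ) : ℂ) * (Y + σ * Complex.I) := by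
      rw [show ((-b : ℝ) : ℂ) = ((-(b + 1) : ℝ) : ℂ) + 1 by push_cast; ring, Complex.cpow_add _ _ hz, Complex.cpow_one]
    have e3 : (((-b : ℝ) : ℂ) - 1) = ((-(b + 1) : ℝ) : ℂ) := by push_cast; ring
    rw [e3, e2, e1]
    rw [div_eq_iff (mul_ne_zero hb' hY0)]
    push_cast; ring
  have hcont : ContinuousWithinAt G (Ici 0) 0 := by
    apply ContinuousAt.continuousWithinAt
    apply ContinuousAt.div_const
    apply ContinuousAt.mul
    · exact Complex.continuous_ofReal.continuousAt.comp (Real.continuousAt_rpow_const _ _ (Or.inr hb.le))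
    · apply ContinuousAt.cpow
      · fun_prop
      · fun_prop
      · exact hsl 0 le_rfl
  have hintg : IntegrableOn (fun σ : ℝ => (((σ ^ (b - 1) : ℝ) : ℂ) * ((x : ℂ) + ((ε + σ : ℝ) : ℂ) * Complex.I) ^ ((-(b + 1) : ℝ) : ℂ))) (Ioi 0) := by
    refine Integrable.mono' (int_weight hb hε) (by apply Measurable.aestronglyMeasurable; fun_prop) ?_
    filter_upwards [ae_restrict_mem measurableSet_Ioi] with σ hσ
    have hσ : 0 < σ := hσ
    rw [norm_mul, Complex.norm_cpow_real, Complex.norm_real, Real.norm_of_nonneg (by positivity)]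
    exact mul_le_mul_of_nonneg_left (Real.rpow_le_rpow_of_nonpos (by linarith) (base_norm_ge x (by linarith)) (by linarith)) (by positivity)
  have hlim : Tendsto G atTop (𝓝 (Complex.I ^ ((-b : ℝ) : ℂ) / (b * Y))) := by
    have h1 : Tendsto (fun σ : ℝ => (Y * ((σ⁻¹ : ℝ) : ℂ) + Complex.I)) atTop (𝓝 Complex.I) := by
      have h0 : Tendsto (fun σ : ℝ => ((σ⁻¹ : ℝ) : ℂ)) atTop (𝓝 0) := by
        have := (Complex.continuous_ofReal.tendsto 0).comp tendsto_inv_atTop_zero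
        simpa [Function.comp_def] using this
      simpa using (h0.const_mul Y).add_const Complex.I
    have h2 : Tendsto (fun σ : ℝ => (Y * ((σ⁻¹ : ℝ) : ℂ) + Complex.I) ^ ((-b : ℝ) : ℂ)) atTop (𝓝 (Complex.I ^ ((-b : ℝ) : ℂ))) := by
      apply h1.cpow tendsto_const_nhds
      rw [Complex.mem_slitPlane_iff]; right; simp
    refine (h2.div_const (b * Y)).congr' ?_
    filter_upwards [eventually_gt_atTop 0] with σ hσ
    simp only [G]
    congr 1
    have e1 : Y + σ * Complex.I = (σ : ℂ) * (Y * ((σ⁻¹ : ℝ) : ℂ) + Complex.I) := by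
      have : (σ : ℂ) ≠ 0 := by exact_mod_cast hσ.ne'
      push_cast; field_simp
    have hz0 : (Y * ((σ⁻¹ : ℝ) : ℂ) + Complex.I) ≠ 0 := by
      intro h
      rw [h, mul_zero] at e1
      exact Complex.slitPlane_ne_zero (hsl σ hσ.le) e1
    rw [e1, pos_mul_cpow hσ hz0, ← Complex.ofReal_cpow hσ.le, ← mul_assoc, ← Complex.ofReal_mul, ← Real.rpow_add hσ]
    simp
  have := integral_Ioi_of_hasDerivAt_of_tendsto hcont hd hintg hlim
  rw [this]
  simp [G, Real.zero_rpow hb.ne']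

theorem resolvent_le {N : ℕ} {b : ℝ} (hb : 0 < b) {ε : ℝ} (hε : 0 < ε) {H : Esp N → ℂ} (hH : Integrable H) :
    ‖∫ ξ, ((xs ξ : ℂ) + ε * Complex.I)⁻¹ * H ξ‖ ≤
      b * ∫ σ in Ioi (0:ℝ), σ ^ (b - 1) * ‖∫ ξ, Mk (b + 1) (ε + σ) ξ * H ξ‖ := by
  have hb' : (b : ℂ) ≠ 0 := by exact_mod_cast hb.ne'
  have hI : Complex.I ^ ((-b : ℝ) : ℂ) ≠ 0 := by
    rw [Complex.cpow_def_of_ne_zero Complex.I_ne_zero]; exact Complex.exp_ne_zero _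
  have hIn : ‖Complex.I ^ ((-b : ℝ) : ℂ)‖ = 1 := by
    rw [Complex.norm_cpow_real]; simp
  have h1 : ∀ ξ : Esp N, ((xs ξ : ℂ) + ε * Complex.I)⁻¹ * H ξ = (b * (Complex.I ^ ((-b : ℝ) : ℂ))⁻¹) *
      ∫ σ in Ioi (0:ℝ), ((σ ^ (b - 1) : ℝ) : ℂ) * Mk (b + 1) (ε + σ) ξ * H ξ := by
    intro ξ
    rw [integral_mul_const]
    unfold Mk
    rw [subord_resolvent hb _ hε]
    have := base_ne (xs ξ) hε
    field_simp
  simp_rw [h1]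
  rw [integral_const_mul, norm_mul, norm_mul, norm_inv, hIn, Complex.norm_real, Real.norm_of_nonneg hb.le, inv_one, mul_one]
  gcongr
  have hintg : Integrable (Function.uncurry fun (ξ : Esp N) (σ : ℝ) => ((σ ^ (b - 1) : ℝ) : ℂ) * Mk (b + 1) (ε + σ) ξ * H ξ) (volume.prod (volume.restrict (Ioi 0))) := by
    have h2 := hH.norm.mul_prod (int_weight hb hε)
    refine h2.mono' ?_ ?_
    · simp only [Function.uncurry_def]
      apply AEStronglyMeasurable.mul
      · apply Measurable.aestronglyMeasurable
        unfold Mk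
        have := (continuous_xs (N := N)).measurable
        fun_prop
      · exact hH.1.comp_fst
    · have h3 : ∀ᵐ z : Esp N × ℝ ∂(volume.prod (volume.restrict (Ioi 0))), z.2 ∈ Ioi (0:ℝ) :=
        Measure.quasiMeasurePreserving_snd.ae (ae_restrict_mem measurableSet_Ioi)
      filter_upwards [h3] with z hz
      have hz : 0 < z.2 := hz
      simp only [Function.uncurry_def]
      rw [norm_mul, norm_mul, Complex.norm_real, Real.norm_of_nonneg (by positivity), mul_comm]
      gcongr
      exact norm_Mk_le (by linarith) (by linarith) _
  rw [integral_integral_swap hintg]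
  refine (norm_integral_le_integral_norm _).trans (le_of_eq ?_)
  apply setIntegral_congr_fun measurableSet_Ioi
  intro σ hσ
  have hσ : 0 < σ := hσ
  simp only
  simp_rw [mul_assoc]
  rw [integral_const_mul, norm_mul, Complex.norm_real, Real.norm_of_nonneg (by positivity)]

theorem resolvent_interp {N : ℕ} {b c : ℝ} (hb : 0 < b) (hc : 0 < c) {ε : ℝ} (hε : 0 < ε) {H : Esp N → ℂ}
    (hH : Integrable H) {A D : ℝ} (hA : 0 ≤ A) (hD : 0 ≤ D)
    (h1 : ∀ t : ℝ, 0 < t → ‖∫ ξ, Mk (b + 1) t ξ * H ξ‖ ≤ A)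
    (h2 : ∀ t : ℝ, 0 < t → ‖∫ ξ, Mk (b + 1) t ξ * H ξ‖ ≤ t ^ (-b - c) * D) :
    ‖∫ ξ, ((xs ξ : ℂ) + ε * Complex.I)⁻¹ * H ξ‖ ≤ (1 + b / c) * (A ^ (c / (b + c)) * D ^ (b / (b + c))) := by
  refine (resolvent_le hb hε hH).trans ?_
  rcases hA.eq_or_lt with hA | hA
  · have : ∀ σ ∈ Ioi (0:ℝ), σ ^ (b - 1) * ‖∫ ξ, Mk (b + 1) (ε + σ) ξ * H ξ‖ = 0 := by
      intro σ hσ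
      have hσ : 0 < σ := hσ
      have := h1 (ε + σ) (by linarith)
      rw [← hA] at this
      rw [le_antisymm this (norm_nonneg _), mul_zero]
    rw [setIntegral_congr_fun measurableSet_Ioi this]
    simp; positivity
  rcases hD.eq_or_lt with hD | hD
  · have : ∀ σ ∈ Ioi (0:ℝ), σ ^ (b - 1) * ‖∫ ξ, Mk (b + 1) (ε + σ) ξ * H ξ‖ = 0 := by
      intro σ hσ
      have hσ : 0 < σ := hσ
      have := h2 (ε + σ) (by linarith)
      rw [← hD, mul_zero] at this
      rw [le_antisymm this (norm_nonneg _), mul_zero]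
    rw [setIntegral_congr_fun measurableSet_Ioi this]
    simp; positivity
  set T : ℝ := (D / A) ^ (1 / (b + c)) with hT
  have hTp : 0 < T := by positivity
  obtain ⟨h3, h4⟩ := split_integrable (A := A) (D := D) hb hc hTp
  have hbc : 0 < b + c := by linarith
  have e1 : A * T ^ b = A ^ (c / (b + c)) * D ^ (b / (b + c)) := by
    rw [hT, ← Real.rpow_mul (by positivity), Real.div_rpow hD.le hA.le]
    rw [show 1 / (b + c) * b = b / (b + c) by ring]
    rw [show c / (b + c) = 1 - b / (b + c) by field_simp; ring, Real.rpow_sub hA, Real.rpow_one]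
    ring
  have e2 : D * T ^ (-c) = A ^ (c / (b + c)) * D ^ (b / (b + c)) := by
    rw [hT, ← Real.rpow_mul (by positivity), Real.div_rpow hD.le hA.le]
    rw [show 1 / (b + c) * -c = -(c / (b + c)) by ring]
    rw [show b / (b + c) = 1 - c / (b + c) by field_simp; ring, Real.rpow_sub hD, Real.rpow_one, Real.rpow_neg hA.le, Real.rpow_neg hD.le]
    field_simp
  rw [e1, e2] at h4
  have h5 : ∫ σ in Ioi (0:ℝ), σ ^ (b - 1) * ‖∫ ξ, Mk (b + 1) (ε + σ) ξ * H ξ‖ ≤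
      A ^ (c / (b + c)) * D ^ (b / (b + c)) / b + A ^ (c / (b + c)) * D ^ (b / (b + c)) / c := by
    rw [← h4]
    refine le_trans (integral_mono_of_nonneg ?_ h3.restrict ?_) (setIntegral_le_integral h3 ?_)
    · filter_upwards [ae_restrict_mem measurableSet_Ioi] with σ hσ
      have hσ : 0 < σ := hσ
      simp only [Pi.zero_apply]; positivity
    · filter_upwards [ae_restrict_mem measurableSet_Ioi] with σ hσ
      have hσ : 0 < σ := hσ
      by_cases h : σ ≤ T
      · rw [indicator_of_mem (show σ ∈ Ioc 0 T from ⟨hσ, h⟩), indicator_of_notMem (show σ ∉ Ioi T by simpa using h), add_zero, mul_comm]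
        gcongr
        exact h1 _ (by linarith)
      · rw [indicator_of_notMem (show σ ∉ Ioc 0 T from fun h' => h h'.2), indicator_of_mem (show σ ∈ Ioi T by simpa using h), zero_add]
        have h6 := h2 (ε + σ) (by linarith)
        have h7 : (ε + σ) ^ (-b - c) ≤ σ ^ (-b - c) := Real.rpow_le_rpow_of_nonpos hσ (by linarith) (by linarith)
        calc σ ^ (b - 1) * ‖∫ ξ, Mk (b + 1) (ε + σ) ξ * H ξ‖ ≤ σ ^ (b - 1) * (σ ^ (-b - c) * D) := by
              gcongr; exact h6.trans (by gcongr)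
          _ = _ := by rw [← mul_assoc, ← Real.rpow_add hσ, mul_comm]; congr 2; ring
    · refine ae_of_all _ fun σ => ?_
      simp only [Pi.zero_apply]
      apply add_nonneg
      · apply indicator_nonneg; intro σ hσ; have := hσ.1; positivity
      · apply indicator_nonneg; intro σ hσ; have : 0 < σ := hTp.trans hσ; positivity
  calc _ ≤ b * (A ^ (c / (b + c)) * D ^ (b / (b + c)) / b + A ^ (c / (b + c)) * D ^ (b / (b + c)) / c) := by gcongr
    _ = _ := by field_simp

end PartF

section PartG
open Set
open scoped FourierTransform

theorem cauchy_schwarz_int {α : Type*} [MeasurableSpace α] {μ : Measure α} {φ ψ : α → ℝ} (h1 : ∀ x, 0 ≤ φ x) (h2 : ∀ x, 0 ≤ ψ x)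
    (hφ : MemLp φ 2 μ) (hψ : MemLp ψ 2 μ) : ∫ x, φ x * ψ x ∂μ ≤ √(∫ x, φ x ^ 2 ∂μ) * √(∫ x, ψ x ^ 2 ∂μ) := by
  have := integral_mul_le_Lp_mul_Lq_of_nonneg Real.HolderConjugate.two_two (ae_of_all _ h1) (ae_of_all _ h2)
    (by simpa using hφ) (by simpa using hψ)
  simpa [Real.sqrt_eq_rpow] using this

theorem sq_integral_eq {α : Type*} [MeasurableSpace α] {μ : Measure α} {f : α → ℂ} (hf : MemLp f 2 μ) :
    ∫ x, ‖f x‖ ^ 2 ∂μ = (eLpNorm f 2 μ).toReal ^ 2 := by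
  rw [hf.eLpNorm_eq_integral_rpow_norm (by norm_num) (by norm_num)]
  rw [ENNReal.toReal_ofReal (by positivity)]
  have h0 : 0 ≤ ∫ x, ‖f x‖ ^ 2 ∂μ := by positivity
  simp only [ENNReal.toReal_ofNat, Real.rpow_two]
  rw [← Real.rpow_natCast, ← Real.rpow_mul h0]; norm_num

theorem plancherel_sq {N : ℕ} {f : Esp N → ℂ} (hf : Integrable f) (hf2 : MemLp f 2 volume) :
    ∫ ξ, ‖𝓕 f ξ‖ ^ 2 = ∫ x, ‖f x‖ ^ 2 := by
  rw [sq_integral_eq hf2, sq_integral_eq (memLp_fourier hf hf2), eLpNorm_fourier hf hf2]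

/-- The Poisson-type quadratic form. -/
def Qe {N : ℕ} (ε : ℝ) (f : Esp N → ℂ) : ℝ := ∫ ξ, ε / (xs ξ ^ 2 + ε ^ 2) * ‖𝓕 f ξ‖ ^ 2

theorem Qe_nonneg {N : ℕ} {ε : ℝ} (hε : 0 < ε) (f : Esp N → ℂ) : 0 ≤ Qe ε f := by
  unfold Qe; positivity

theorem memLp_conj {N : ℕ} {g : Esp N → ℂ} (hg : MemLp g 2 volume) : MemLp (fun x => (starRingEnd ℂ) (g x)) 2 volume :=
  hg.of_le (Complex.continuous_conj.comp_aestronglyMeasurable hg.1) (ae_of_all _ fun x => (RCLike.norm_conj (K := ℂ) _).le)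

theorem integrable_H {N : ℕ} {f g : Esp N → ℂ} (hf : Integrable f) (hf2 : MemLp f 2 volume)
    (hg : Integrable g) (hg2 : MemLp g 2 volume) : Integrable (fun ξ => 𝓕 f ξ * (starRingEnd ℂ) (𝓕 g ξ)) :=
  (memLp_fourier hf hf2).integrable_mul (memLp_conj (memLp_fourier hg hg2))

theorem inv_base_im (x : ℝ) {ε : ℝ} (hε : 0 < ε) : (((x : ℂ) + ε * Complex.I)⁻¹).im = - (ε / (x ^ 2 + ε ^ 2)) := by
  rw [Complex.inv_im, Complex.normSq_apply]; simp; ring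

theorem measurable_inv_base {N : ℕ} (ε : ℝ) : Measurable (fun ξ : Esp N => ((xs ξ : ℂ) + ε * Complex.I)⁻¹) := by
  have := (continuous_xs (N := N)).measurable
  fun_prop

theorem integrable_resolvent {N : ℕ} {ε : ℝ} (hε : 0 < ε) {H : Esp N → ℂ} (hH : Integrable H) :
    Integrable (fun ξ => ((xs ξ : ℂ) + ε * Complex.I)⁻¹ * H ξ) := by
  refine hH.bdd_mul (c := ε⁻¹) (measurable_inv_base ε).aestronglyMeasurable (ae_of_all _ fun ξ => ?_)
  rw [norm_inv]
  exact inv_anti₀ hε (base_norm_ge _ hε)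

theorem Qe_le_resolvent {N : ℕ} {ε : ℝ} (hε : 0 < ε) {f : Esp N → ℂ} (hf : Integrable f) (hf2 : MemLp f 2 volume) :
    Qe ε f ≤ ‖∫ ξ, ((xs ξ : ℂ) + ε * Complex.I)⁻¹ * (𝓕 f ξ * (starRingEnd ℂ) (𝓕 f ξ))‖ := by
  have hi := integrable_resolvent hε (integrable_H hf hf2 hf hf2)
  refine le_trans ?_ (Complex.abs_im_le_norm _)
  have h := Complex.imCLM.integral_comp_comm hi
  simp only [Complex.imCLM_apply] at h
  rw [← h]
  refine le_trans (le_of_eq ?_) (neg_le_abs _)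
  rw [← integral_neg, Qe]
  congr 1; ext ξ
  rw [Complex.mul_conj, Complex.im_mul_ofReal, inv_base_im _ hε, Complex.normSq_eq_norm_sq]; ring

section bounds
variable {N : ℕ}

theorem Mk_bound_one (hN : 2 ≤ N) {b : ℝ} (hb : b = ((N : ℝ) - 1) / 2) {f g : Esp N → ℂ} (hf : Integrable f)
    (hg : Integrable g) {t : ℝ} (ht : 0 < t) :
    ‖∫ ξ, Mk (b + 1) t ξ * (𝓕 f ξ * (starRingEnd ℂ) (𝓕 g ξ))‖ ≤ (cN N)⁻¹ * (∫ x, ‖f x‖) * ∫ x, ‖g x‖ := by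
  have e : b + 1 = ((N : ℝ) + 1) / 2 := by rw [hb]; ring
  rw [e]
  simp_rw [← mul_assoc]
  exact bilin_bound (integrable_Mk ht) (fourier_Mk_bound hN ht) hf hg

theorem Mk_bound_two {b : ℝ} (hb : 0 < b) {f g : Esp N → ℂ} (hf : Integrable f) (hf2 : MemLp f 2 volume)
    (hg : Integrable g) (hg2 : MemLp g 2 volume) {t : ℝ} (ht : 0 < t) :
    ‖∫ ξ, Mk (b + 1) t ξ * (𝓕 f ξ * (starRingEnd ℂ) (𝓕 g ξ))‖ ≤ t ^ (-b - 1) * (√(∫ x, ‖f x‖ ^ 2) * √(∫ x, ‖g x‖ ^ 2)) := by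
  have hf' := memLp_fourier hf hf2
  have hg' := memLp_fourier hg hg2
  have h1 := cauchy_schwarz_int (fun _ => norm_nonneg _) (fun _ => norm_nonneg _) hf'.norm hg'.norm
  rw [plancherel_sq hf hf2, plancherel_sq hg hg2] at h1
  calc _ ≤ ∫ ξ, ‖Mk (b + 1) t ξ * (𝓕 f ξ * (starRingEnd ℂ) (𝓕 g ξ))‖ := norm_integral_le_integral_norm _
    _ ≤ ∫ ξ, t ^ (-b - 1) * (‖𝓕 f ξ‖ * ‖𝓕 g ξ‖) := by
      apply integral_mono_of_nonneg (ae_of_all _ fun _ => norm_nonneg _)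
      · exact (hf'.norm.integrable_mul hg'.norm).const_mul _
      · refine ae_of_all _ fun ξ => ?_
        simp only
        rw [norm_mul, norm_mul, RCLike.norm_conj]
        have := norm_Mk_le (a := b + 1) (by linarith) ht ξ
        rw [neg_add'] at this
        gcongr
    _ ≤ _ := by
      rw [integral_const_mul]; gcongr

theorem stage_one (hN : 2 ≤ N) {b : ℝ} (hb : b = ((N : ℝ) - 1) / 2) {ε : ℝ} (hε : 0 < ε) {f : Esp N → ℂ} (hf : Integrable f) (hf2 : MemLp f 2 volume) :
    Qe ε f ≤ (1 + b) * (((cN N)⁻¹ * (∫ x, ‖f x‖) * ∫ x, ‖f x‖) ^ (1 / (b + 1)) *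
      (√(∫ x, ‖f x‖ ^ 2) * √(∫ x, ‖f x‖ ^ 2)) ^ (b / (b + 1))) := by
  have hb0 : 0 < b := by
    have : (2:ℝ) ≤ N := by exact_mod_cast hN
    rw [hb]; linarith
  refine (Qe_le_resolvent hε hf hf2).trans ?_
  have hc := cN_pos N
  have := resolvent_interp hb0 one_pos hε (integrable_H hf hf2 hf hf2) (by positivity) (by positivity)
    (fun t ht => Mk_bound_one hN hb hf hf ht) (fun t ht => Mk_bound_two hb0 hf hf2 hf hf2 ht)
  rwa [div_one] at this

theorem Mk_bound_three {b : ℝ} (hb : 0 < b) {f g : Esp N → ℂ} (hf : Integrable f) (hf2 : MemLp f 2 volume)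
    (hg : Integrable g) (hg2 : MemLp g 2 volume) {t : ℝ} (ht : 0 < t) :
    ∫ ξ, ‖Mk (b + 1) t ξ‖ * (‖𝓕 f ξ‖ * ‖𝓕 g ξ‖) ≤ t ^ (-b - 1 / 2) * (√(Qe t f) * √(∫ x, ‖g x‖ ^ 2)) := by
  have hf' := memLp_fourier hf hf2
  have hg' := memLp_fourier hg hg2
  have hm : Measurable (fun ξ : Esp N => √(t / (xs ξ ^ 2 + t ^ 2))) := by
    have := (continuous_xs (N := N)).measurable
    fun_prop
  have hw : MemLp (fun ξ => √(t / (xs ξ ^ 2 + t ^ 2)) * ‖𝓕 f ξ‖) 2 volume := by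
    refine hf'.norm.of_le_mul (c := √(t / t ^ 2)) (hm.aestronglyMeasurable.mul hf'.norm.1) (ae_of_all _ fun ξ => ?_)
    rw [norm_mul, Real.norm_of_nonneg (Real.sqrt_nonneg _)]
    gcongr
    nlinarith [sq_nonneg (xs ξ)]
  have h1 := cauchy_schwarz_int (fun _ => by positivity) (fun _ => norm_nonneg _) hw hg'.norm
  rw [plancherel_sq hg hg2] at h1
  have e : ∫ ξ, (√(t / (xs ξ ^ 2 + t ^ 2)) * ‖𝓕 f ξ‖) ^ 2 = Qe t f := by
    unfold Qe; congr 1; ext ξ; rw [mul_pow, Real.sq_sqrt (by positivity)]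
  rw [e] at h1
  calc _ ≤ ∫ ξ, t ^ (-b - 1 / 2) * ((√(t / (xs ξ ^ 2 + t ^ 2)) * ‖𝓕 f ξ‖) * ‖𝓕 g ξ‖) := by
        apply integral_mono_of_nonneg (ae_of_all _ fun _ => by positivity)
        · exact (hw.integrable_mul hg'.norm).const_mul _
        · refine ae_of_all _ fun ξ => ?_
          simp only
          rw [mul_assoc (√_), ← mul_assoc (t ^ (-b - 1 / 2))]
          gcongr
          rw [norm_Mk]
          set z := ‖(xs ξ : ℂ) + t * Complex.I‖ with hz
          have hzt : t ≤ z := base_norm_ge _ ht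
          have hzp : 0 < z := by linarith
          have e2 : xs ξ ^ 2 + t ^ 2 = z ^ 2 := (base_norm_sq _ _).symm
          rw [e2, Real.sqrt_div ht.le, Real.sqrt_sq hzp.le, Real.sqrt_eq_rpow, neg_add', Real.rpow_sub_one hzp.ne']
          rw [← mul_div_assoc, ← Real.rpow_add ht]
          rw [show -b - 1 / 2 + 1 / 2 = -b by ring]
          exact div_le_div_of_nonneg_right (Real.rpow_le_rpow_of_nonpos ht hzt (by linarith)) hzp.le
    _ ≤ _ := by rw [integral_const_mul]; gcongr

/-- The asymmetric bilinear bound. -/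
theorem stage_two (hN : 2 ≤ N) {b : ℝ} (hb : b = ((N : ℝ) - 1) / 2) {ε : ℝ} (hε : 0 < ε) {f g : Esp N → ℂ} 
    (hf : Integrable f) (hf2 : MemLp f 2 volume) (hg : Integrable g) (hg2 : MemLp g 2 volume)
    {D : ℝ} (hD : ∀ t, 0 < t → √(Qe t f) ≤ D) :
    ‖∫ ξ, ((xs ξ : ℂ) + ε * Complex.I)⁻¹ * (𝓕 f ξ * (starRingEnd ℂ) (𝓕 g ξ))‖ ≤
      (1 + b / (1 / 2)) * (((cN N)⁻¹ * (∫ x, ‖f x‖) * ∫ x, ‖g x‖) ^ ((1 / 2) / (b + 1 / 2)) *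
        (D * √(∫ x, ‖g x‖ ^ 2)) ^ (b / (b + 1 / 2))) ∧
    ‖∫ ξ, ((xs ξ : ℂ) + ε * Complex.I)⁻¹ * (𝓕 g ξ * (starRingEnd ℂ) (𝓕 f ξ))‖ ≤
      (1 + b / (1 / 2)) * (((cN N)⁻¹ * (∫ x, ‖f x‖) * ∫ x, ‖g x‖) ^ ((1 / 2) / (b + 1 / 2)) *
        (D * √(∫ x, ‖g x‖ ^ 2)) ^ (b / (b + 1 / 2))) := by
  have hb0 : 0 < b := by
    have : (2:ℝ) ≤ N := by exact_mod_cast hN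
    rw [hb]; linarith
  have hc := cN_pos N
  have hD0 : 0 ≤ D := (Real.sqrt_nonneg _).trans (hD 1 one_pos)
  have key : ∀ t, 0 < t → ∫ ξ, ‖Mk (b + 1) t ξ‖ * (‖𝓕 f ξ‖ * ‖𝓕 g ξ‖) ≤ t ^ (-b - 1 / 2) * (D * √(∫ x, ‖g x‖ ^ 2)) := by
    intro t ht
    refine (Mk_bound_three hb0 hf hf2 hg hg2 ht).trans ?_
    gcongr
    exact hD t ht
  constructor
  · refine resolvent_interp hb0 (by norm_num) hε (integrable_H hf hf2 hg hg2) (by positivity) (by positivity)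
      (fun t ht => Mk_bound_one hN hb hf hg ht) (fun t ht => ?_)
    refine (norm_integral_le_integral_norm _).trans (le_trans (le_of_eq ?_) (key t ht))
    congr 1; ext ξ
    rw [norm_mul, norm_mul, RCLike.norm_conj]
  · refine resolvent_interp hb0 (by norm_num) hε (integrable_H hg hg2 hf hf2) (by positivity) (by positivity)
      (fun t ht => ?_) (fun t ht => ?_)
    · refine (Mk_bound_one hN hb hg hf ht).trans (le_of_eq ?_)
      ring
    refine (norm_integral_le_integral_norm _).trans (le_trans (le_of_eq ?_) (key t ht))
    congr 1; ext ξ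
    rw [norm_mul, norm_mul, RCLike.norm_conj]; ring

end bounds
end PartG

section PartH
open Set
open scoped FourierTransform

theorem schur_sum {ρ : ℝ} (h0 : 0 < ρ) (h1 : ρ < 1) : ∃ G : ℝ, 0 < G ∧ ∀ (S : Finset ℤ) (e : ℤ → ℝ), (∀ k, 0 ≤ e k) →
    ∑ k ∈ S, ∑ l ∈ S, ρ ^ (k - l).natAbs * √(e k * e l) ≤ G * ∑ k ∈ S, e k := by
  have hs : Summable (fun j : ℤ => ρ ^ j.natAbs) := by
    apply Summable.of_nat_of_neg
    · simpa using summable_geometric_of_lt_one h0.le h1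
    · simpa using summable_geometric_of_lt_one h0.le h1
  set G := ∑' j : ℤ, ρ ^ j.natAbs with hG
  have hGp : 0 < G := hs.tsum_pos (fun j => by positivity) 0 (by positivity)
  have hb : ∀ (S : Finset ℤ) (k : ℤ), ∑ l ∈ S, ρ ^ (k - l).natAbs ≤ G := by
    intro S k
    have : ∑ l ∈ S, ρ ^ (k - l).natAbs = ∑ j ∈ S.image (fun l => k - l), ρ ^ j.natAbs := by
      rw [Finset.sum_image]
      intro x _ y _ h
      simpa using h
    rw [this]
    exact hs.sum_le_tsum _ (fun j _ => by positivity)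
  refine ⟨G, hGp, fun S e he => ?_⟩
  have am : ∀ k l, √(e k * e l) ≤ (e k + e l) / 2 := by
    intro k l
    rw [Real.sqrt_le_left (by have := he k; have := he l; positivity)]
    nlinarith [sq_nonneg (e k - e l)]
  have s1 : ∑ k ∈ S, ∑ l ∈ S, ρ ^ (k - l).natAbs * e k ≤ G * ∑ k ∈ S, e k := by
    rw [Finset.mul_sum]
    apply Finset.sum_le_sum; intro k _
    rw [← Finset.sum_mul]
    exact mul_le_mul_of_nonneg_right (hb S k) (he k)
  have s2 : ∑ k ∈ S, ∑ l ∈ S, ρ ^ (k - l).natAbs * e l ≤ G * ∑ k ∈ S, e k := by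
    rw [Finset.sum_comm]
    refine le_trans (le_of_eq ?_) s1
    apply Finset.sum_congr rfl; intro k _
    apply Finset.sum_congr rfl; intro l _
    rw [← Int.natAbs_neg, neg_sub]
  calc _ ≤ ∑ k ∈ S, ∑ l ∈ S, (ρ ^ (k - l).natAbs * e k / 2 + ρ ^ (k - l).natAbs * e l / 2) := by
        apply Finset.sum_le_sum; intro k _
        apply Finset.sum_le_sum; intro l _
        have := mul_le_mul_of_nonneg_left (am k l) (by positivity : 0 ≤ ρ ^ (k - l).natAbs)
        linarith
    _ = (∑ k ∈ S, ∑ l ∈ S, ρ ^ (k - l).natAbs * e k) / 2 + (∑ k ∈ S, ∑ l ∈ S, ρ ^ (k - l).natAbs * e l) / 2 := by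
        simp_rw [Finset.sum_add_distrib, Finset.sum_div]
    _ ≤ _ := by linarith

theorem pair_arith {b c u v m m' : ℝ} (hb : 0 < b) (hc : 0 < c) (hu : 0 < u) (hv : 0 < v) (hm : 0 ≤ m) (hm' : 0 ≤ m')
    {θ τ : ℝ} (hθ : θ = 1 / (b + 1)) (hτ : τ = 1 / (2 * b + 1)) :
    (1 + b / (1 / 2)) * ((c * (u * m) * (v * m')) ^ ((1 / 2) / (b + 1 / 2)) *
        (√((1 + b) * ((c * (u * m) * (u * m)) ^ (1 / (b + 1)) * ((u * √m) * (u * √m)) ^ (b / (b + 1)))) * (v * √m')) ^ (b / (b + 1 / 2)))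
    = ((1 + b / (1 / 2)) * (c ^ τ * √((1 + b) * c ^ θ) ^ (1 - τ))) * (u * v * (m ^ (τ + (1 - τ) * ((1 + θ) / 2)) * m' ^ (τ + (1 - τ) * (1 / 2)))) := by
  have t1 : (1 / 2) / (b + 1 / 2) = τ := by rw [hτ]; field_simp
  have t2 : b / (b + 1 / 2) = 1 - τ := by rw [hτ]; field_simp; ring
  have t3 : b / (b + 1) = 1 - θ := by rw [hθ]; field_simp; ring
  have hθ0 : 0 < θ := by rw [hθ]; positivity
  have hτ0 : 0 < τ := by rw [hτ]; positivity
  have hτ1 : 0 < 1 - τ := by rw [← t2]; positivity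
  have hθ1 : 0 < 1 - θ := by rw [← t3]; positivity
  rw [t1, t2, t3, ← hθ]
  have e1 : (c * (u * m) * (u * m)) ^ θ * ((u * √m) * (u * √m)) ^ (1 - θ) = c ^ θ * (u * m ^ ((1 + θ) / 2)) ^ 2 := by
    have f1 : c * (u * m) * (u * m) = c * u ^ 2 * m ^ (2:ℝ) := by rw [Real.rpow_two]; ring
    have f2 : (u * √m) * (u * √m) = u ^ 2 * m := by
      calc _ = u ^ 2 * (√m * √m) := by ring
        _ = _ := by rw [Real.mul_self_sqrt hm]
    rw [f1, f2, Real.mul_rpow (by positivity) (by positivity), Real.mul_rpow (by positivity) (by positivity), Real.mul_rpow (by positivity) (by positivity),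
      ← Real.rpow_mul hm, mul_pow]
    have f3 : (u ^ 2) ^ θ * (u ^ 2) ^ (1 - θ) = u ^ 2 := by
      rw [← Real.rpow_add (by positivity)]; simp
    have f4 : m ^ (2 * θ) * m ^ (1 - θ) = (m ^ ((1 + θ) / 2)) ^ 2 := by
      rw [← Real.rpow_add_of_nonneg hm (by positivity) hθ1.le, ← Real.rpow_natCast (m ^ _), ← Real.rpow_mul hm]
      congr 1; push_cast; ring
    calc _ = c ^ θ * ((u ^ 2) ^ θ * (u ^ 2) ^ (1 - θ)) * (m ^ (2 * θ) * m ^ (1 - θ)) := by ring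
      _ = _ := by rw [f3, f4]; ring
  have e2 : √((1 + b) * ((c * (u * m) * (u * m)) ^ θ * ((u * √m) * (u * √m)) ^ (1 - θ))) = √((1 + b) * c ^ θ) * (u * m ^ ((1 + θ) / 2)) := by
    rw [e1, ← mul_assoc, Real.sqrt_mul' _ (by positivity), Real.sqrt_sq (by positivity)]
  rw [e2]
  set K := √((1 + b) * c ^ θ)
  have hK : 0 ≤ K := Real.sqrt_nonneg _
  have g1 : (c * (u * m) * (v * m')) ^ τ = c ^ τ * ((u * v) ^ τ * (m ^ τ * m' ^ τ)) := by
    rw [show c * (u * m) * (v * m') = c * ((u * v) * (m * m')) by ring, Real.mul_rpow (by positivity) (by positivity), Real.mul_rpow (by positivity) (by positivity), Real.mul_rpow (by positivity) (by positivity), Real.mul_rpow (by positivity) (by positivity)]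
  have g2 : (K * (u * m ^ ((1 + θ) / 2)) * (v * √m')) ^ (1 - τ) = K ^ (1 - τ) * ((u * v) ^ (1 - τ) * (m ^ ((1 - τ) * ((1 + θ) / 2)) * m' ^ ((1 - τ) * (1 / 2)))) := by
    rw [show K * (u * m ^ ((1 + θ) / 2)) * (v * √m') = K * ((u * v) * (m ^ ((1 + θ) / 2) * √m')) by ring, Real.mul_rpow (by positivity) (by positivity), Real.mul_rpow (by positivity) (by positivity), Real.mul_rpow (by positivity) (by positivity), Real.mul_rpow (by positivity) (by positivity)]
    rw [← Real.rpow_mul hm, Real.sqrt_eq_rpow, ← Real.rpow_mul hm', mul_comm (1 - τ), mul_comm (1 - τ)]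
  have g3 : (u * v) ^ τ * (u * v) ^ (1 - τ) = u * v := by
    rw [← Real.rpow_add (by positivity)]; simp
  rw [g1, g2, Real.rpow_add_of_nonneg hm hτ0.le (by positivity), Real.rpow_add_of_nonneg hm' hτ0.le (by positivity)]
  calc _ = ((1 + b / (1 / 2)) * (c ^ τ * K ^ (1 - τ))) * (((u * v) ^ τ * (u * v) ^ (1 - τ)) * ((m ^ τ * m ^ ((1 - τ) * ((1 + θ) / 2))) * (m' ^ τ * m' ^ ((1 - τ) * (1 / 2))))) := by ring
    _ = _ := by rw [g3]

theorem int_bound_one {N : ℕ} {f : Esp N → ℂ} {u : ℝ} (hu : 0 < u) {E : Set (Esp N)} (hE : MeasurableSet E) (hfin : volume E < ⊤)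
    (hfm : Measurable f) (hf : ∀ x, ‖f x‖ ≤ E.indicator (fun _ => u) x) :
    Integrable f ∧ MemLp f 2 volume ∧ ∫ x, ‖f x‖ ≤ u * (volume E).toReal ∧ √(∫ x, ‖f x‖ ^ 2) ≤ u * √(volume E).toReal := by
  have hi : ∀ w : ℝ, Integrable (E.indicator (fun _ => w)) := fun w => (integrable_indicator_iff hE).2 (integrableOn_const hfin.ne)
  have hv : ∀ w : ℝ, ∫ x, E.indicator (fun _ => w) x = w * (volume E).toReal := fun w => by
    rw [integral_indicator hE]; simp [mul_comm, Measure.real]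
  have hf' : ∀ x, ‖f x‖ ^ 2 ≤ E.indicator (fun _ => u ^ 2) x := by
    intro x
    have := hf x
    by_cases hx : x ∈ E
    · rw [indicator_of_mem hx] at this ⊢; gcongr
    · rw [indicator_of_notMem hx] at this ⊢
      rw [le_antisymm this (norm_nonneg _)]; simp
  refine ⟨(hi u).mono' hfm.aestronglyMeasurable (ae_of_all _ hf), ?_, ?_, ?_⟩
  · have : MemLp (E.indicator (fun _ => u)) 2 volume := memLp_indicator_const 2 hE u (Or.inr hfin.ne)
    exact this.mono' hfm.aestronglyMeasurable (ae_of_all _ hf)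
  · rw [← hv]
    exact integral_mono_of_nonneg (ae_of_all _ fun _ => norm_nonneg _) (hi u) (ae_of_all _ hf)
  · rw [Real.sqrt_le_left (by positivity), mul_pow, Real.sq_sqrt ENNReal.toReal_nonneg, ← hv]
    exact integral_mono_of_nonneg (ae_of_all _ fun _ => by positivity) (hi _) (ae_of_all _ hf')

/-- Bilinear bound for functions dominated by indicators. -/
theorem pair_bound {N : ℕ} (hN : 2 ≤ N) {b θ τ : ℝ} (hb : b = ((N : ℝ) - 1) / 2) (hθ : θ = 1 / (b + 1)) (hτ : τ = 1 / (2 * b + 1)) :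
    ∃ C : ℝ, 0 < C ∧ ∀ (ε : ℝ), 0 < ε → ∀ (f g : Esp N → ℂ) (u v : ℝ) (E F : Set (Esp N)), 0 < u → 0 < v → MeasurableSet E → MeasurableSet F →
      volume E < ⊤ → volume F < ⊤ → Measurable f → Measurable g → (∀ x, ‖f x‖ ≤ E.indicator (fun _ => u) x) → (∀ x, ‖g x‖ ≤ F.indicator (fun _ => v) x) →
      ‖∫ ξ, ((xs ξ : ℂ) + ε * Complex.I)⁻¹ * (𝓕 f ξ * (starRingEnd ℂ) (𝓕 g ξ))‖ ≤ C * (u * v * ((volume E).toReal ^ (τ + (1 - τ) * ((1 + θ) / 2)) * (volume F).toReal ^ (τ + (1 - τ) * (1 / 2)))) ∧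
      ‖∫ ξ, ((xs ξ : ℂ) + ε * Complex.I)⁻¹ * (𝓕 g ξ * (starRingEnd ℂ) (𝓕 f ξ))‖ ≤ C * (u * v * ((volume E).toReal ^ (τ + (1 - τ) * ((1 + θ) / 2)) * (volume F).toReal ^ (τ + (1 - τ) * (1 / 2)))) := by
  have hb0 : 0 < b := by
    have : (2:ℝ) ≤ N := by exact_mod_cast hN
    rw [hb]; linarith
  have hc : 0 < (cN N)⁻¹ := inv_pos.2 (cN_pos N)
  refine ⟨(1 + b / (1 / 2)) * ((cN N)⁻¹ ^ τ * √((1 + b) * (cN N)⁻¹ ^ θ) ^ (1 - τ)), by positivity, ?_⟩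
  intro ε hε f g u v E F hu hv hE hF hEf hFf hfm hgm hf hg
  obtain ⟨i1, i2, i3, i4⟩ := int_bound_one hu hE hEf hfm hf
  obtain ⟨j1, j2, j3, j4⟩ := int_bound_one hv hF hFf hgm hg
  have hm : 0 ≤ (volume E).toReal := ENNReal.toReal_nonneg
  have hm' : 0 ≤ (volume F).toReal := ENNReal.toReal_nonneg
  rw [← pair_arith hb0 hc hu hv hm hm' hθ hτ]
  have hD : ∀ t, 0 < t → √(Qe t f) ≤ √((1 + b) * (((cN N)⁻¹ * (u * (volume E).toReal) * (u * (volume E).toReal)) ^ (1 / (b + 1)) * ((u * √(volume E).toReal) * (u * √(volume E).toReal)) ^ (b / (b + 1)))) := by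
    intro t ht
    apply Real.sqrt_le_sqrt
    refine (stage_one hN hb ht i1 i2).trans ?_
    gcongr
  have key := stage_two hN hb hε i1 i2 j1 j2 hD
  refine ⟨key.1.trans ?_, key.2.trans ?_⟩ <;> gcongr

end PartH

section PartI
open Set
open scoped FourierTransform

theorem dyadic_arith {α β θ q J m m' : ℝ} (hsum : α + β = 1 + θ) (hq : q * (1 + θ) = 2) (hβ : 1 / 2 ≤ β) (hα : 1 / 2 ≤ α)
    (hm : 0 ≤ m) (hm' : 0 ≤ m') (k l : ℤ) (hkl : l ≤ k)
    (h1 : (2:ℝ) ^ ((k:ℝ) * q) * m ≤ J) (h2 : (2:ℝ) ^ ((l:ℝ) * q) * m' ≤ J) :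
    (2:ℝ) ^ ((k:ℝ) + 1) * (2:ℝ) ^ ((l:ℝ) + 1) * (m ^ α * m' ^ β) ≤
      4 * ((2:ℝ) ^ (-(q * α - 1))) ^ (k - l).natAbs * √(((2:ℝ) ^ ((k:ℝ) * q) * m) * ((2:ℝ) ^ ((l:ℝ) * q) * m')) * J ^ θ := by
  set e := (2:ℝ) ^ ((k:ℝ) * q) * m with he
  set e' := (2:ℝ) ^ ((l:ℝ) * q) * m' with he'
  have he0 : 0 ≤ e := by positivity
  have he0' : 0 ≤ e' := by positivity
  have hJ : 0 ≤ J := he0.trans h1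
  have em : m = (2:ℝ) ^ (-((k:ℝ) * q)) * e := by
    rw [he, ← mul_assoc, ← Real.rpow_add two_pos]; simp
  have em' : m' = (2:ℝ) ^ (-((l:ℝ) * q)) * e' := by
    rw [he', ← mul_assoc, ← Real.rpow_add two_pos]; simp
  have r1 : m ^ α = (2:ℝ) ^ (-((k:ℝ) * q) * α) * e ^ α := by
    rw [em, Real.mul_rpow (by positivity) he0, ← Real.rpow_mul two_pos.le]
  have r2 : m' ^ β = (2:ℝ) ^ (-((l:ℝ) * q) * β) * e' ^ β := by
    rw [em', Real.mul_rpow (by positivity) he0', ← Real.rpow_mul two_pos.le]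
  have s1 : e ^ α ≤ √e * J ^ (α - 1 / 2) := by
    rw [Real.sqrt_eq_rpow]
    calc e ^ α = e ^ (1 / 2 : ℝ) * e ^ (α - 1 / 2) := by
          rw [← Real.rpow_add_of_nonneg he0 (by norm_num) (by linarith)]; congr 1; ring
      _ ≤ _ := by
        have : e ^ (α - 1 / 2) ≤ J ^ (α - 1 / 2) := Real.rpow_le_rpow he0 h1 (by linarith)
        gcongr
  have s2 : e' ^ β ≤ √e' * J ^ (β - 1 / 2) := by
    rw [Real.sqrt_eq_rpow]
    calc e' ^ β = e' ^ (1 / 2 : ℝ) * e' ^ (β - 1 / 2) := by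
          rw [← Real.rpow_add_of_nonneg he0' (by norm_num) (by linarith)]; congr 1; ring
      _ ≤ _ := by
        have : e' ^ (β - 1 / 2) ≤ J ^ (β - 1 / 2) := Real.rpow_le_rpow he0' h2 (by linarith)
        gcongr
  have s3 : J ^ (α - 1 / 2) * J ^ (β - 1 / 2) = J ^ θ := by
    rw [← Real.rpow_add_of_nonneg hJ (by linarith) (by linarith)]; congr 1; linarith
  have hn : (((k - l).natAbs : ℕ) : ℝ) = (k:ℝ) - l := by
    rw [Nat.cast_natAbs, abs_of_nonneg (by linarith)]; push_cast; rfl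
  have s4 : (2:ℝ) ^ ((k:ℝ) + 1) * (2:ℝ) ^ ((l:ℝ) + 1) * ((2:ℝ) ^ (-((k:ℝ) * q) * α) * (2:ℝ) ^ (-((l:ℝ) * q) * β)) = 4 * ((2:ℝ) ^ (-(q * α - 1))) ^ (k - l).natAbs := by
    rw [← Real.rpow_natCast ((2:ℝ) ^ (-(q * α - 1))), ← Real.rpow_mul two_pos.le, hn, show (4:ℝ) = 2 ^ (2:ℝ) by norm_num, ← Real.rpow_add two_pos, ← Real.rpow_add two_pos, ← Real.rpow_add two_pos, ← Real.rpow_add two_pos]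
    congr 1
    have hqb : q * β = 2 - q * α := by rw [← hq, ← hsum]; ring
    linear_combination (-(l:ℝ)) * hqb
  rw [r1, r2, Real.sqrt_mul he0]
  calc _ = ((2:ℝ) ^ ((k:ℝ) + 1) * (2:ℝ) ^ ((l:ℝ) + 1) * ((2:ℝ) ^ (-((k:ℝ) * q) * α) * (2:ℝ) ^ (-((l:ℝ) * q) * β))) * (e ^ α * e' ^ β) := by ring
    _ ≤ ((2:ℝ) ^ ((k:ℝ) + 1) * (2:ℝ) ^ ((l:ℝ) + 1) * ((2:ℝ) ^ (-((k:ℝ) * q) * α) * (2:ℝ) ^ (-((l:ℝ) * q) * β))) * ((√e * J ^ (α - 1 / 2)) * (√e' * J ^ (β - 1 / 2))) := by gcongr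
    _ = 4 * ((2:ℝ) ^ (-(q * α - 1))) ^ (k - l).natAbs * (√e * √e') * (J ^ (α - 1 / 2) * J ^ (β - 1 / 2)) := by rw [s4]; ring
    _ = _ := by rw [s3]

theorem fourier_finset_sum {N : ℕ} (S : Finset ℤ) (f : ℤ → Esp N → ℂ) (hf : ∀ k ∈ S, Integrable (f k)) (ξ : Esp N) :
    𝓕 (fun x => ∑ k ∈ S, f k x) ξ = ∑ k ∈ S, 𝓕 (f k) ξ := by
  simp_rw [Real.fourier_eq, Finset.smul_sum]
  rw [integral_finset_sum]
  intro k hk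
  exact (Real.fourierIntegral_convergent_iff ξ).2 (hf k hk)

/-- Dyadic level. -/
def lev {N : ℕ} (f : Esp N → ℂ) (k : ℤ) : Set (Esp N) := {x | (2:ℝ) ^ (k:ℝ) ≤ ‖f x‖ ∧ ‖f x‖ < (2:ℝ) ^ ((k:ℝ) + 1)}

theorem lev_unique {N : ℕ} {f : Esp N → ℂ} {k l : ℤ} {x : Esp N} (hk : x ∈ lev f k) (hl : x ∈ lev f l) : k = l := by
  have h1 : (k:ℝ) < (l:ℝ) + 1 := (Real.rpow_lt_rpow_left_iff (one_lt_two)).1 (hk.1.trans_lt hl.2)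
  have h2 : (l:ℝ) < (k:ℝ) + 1 := (Real.rpow_lt_rpow_left_iff (one_lt_two)).1 (hl.1.trans_lt hk.2)
  have h1' : k < l + 1 := by exact_mod_cast h1
  have h2' : l < k + 1 := by exact_mod_cast h2
  omega

theorem lev_exists {N : ℕ} {f : Esp N → ℂ} {K : ℕ} {x : Esp N} (h1 : (2:ℝ) ^ (-(K:ℝ)) ≤ ‖f x‖) (h2 : ‖f x‖ < (2:ℝ) ^ (K:ℝ)) :
    ∃ k ∈ Finset.Ico (-(K:ℤ)) K, x ∈ lev f k := by
  have hp : 0 < ‖f x‖ := lt_of_lt_of_le (by positivity) h1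
  refine ⟨⌊Real.logb 2 ‖f x‖⌋, ?_, ?_⟩
  · rw [Finset.mem_Ico]
    constructor
    · rw [Int.le_floor]; push_cast
      rwa [Real.le_logb_iff_rpow_le one_lt_two hp]
    · rw [Int.floor_lt]; push_cast
      rwa [Real.logb_lt_iff_lt_rpow one_lt_two hp]
  · constructor
    · rw [← Real.le_logb_iff_rpow_le one_lt_two hp]; exact Int.floor_le _
    · rw [← Real.logb_lt_iff_lt_rpow one_lt_two hp]; exact Int.lt_floor_add_one _

/-- The restricted dual estimate on simple-like functions. -/
theorem Qe_dyadic {N : ℕ} (hN : 2 ≤ N) {θ q : ℝ} (hθ : θ = 2 / ((N : ℝ) + 1)) (hq : q = 2 / (1 + θ)) :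
    ∃ C : ℝ, 0 < C ∧ ∀ (f : Esp N → ℂ) (K : ℕ) (ε : ℝ), 0 < ε → Measurable f → 
      (∀ x, f x = 0 ∨ ((2:ℝ) ^ (-(K:ℝ)) ≤ ‖f x‖ ∧ ‖f x‖ < (2:ℝ) ^ (K:ℝ))) → volume {x | f x ≠ 0} < ⊤ →
      Qe ε f ≤ C * (∫ x, ‖f x‖ ^ q) ^ (1 + θ) := by
  obtain ⟨b, hb⟩ : ∃ b : ℝ, b = ((N : ℝ) - 1) / 2 := ⟨_, rfl⟩
  obtain ⟨τ, hτ⟩ : ∃ τ : ℝ, τ = 1 / (2 * b + 1) := ⟨_, rfl⟩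
  have hN' : (2:ℝ) ≤ N := by exact_mod_cast hN
  have hb0 : 0 < b := by rw [hb]; linarith
  have hθ' : θ = 1 / (b + 1) := by
    have hb1 : b + 1 = ((N:ℝ)+1)/2 := by rw [hb]; ring
    rw [hθ, hb1, one_div_div]
  have hθ0 : 0 < θ := by rw [hθ]; positivity
  have hq0 : 0 < q := by rw [hq]; positivity
  have hq1 : q * (1 + θ) = 2 := by rw [hq]; field_simp
  have hτ0 : 0 < τ := by rw [hτ]; positivity
  have hτ1 : 0 < 1 - τ := by
    have : 1 - τ = 2 * b / (2 * b + 1) := by rw [hτ]; field_simp; ring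
    rw [this]; positivity
  have hrel : τ + (1 - τ) * (θ / 2) = θ := by rw [hτ, hθ']; field_simp; ring
  obtain ⟨C, hC, hpair⟩ := pair_bound hN hb hθ' hτ
  set α := τ + (1 - τ) * ((1 + θ) / 2) with hα
  set β := τ + (1 - τ) * (1 / 2) with hβ
  have hsum : α + β = 1 + θ := by rw [hα, hβ]; linear_combination hrel
  have hβ2 : 1 / 2 ≤ β := by rw [hβ]; linarith
  have hαβ : β < α := by rw [hα, hβ]; nlinarith [mul_pos hτ1 hθ0]
  have hc : 0 < q * α - 1 := by
    have : q * (2 * α) > q * (1 + θ) := by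
      apply mul_lt_mul_of_pos_left _ hq0; linarith
    linarith
  obtain ⟨G, hG, hschur⟩ := schur_sum (ρ := (2:ℝ) ^ (-(q * α - 1))) (by positivity) (by
    apply Real.rpow_lt_one_of_one_lt_of_neg one_lt_two; linarith)
  refine ⟨C * 4 * G, by positivity, ?_⟩
  intro f K ε hε hfm hfr hfin
  set S := Finset.Ico (-(K:ℤ)) K with hS
  set J := ∫ x, ‖f x‖ ^ q with hJ
  have hfn : Measurable (fun x => ‖f x‖) := hfm.norm
  have hEm : ∀ k, MeasurableSet (lev f k) := fun k =>
    (measurableSet_le measurable_const hfn).inter (measurableSet_lt hfn measurable_const)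
  have hEf : ∀ k, volume (lev f k) < ⊤ := by
    intro k
    refine lt_of_le_of_lt (measure_mono ?_) hfin
    intro x hx h
    have := hx.1
    rw [h, norm_zero] at this
    have h2 : (0:ℝ) < 2 ^ (k:ℝ) := by positivity
    linarith
  let fk : ℤ → Esp N → ℂ := fun k => (lev f k).indicator f
  have hfkm : ∀ k, Measurable (fk k) := fun k => hfm.indicator (hEm k)
  have hfkb : ∀ k x, ‖fk k x‖ ≤ (lev f k).indicator (fun _ => (2:ℝ) ^ ((k:ℝ) + 1)) x := by
    intro k x
    by_cases hx : x ∈ lev f k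
    · simp only [fk, indicator_of_mem hx]; exact hx.2.le
    · simp only [fk, indicator_of_notMem hx, norm_zero, le_refl]
  have hfsum : f = fun x => ∑ k ∈ S, fk k x := by
    ext x
    rcases hfr x with h | ⟨h1, h2⟩
    · rw [h, Finset.sum_eq_zero]
      intro k _
      simp only [fk]
      by_cases hx : x ∈ lev f k
      · rw [indicator_of_mem hx, h]
      · rw [indicator_of_notMem hx]
    · obtain ⟨k, hk, hx⟩ := lev_exists h1 h2
      rw [Finset.sum_eq_single_of_mem k hk]
      · simp only [fk, indicator_of_mem hx]
      · intro l _ hlk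
        simp only [fk]
        rw [indicator_of_notMem]
        intro hl; exact hlk (lev_unique hl hx)
  have hfki : ∀ k, Integrable (fk k) ∧ MemLp (fk k) 2 volume := by
    intro k
    obtain ⟨i1, i2, -, -⟩ := int_bound_one (u := (2:ℝ) ^ ((k:ℝ) + 1)) (by positivity) (hEm k) (hEf k) (hfkm k) (hfkb k)
    exact ⟨i1, i2⟩
  have hfi : Integrable f := by rw [hfsum]; exact integrable_finset_sum _ fun k _ => (hfki k).1
  have hf2 : MemLp f 2 volume := by rw [hfsum]; exact memLp_finset_sum _ fun k _ => (hfki k).2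
  let e : ℤ → ℝ := fun k => (2:ℝ) ^ ((k:ℝ) * q) * (volume (lev f k)).toReal
  have he0 : ∀ k, 0 ≤ e k := fun k => by positivity
  have hfq : Integrable (fun x => ‖f x‖ ^ q) := by
    have : Integrable ({x | f x ≠ 0}.indicator (fun _ => ((2:ℝ) ^ (K:ℝ)) ^ q)) := by
      rw [integrable_indicator_iff]
      · exact integrableOn_const hfin.ne
      · exact (hfm (measurableSet_singleton 0)).compl
    refine this.mono' (hfn.pow_const q).aestronglyMeasurable (ae_of_all _ fun x => ?_)
    rw [Real.norm_of_nonneg (by positivity)]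
    rcases hfr x with h | ⟨h1, h2⟩
    · rw [h, norm_zero, Real.zero_rpow hq0.ne']
      apply indicator_nonneg; intros; positivity
    · rw [indicator_of_mem]
      · exact Real.rpow_le_rpow (norm_nonneg _) h2.le hq0.le
      · intro h
        rw [h, norm_zero] at h1
        have h2 : (0:ℝ) < 2 ^ (-(K:ℝ)) := by positivity
        linarith
  have hesum : ∑ k ∈ S, e k ≤ J := by
    have h1 : ∀ k ∈ S, e k ≤ ∫ x in lev f k, ‖f x‖ ^ q := by
      intro k _
      have : e k = ∫ x in lev f k, (2:ℝ) ^ ((k:ℝ) * q) := by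
        simp [e, mul_comm, Measure.real]
      rw [this]
      apply setIntegral_mono_on (integrableOn_const (hEf k).ne) hfq.integrableOn (hEm k)
      intro x hx
      rw [Real.rpow_mul two_pos.le]
      exact Real.rpow_le_rpow (by positivity) hx.1 hq0.le
    refine (Finset.sum_le_sum h1).trans ?_
    rw [← integral_biUnion_finset S (fun k _ => hEm k) (fun k _ l _ hkl => by
      rw [Function.onFun, Set.disjoint_left]; intro x hk hl; exact hkl (lev_unique hk hl)) (fun k _ => hfq.integrableOn)]
    exact setIntegral_le_integral hfq (ae_of_all _ fun x => by simp only [Pi.zero_apply]; positivity)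
  have heJ : ∀ k ∈ S, e k ≤ J := fun k hk => (Finset.single_le_sum (fun l _ => he0 l) hk).trans hesum
  have hJ0 : 0 ≤ J := by positivity
  have hB : ∀ k ∈ S, ∀ l ∈ S, ‖∫ ξ, ((xs ξ : ℂ) + ε * Complex.I)⁻¹ * (𝓕 (fk k) ξ * (starRingEnd ℂ) (𝓕 (fk l) ξ))‖ ≤
      C * (4 * ((2:ℝ) ^ (-(q * α - 1))) ^ (k - l).natAbs * √(e k * e l) * J ^ θ) := by
    intro k hk l hl
    rcases le_total l k with h | h
    · refine (hpair ε hε (fk k) (fk l) _ _ _ _ (by positivity) (by positivity) (hEm k) (hEm l) (hEf k) (hEf l) (hfkm k) (hfkm l) (hfkb k) (hfkb l)).1.trans ?_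
      exact mul_le_mul_of_nonneg_left (dyadic_arith hsum hq1 hβ2 (hβ2.trans hαβ.le) ENNReal.toReal_nonneg ENNReal.toReal_nonneg k l h (heJ k hk) (heJ l hl)) hC.le
    · refine (hpair ε hε (fk l) (fk k) _ _ _ _ (by positivity) (by positivity) (hEm l) (hEm k) (hEf l) (hEf k) (hfkm l) (hfkm k) (hfkb l) (hfkb k)).2.trans ?_
      rw [show (k - l).natAbs = (l - k).natAbs by rw [← Int.natAbs_neg, neg_sub], mul_comm (e k)]
      exact mul_le_mul_of_nonneg_left (dyadic_arith hsum hq1 hβ2 (hβ2.trans hαβ.le) ENNReal.toReal_nonneg ENNReal.toReal_nonneg l k h (heJ l hl) (heJ k hk)) hC.le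
  refine (Qe_le_resolvent hε hfi hf2).trans ?_
  have hF : ∀ ξ, 𝓕 f ξ = ∑ k ∈ S, 𝓕 (fk k) ξ := by
    intro ξ
    conv_lhs => rw [hfsum]
    exact fourier_finset_sum S fk (fun k _ => (hfki k).1) ξ
  have hexp : ∫ ξ, ((xs ξ : ℂ) + ε * Complex.I)⁻¹ * (𝓕 f ξ * (starRingEnd ℂ) (𝓕 f ξ)) =
      ∑ k ∈ S, ∑ l ∈ S, ∫ ξ, ((xs ξ : ℂ) + ε * Complex.I)⁻¹ * (𝓕 (fk k) ξ * (starRingEnd ℂ) (𝓕 (fk l) ξ)) := by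
    have hI : ∀ k l, Integrable (fun ξ => ((xs ξ : ℂ) + ε * Complex.I)⁻¹ * (𝓕 (fk k) ξ * (starRingEnd ℂ) (𝓕 (fk l) ξ))) := fun k l =>
      integrable_resolvent hε (integrable_H (hfki k).1 (hfki k).2 (hfki l).1 (hfki l).2)
    simp_rw [← integral_finset_sum S (fun l _ => hI _ l)]
    rw [← integral_finset_sum]
    · congr 1; ext ξ
      rw [hF, map_sum, Finset.sum_mul_sum, Finset.mul_sum]
      simp_rw [Finset.mul_sum]
    · intro k _
      exact integrable_finset_sum _ fun l _ => hI k l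
  rw [hexp]
  calc _ ≤ ∑ k ∈ S, ∑ l ∈ S, C * (4 * ((2:ℝ) ^ (-(q * α - 1))) ^ (k - l).natAbs * √(e k * e l) * J ^ θ) := by
        refine (norm_sum_le _ _).trans (Finset.sum_le_sum fun k hk => ?_)
        refine (norm_sum_le _ _).trans (Finset.sum_le_sum fun l hl => hB k hk l hl)
    _ = C * 4 * J ^ θ * ∑ k ∈ S, ∑ l ∈ S, ((2:ℝ) ^ (-(q * α - 1))) ^ (k - l).natAbs * √(e k * e l) := by
        simp_rw [Finset.mul_sum]
        apply Finset.sum_congr rfl; intro k _; apply Finset.sum_congr rfl; intro l _; ring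
    _ ≤ C * 4 * J ^ θ * (G * J) := by
        gcongr
        exact (hschur S e he0).trans (by gcongr)
    _ = _ := by
        rw [Real.rpow_add_of_nonneg hJ0 zero_le_one hθ0.le, Real.rpow_one]; ring

end PartI

section PartJ
open Set
open scoped FourierTransform
variable {N : ℕ}

theorem pair_weight {ε : ℝ} (hε : 0 < ε) {h g : Esp N → ℂ} (hh : MemLp h 2 volume) (hg : MemLp g 2 volume)
    (hx : MemLp (fun ξ => (xs ξ : ℂ) * h ξ) 2 volume) :
    ‖∫ ξ, h ξ * (starRingEnd ℂ) (g ξ)‖ ≤ √((∫ ξ, ‖(xs ξ : ℂ) * h ξ‖ ^ 2) / ε + ε * ∫ ξ, ‖h ξ‖ ^ 2) *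
      √(∫ ξ, ε / (xs ξ ^ 2 + ε ^ 2) * ‖g ξ‖ ^ 2) := by
  have hxm := (continuous_xs (N := N)).measurable
  have e1 : ∀ ξ : Esp N, 0 < xs ξ ^ 2 + ε ^ 2 := fun ξ => by positivity
  have i1 : Integrable (fun ξ => ‖(xs ξ : ℂ) * h ξ‖ ^ 2) := by
    simpa using hx.integrable_norm_pow (by norm_num)
  have i2 : Integrable (fun ξ => ‖h ξ‖ ^ 2) := by
    simpa using hh.integrable_norm_pow (by norm_num)
  have i3 : Integrable (fun ξ => ‖g ξ‖ ^ 2) := by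
    simpa using hg.integrable_norm_pow (by norm_num)
  have key : ∀ ξ : Esp N, ((√((xs ξ ^ 2 + ε ^ 2) / ε) * ‖h ξ‖)) ^ 2 = ‖(xs ξ : ℂ) * h ξ‖ ^ 2 / ε + ε * ‖h ξ‖ ^ 2 := by
    intro ξ
    rw [mul_pow, Real.sq_sqrt (by positivity), norm_mul, mul_pow, Complex.norm_real, Real.norm_eq_abs, sq_abs]
    field_simp
  have key2 : ∀ ξ : Esp N, ((√(ε / (xs ξ ^ 2 + ε ^ 2)) * ‖g ξ‖)) ^ 2 = ε / (xs ξ ^ 2 + ε ^ 2) * ‖g ξ‖ ^ 2 := by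
    intro ξ
    rw [mul_pow, Real.sq_sqrt (by positivity)]
  have m1 : MemLp (fun ξ => √((xs ξ ^ 2 + ε ^ 2) / ε) * ‖h ξ‖) 2 volume := by
    rw [memLp_two_iff_integrable_sq]
    · simp_rw [key]
      exact (i1.div_const ε).add (i2.const_mul ε)
    · exact ((by fun_prop : Measurable (fun ξ : Esp N => √((xs ξ ^ 2 + ε ^ 2) / ε))).aestronglyMeasurable).mul hh.1.norm
  have m2 : MemLp (fun ξ => √(ε / (xs ξ ^ 2 + ε ^ 2)) * ‖g ξ‖) 2 volume := by
    rw [memLp_two_iff_integrable_sq]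
    · simp_rw [key2]
      refine i3.bdd_mul (c := ε⁻¹) (by fun_prop : Measurable (fun ξ : Esp N => (ε / (xs ξ ^ 2 + ε ^ 2)))).aestronglyMeasurable (ae_of_all _ fun ξ => ?_)
      rw [Real.norm_of_nonneg (by positivity), div_le_iff₀ (e1 ξ), ← div_eq_inv_mul, le_div_iff₀ hε]
      nlinarith [sq_nonneg (xs ξ)]
    · exact ((by fun_prop : Measurable (fun ξ : Esp N => √(ε / (xs ξ ^ 2 + ε ^ 2)))).aestronglyMeasurable).mul hg.1.norm
  have cs := cauchy_schwarz_int (fun _ => by positivity) (fun _ => by positivity) m1 m2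
  simp_rw [key, key2] at cs
  rw [integral_add (i1.div_const ε) (i2.const_mul ε), integral_div, integral_const_mul] at cs
  refine (norm_integral_le_integral_norm _).trans (le_trans (le_of_eq ?_) cs)
  congr 1; ext ξ
  rw [norm_mul, RCLike.norm_conj, mul_mul_mul_comm, ← Real.sqrt_mul (by positivity)]
  have : (xs ξ ^ 2 + ε ^ 2) / ε * (ε / (xs ξ ^ 2 + ε ^ 2)) = 1 := by
    have := (e1 ξ).ne'
    field_simp
  rw [this]; simp

theorem arith_I {I C θ P : ℝ} (hI : 0 ≤ I) (hC : 0 ≤ C) (hP : 0 ≤ P) (hθ : θ < 1) (h : I ≤ √P * √(C * I ^ (1 + θ))) :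
    I ≤ (C * P) ^ (1 / (1 - θ)) := by
  rcases hI.eq_or_lt with h0 | h0
  · rw [← h0]; positivity
  have h2 : I ^ 2 ≤ P * (C * I ^ (1 + θ)) := by
    have := pow_le_pow_left₀ hI h 2
    rwa [mul_pow, Real.sq_sqrt hP, Real.sq_sqrt (by positivity)] at this
  have h3 : I ^ (1 - θ) ≤ C * P := by
    have : I ^ (1 - θ) * I ^ (1 + θ) = I ^ 2 := by
      rw [← Real.rpow_add h0, ← Real.rpow_natCast]; congr 1; push_cast; ring
    have h4 : 0 < I ^ (1 + θ) := by positivity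
    rw [← this] at h2
    refine le_of_mul_le_mul_right (h2.trans (le_of_eq (by ring))) h4
  calc I = (I ^ (1 - θ)) ^ (1 / (1 - θ)) := by
        rw [← Real.rpow_mul hI, mul_one_div_cancel (by linarith), Real.rpow_one]
    _ ≤ _ := Real.rpow_le_rpow (by positivity) h3 (by apply one_div_nonneg.2; linarith)

theorem eps_choice {X a d : ℝ} (C r : ℝ) (hr : 0 ≤ r) (hC : 0 ≤ C) (ha : 0 ≤ a) (hd : 0 ≤ d)
    (h : ∀ ε : ℝ, 0 < ε → X ≤ (C * (d / ε + ε * a)) ^ r) : X ≤ (C * (2 * √(d * a))) ^ r := by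
  have hlim : Tendsto (fun η : ℝ => (C * (2 * √((d + η) * (a + η)))) ^ r) (𝓝[>] 0) (𝓝 ((C * (2 * √((d + 0) * (a + 0)))) ^ r)) := by
    have : Continuous (fun η : ℝ => (C * (2 * √((d + η) * (a + η)))) ^ r) := by
      apply Continuous.rpow_const (by fun_prop)
      intro; right; exact hr
    exact (this.tendsto 0).mono_left nhdsWithin_le_nhds
  simp only [add_zero] at hlim
  refine ge_of_tendsto hlim ?_
  filter_upwards [self_mem_nhdsWithin] with η hη
  have hη : 0 < η := hη
  have hd' : 0 < d + η := by linarith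
  have ha' : 0 < a + η := by linarith
  set u := √(d + η) with hu
  set w := √(a + η) with hw
  have hu0 : 0 < u := Real.sqrt_pos.2 hd'
  have hw0 : 0 < w := Real.sqrt_pos.2 ha'
  have hu2 : u ^ 2 = d + η := Real.sq_sqrt hd'.le
  have hw2 : w ^ 2 = a + η := Real.sq_sqrt ha'.le
  refine (h (u / w) (by positivity)).trans (Real.rpow_le_rpow (by positivity) (mul_le_mul_of_nonneg_left ?_ hC) hr)
  rw [Real.sqrt_mul hd'.le, ← hu, ← hw]
  have : 2 * (u * w) = u ^ 2 / (u / w) + u / w * w ^ 2 := by field_simp; ring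
  rw [this, hu2, hw2]
  gcongr <;> linarith

/-- Lemma A. -/
theorem lemmaA (hN : 2 ≤ N) {θ p0 : ℝ} (hθ : θ = 2 / ((N : ℝ) + 1)) (hp0 : p0 = 2 / (1 - θ)) :
    ∃ C : ℝ, 0 < C ∧ ∀ (v : Lp ℂ 2 (volume : Measure (Esp N))),
      MemLp (fun ξ => (xs ξ : ℂ) * (𝓕 v : Lp ℂ 2 (volume : Measure (Esp N))) ξ) 2 volume →
      ∫⁻ x, ENNReal.ofReal (‖v x‖ ^ p0) ≤ ENNReal.ofReal ((C * √((∫ ξ, ‖(xs ξ : ℂ) * (𝓕 v : Lp ℂ 2 (volume : Measure (Esp N))) ξ‖ ^ 2) *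
        (∫ ξ, ‖(𝓕 v : Lp ℂ 2 (volume : Measure (Esp N))) ξ‖ ^ 2))) ^ (p0 / 2)) := by
  obtain ⟨q, hq⟩ : ∃ q : ℝ, q = 2 / (1 + θ) := ⟨_, rfl⟩
  obtain ⟨C, hC, hQ⟩ := Qe_dyadic hN hθ hq
  have hN' : (2:ℝ) ≤ N := by exact_mod_cast hN
  have hθ0 : 0 < θ := by rw [hθ]; positivity
  have hθ1 : θ < 1 := by rw [hθ, div_lt_one (by positivity)]; linarith
  have hθ1' : 0 < 1 - θ := by linarith
  have hp2 : 2 < p0 := by rw [hp0, lt_div_iff₀ hθ1']; linarith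
  have hpq : (p0 - 1) * q = p0 := by
    rw [hp0, hq]; field_simp; ring
  refine ⟨C * 2, by positivity, fun v hx => ?_⟩
  set h := (𝓕 v : Lp ℂ 2 (volume : Measure (Esp N))) with hh
  have hvm : Measurable v := (Lp.stronglyMeasurable v).measurable
  have hv2 : MemLp v 2 volume := Lp.memLp v
  set r := p0 - 1 with hr
  have hr0 : 0 < r := by linarith
  have hvr : Measurable (fun x => ‖v x‖ ^ r) := hvm.norm.pow_const r
  let E : ℕ → Set (Esp N) := fun n => {x | (2:ℝ) ^ (-(n:ℝ)) ≤ ‖v x‖ ^ r ∧ ‖v x‖ ^ r < (2:ℝ) ^ (n:ℝ)}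
  have hEm : ∀ n, MeasurableSet (E n) := fun n =>
    (measurableSet_le measurable_const hvr).inter (measurableSet_lt hvr measurable_const)
  have hEfin : ∀ n, volume (E n) < ⊤ := by
    intro n
    have h1 : 0 < ((2:ℝ) ^ (-(n:ℝ))) ^ (1 / r) := by positivity
    refine lt_of_le_of_lt (measure_mono ?_) (hv2.meas_ge_lt_top'_enorm (by norm_num) (by norm_num) (ε := ENNReal.ofReal (((2:ℝ) ^ (-(n:ℝ))) ^ (1 / r))) (by simpa using h1) (by simp))
    intro x hx
    simp only [mem_ofPred_eq]
    rw [← ofReal_norm]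
    apply ENNReal.ofReal_le_ofReal
    calc _ ≤ (‖v x‖ ^ r) ^ (1 / r) := Real.rpow_le_rpow (by positivity) hx.1 (by positivity)
      _ = _ := by rw [← Real.rpow_mul (norm_nonneg _), mul_one_div_cancel hr0.ne', Real.rpow_one]
  have hmono : Monotone E := by
    intro m n hmn x hx
    have : (m:ℝ) ≤ n := by exact_mod_cast hmn
    refine ⟨le_trans ?_ hx.1, lt_of_lt_of_le hx.2 ?_⟩
    · exact Real.rpow_le_rpow_of_exponent_le one_le_two (by linarith)
    · exact Real.rpow_le_rpow_of_exponent_le one_le_two (by linarith)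
  have hU : ⋃ n, E n = {x | v x ≠ 0} := by
    ext x
    simp only [mem_iUnion, mem_ofPred_eq]
    constructor
    · rintro ⟨n, h1, h2⟩ h0
      rw [h0, norm_zero, Real.zero_rpow hr0.ne'] at h1
      have : (0:ℝ) < 2 ^ (-(n:ℝ)) := by positivity
      linarith
    · intro h0
      have hp : 0 < ‖v x‖ ^ r := Real.rpow_pos_of_pos (norm_pos_iff.2 h0) r
      obtain ⟨n1, hn1⟩ := exists_nat_gt (Real.logb 2 (‖v x‖ ^ r))
      obtain ⟨n2, hn2⟩ := exists_nat_gt (-Real.logb 2 (‖v x‖ ^ r))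
      refine ⟨n1 + n2, ?_, ?_⟩
      · rw [← Real.le_logb_iff_rpow_le one_lt_two hp]; push_cast
        have : (0:ℝ) ≤ n1 := by positivity
        linarith
      · rw [← Real.logb_lt_iff_lt_rpow one_lt_two hp]; push_cast
        have : (0:ℝ) ≤ n2 := by positivity
        linarith
  have step : ∀ n, ∫⁻ x in E n, ENNReal.ofReal (‖v x‖ ^ p0) ≤ ENNReal.ofReal ((C * 2 * √((∫ ξ, ‖(xs ξ : ℂ) * h ξ‖ ^ 2) *
        (∫ ξ, ‖h ξ‖ ^ 2))) ^ (p0 / 2)) := by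
    intro n
    let f : Esp N → ℂ := (E n).indicator (fun x => ((‖v x‖ ^ (r - 1) : ℝ) : ℂ) * v x)
    have hfm : Measurable f := Measurable.indicator (by fun_prop) (hEm n)
    have hne : ∀ x ∈ E n, 0 < ‖v x‖ := by
      intro x hx
      have : x ∈ ⋃ n, E n := mem_iUnion.2 ⟨n, hx⟩
      rw [hU] at this
      exact norm_pos_iff.2 this
    have hfn : ∀ x ∈ E n, ‖f x‖ = ‖v x‖ ^ r := by
      intro x hx
      simp only [f, indicator_of_mem hx, norm_mul, Complex.norm_real]
      rw [Real.norm_of_nonneg (by positivity), Real.rpow_sub_one (hne x hx).ne', div_mul_cancel₀ _ (hne x hx).ne']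
    have hf0 : ∀ x ∉ E n, f x = 0 := fun x hx => by simp only [f, indicator_of_notMem hx]
    have hfr : ∀ x, f x = 0 ∨ ((2:ℝ) ^ (-(n:ℝ)) ≤ ‖f x‖ ∧ ‖f x‖ < (2:ℝ) ^ (n:ℝ)) := by
      intro x
      by_cases hx : x ∈ E n
      · right; rw [hfn x hx]; exact hx
      · left; exact hf0 x hx
    have hfs : volume {x | f x ≠ 0} < ⊤ := by
      refine lt_of_le_of_lt (measure_mono fun x hx => ?_) (hEfin n)
      by_contra h; exact hx (hf0 x h)
    have hfb : ∀ x, ‖f x‖ ≤ (E n).indicator (fun _ => (2:ℝ) ^ (n:ℝ)) x := by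
      intro x
      by_cases hx : x ∈ E n
      · rw [indicator_of_mem hx, hfn x hx]; exact hx.2.le
      · rw [indicator_of_notMem hx, hf0 x hx, norm_zero]
    obtain ⟨hf1, hf2, -, -⟩ := int_bound_one (u := (2:ℝ) ^ (n:ℝ)) (by positivity) (hEm n) (hEfin n) hfm hfb
    set I := ∫ x, ‖f x‖ ^ q with hI
    have hfI : ∀ x, v x * (starRingEnd ℂ) (f x) = ((‖f x‖ ^ q : ℝ) : ℂ) := by
      intro x
      by_cases hx : x ∈ E n
      · rw [hfn x hx, ← Real.rpow_mul (norm_nonneg _), hpq]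
        simp only [f, indicator_of_mem hx, map_mul, Complex.conj_ofReal]
        rw [mul_left_comm, Complex.mul_conj, ← Complex.ofReal_mul, Complex.normSq_eq_norm_sq, ← Real.rpow_natCast, ← Real.rpow_add (hne x hx)]
        congr 2; push_cast; rw [hr]; ring
      · rw [hf0 x hx]
        have : 0 < q := by rw [hq]; positivity
        simp [Real.zero_rpow this.ne']
    have hpar := parseval v hf1 hf2
    simp_rw [hfI] at hpar
    rw [integral_complex_ofReal] at hpar
    have hI0 : 0 ≤ I := by positivity
    have hIb : I ≤ (C * (2 * √((∫ ξ, ‖(xs ξ : ℂ) * h ξ‖ ^ 2) * (∫ ξ, ‖h ξ‖ ^ 2)))) ^ (1 / (1 - θ)) := by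
      refine eps_choice C _ (by apply one_div_nonneg.2; linarith) hC.le (by positivity) (by positivity) fun ε hε => ?_
      refine arith_I hI0 hC.le (by positivity) hθ1 ?_
      have := pair_weight hε (Lp.memLp h) (memLp_fourier hf1 hf2) hx
      rw [← hpar, Complex.norm_real, Real.norm_of_nonneg hI0] at this
      refine this.trans ?_
      gcongr
      exact hQ f n ε hε hfm hfr hfs
    have hintg : ∫⁻ x in E n, ENNReal.ofReal (‖v x‖ ^ p0) = ENNReal.ofReal I := by
      rw [hI, ofReal_integral_eq_lintegral_ofReal _ (ae_of_all _ fun x => by positivity)]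
      · rw [← lintegral_indicator (hEm n)]
        apply lintegral_congr; intro x
        by_cases hx : x ∈ E n
        · rw [indicator_of_mem hx, hfn x hx, ← Real.rpow_mul (norm_nonneg _), hpq]
        · rw [indicator_of_notMem hx, hf0 x hx]
          have : 0 < q := by rw [hq]; positivity
          simp [Real.zero_rpow this.ne']
      · have i1 := hv2.integrable_mul (memLp_conj hf2)
        have : (fun x => ((‖f x‖ ^ q : ℝ))) = fun x => (v x * (starRingEnd ℂ) (f x)).re := by
          ext x; rw [hfI]; simp
        rw [this]
        exact i1.re
    rw [hintg]
    apply ENNReal.ofReal_le_ofReal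
    refine hIb.trans (le_of_eq ?_)
    rw [mul_assoc]; congr 1; rw [hp0]; field_simp
  have : ∫⁻ x, ENNReal.ofReal (‖v x‖ ^ p0) = ∫⁻ x in ⋃ n, E n, ENNReal.ofReal (‖v x‖ ^ p0) := by
    rw [← lintegral_indicator (MeasurableSet.iUnion hEm)]
    apply lintegral_congr; intro x
    by_cases hx : x ∈ ⋃ n, E n
    · rw [indicator_of_mem hx]
    · rw [indicator_of_notMem hx]
      rw [hU] at hx
      have : v x = 0 := by simpa using hx
      rw [this, norm_zero, Real.zero_rpow (by linarith)]; simp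
  rw [this, setLIntegral_iUnion_of_directed _ hmono.directed_le]
  exact iSup_le step

end PartJ

section PartK
open Set
open scoped FourierTransform
variable {N : ℕ}

theorem inv_spec {g : Esp N → ℂ} (hg : Integrable g) (φ : SchwartzMap (Esp N) ℂ) :
    ∫ x, (𝓕⁻ g) x * (𝓕 φ) x = ∫ ξ, g ξ * φ ξ := by
  have h := mult_formula hg (𝓕⁻ φ)
  rw [FourierTransform.fourier_fourierInv_eq] at h
  rw [h, ← integral_neg_eq_self]
  congr 1; ext x
  rw [Real.fourierInv_eq_fourier_neg, neg_neg, SchwartzMap.fourierInv_coe, Real.fourierInv_eq_fourier_neg, SchwartzMap.fourier_coe]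

theorem memLp_fourierInv {g : Esp N → ℂ} (hg : Integrable g) (hg2 : MemLp g 2 volume) : MemLp (𝓕⁻ g) 2 volume := by
  have h := memLp_fourier hg hg2
  have : 𝓕⁻ g = fun x => 𝓕 g (-x) := by ext x; exact Real.fourierInv_eq_fourier_neg g x
  rw [this]
  exact h.comp_measurePreserving (Measure.measurePreserving_neg volume)

theorem norm_fourierInv_le (f : Esp N → ℂ) (ξ : Esp N) : ‖𝓕⁻ f ξ‖ ≤ ∫ x, ‖f x‖ := by
  rw [Real.fourierInv_eq_fourier_neg]; exact norm_fourier_le f _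

theorem fourierInv_ae {v : Lp ℂ 2 (volume : Measure (Esp N))} {g : Esp N → ℂ} (hg : Integrable g) (hg2 : MemLp g 2 volume)
    (hv : (𝓕 v : Lp ℂ 2 (volume : Measure (Esp N))) =ᵐ[volume] g) : v =ᵐ[volume] 𝓕⁻ g := by
  have h1 := fourier_ae_eq_of_spec (memLp_fourierInv hg hg2) hg.locallyIntegrable (inv_spec hg)
  have h2 : (𝓕 v : Lp ℂ 2 (volume : Measure (Esp N))) = 𝓕 ((memLp_fourierInv hg hg2).toLp (𝓕⁻ g)) :=
    Lp.ext (hv.trans h1.symm)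
  have h3 : v = (memLp_fourierInv hg hg2).toLp (𝓕⁻ g) := by
    have h4 := congrArg (fun w : Lp ℂ 2 (volume : Measure (Esp N)) => (𝓕⁻ w : Lp ℂ 2 (volume : Measure (Esp N)))) h2
    simpa only [FourierTransform.fourierInv_fourier_eq] using h4
  rw [h3]
  exact MemLp.coeFn_toLp _

theorem sup_bound {v : Lp ℂ 2 (volume : Measure (Esp N))} {g : Esp N → ℂ} (hg : Integrable g) (hg2 : MemLp g 2 volume)
    (hv : (𝓕 v : Lp ℂ 2 (volume : Measure (Esp N))) =ᵐ[volume] g) : ∀ᵐ x, ‖v x‖ ≤ ∫ ξ, ‖g ξ‖ := by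
  filter_upwards [fourierInv_ae hg hg2 hv] with x hx
  rw [hx]; exact norm_fourierInv_le g x

theorem poisson_one {ε : ℝ} (hε : 0 < ε) : Integrable (fun y : ℝ => ε / ((y - 1) ^ 2 + ε ^ 2)) ∧ ∫ y : ℝ, ε / ((y - 1) ^ 2 + ε ^ 2) = Real.pi := by
  have e : (fun y : ℝ => ε / ((y - 1) ^ 2 + ε ^ 2)) = fun y => ε⁻¹ * (1 + ((y - 1) / ε) ^ 2)⁻¹ := by
    ext y
    have : 0 < (y - 1) ^ 2 + ε ^ 2 := by positivity
    field_simp; ring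
  rw [e]
  constructor
  · exact ((integrable_inv_one_add_sq.comp_div hε.ne').comp_sub_right 1).const_mul _
  · rw [integral_const_mul, integral_sub_right_eq_self (fun y : ℝ => (1 + (y / ε) ^ 2)⁻¹) 1,
      Measure.integral_comp_div (fun y : ℝ => (1 + y ^ 2)⁻¹) ε, integral_univ_inv_one_add_sq, abs_of_pos hε, smul_eq_mul]
    field_simp

theorem poisson_ball (hN : 2 ≤ N) : ∃ C : ℝ, 0 < C ∧ ∀ ε : ℝ, 0 < ε →
    ∫ ξ : Esp N, ε / (xs ξ ^ 2 + ε ^ 2) * ‖(Metric.closedBall (0 : Esp N) 2).indicator (fun _ => (1:ℂ)) ξ‖ ^ 2 ≤ C := by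
  have : Nonempty (Fin N) := ⟨⟨0, by omega⟩⟩
  have : Nontrivial (Esp N) := inferInstance
  refine ⟨(N : ℝ) * (volume.real (Metric.ball (0 : Esp N) 1) * (2 ^ (N - 1) * Real.pi)) + 1, by positivity, fun ε hε => ?_⟩
  let f : ℝ → ℝ := fun r => ε / ((4 * Real.pi ^ 2 * (r ^ 2 - 1)) ^ 2 + ε ^ 2) * (Iic (2:ℝ)).indicator (fun _ => 1) r
  have e : ∀ ξ : Esp N, ε / (xs ξ ^ 2 + ε ^ 2) * ‖(Metric.closedBall (0 : Esp N) 2).indicator (fun _ => (1:ℂ)) ξ‖ ^ 2 = f ‖ξ‖ := by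
    intro ξ
    simp only [f, xs]
    congr 1
    by_cases h : ‖ξ‖ ≤ 2
    · rw [indicator_of_mem (by simpa using h), indicator_of_mem (by simpa using h)]; simp
    · rw [indicator_of_notMem (by simpa using h), indicator_of_notMem (by simpa using h)]; simp
  simp_rw [e]
  rw [integral_fun_norm_addHaar volume f]
  have hd : Module.finrank ℝ (Esp N) = N := by simp
  rw [hd]
  obtain ⟨p1, p2⟩ := poisson_one hε
  have : ∫ y in Ioi (0:ℝ), y ^ (N - 1) • f y ≤ 2 ^ (N - 1) * Real.pi := by
    calc _ ≤ ∫ y in Ioi (0:ℝ), 2 ^ (N - 1) * (ε / ((y - 1) ^ 2 + ε ^ 2)) := by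
          apply integral_mono_of_nonneg
          · filter_upwards [ae_restrict_mem measurableSet_Ioi] with y hy
            have hy : 0 < y := hy
            simp only [Pi.zero_apply, smul_eq_mul, f]
            have : 0 ≤ (Iic (2:ℝ)).indicator (fun _ => (1:ℝ)) y := indicator_nonneg (by simp) _
            positivity
          · exact (p1.const_mul _).integrableOn
          · filter_upwards [ae_restrict_mem measurableSet_Ioi] with y hy
            have hy : 0 < y := hy
            simp only [smul_eq_mul, f]
            by_cases h : y ≤ 2
            · rw [indicator_of_mem (by simpa using h), mul_one]
              have h4 : (y - 1) ^ 2 ≤ (4 * Real.pi ^ 2 * (y ^ 2 - 1)) ^ 2 := by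
                have hpi : 1 ≤ 4 * Real.pi ^ 2 := by nlinarith [Real.pi_gt_three]
                have h1 : (4 * Real.pi ^ 2 * (y ^ 2 - 1)) ^ 2 = ((4 * Real.pi ^ 2) * (y + 1)) ^ 2 * (y - 1) ^ 2 := by ring
                rw [h1]
                have h2 : 1 ≤ ((4 * Real.pi ^ 2) * (y + 1)) := by nlinarith
                exact le_mul_of_one_le_left (sq_nonneg _) (one_le_pow₀ h2)
              gcongr
            · rw [indicator_of_notMem (by simpa using h)]; simp; positivity
      _ ≤ ∫ y, 2 ^ (N - 1) * (ε / ((y - 1) ^ 2 + ε ^ 2)) :=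
          setIntegral_le_integral (p1.const_mul _) (ae_of_all _ fun y => by simp only [Pi.zero_apply]; positivity)
      _ = _ := by rw [integral_const_mul, p2]
  rw [nsmul_eq_mul, smul_eq_mul]
  have h2 : (N : ℝ) * (volume.real (Metric.ball (0 : Esp N) 1) * ∫ y in Ioi (0:ℝ), y ^ (N - 1) • f y) ≤ (N : ℝ) * (volume.real (Metric.ball (0 : Esp N) 1) * (2 ^ (N - 1) * Real.pi)) := by
    gcongr
  linarith

/-- Lemma B. -/
theorem lemmaB (hN : 2 ≤ N) :
    ∃ C : ℝ, 0 < C ∧ ∀ (g : Esp N → ℂ), MemLp g 2 volume → (∀ ξ, 2 < ‖ξ‖ → g ξ = 0) → 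
      MemLp (fun ξ => (xs ξ : ℂ) * g ξ) 2 volume →
      Integrable g ∧ (∫ ξ, ‖g ξ‖) ^ 2 ≤ C * √((∫ ξ, ‖(xs ξ : ℂ) * g ξ‖ ^ 2) * (∫ ξ, ‖g ξ‖ ^ 2)) := by
  obtain ⟨C, hC, hP⟩ := poisson_ball hN
  refine ⟨C * 2, by positivity, fun g hg hs hx => ?_⟩
  have hB : MemLp ((Metric.closedBall (0 : Esp N) 2).indicator (fun _ => (1:ℂ))) 2 volume :=
    memLp_indicator_const 2 measurableSet_closedBall _ (Or.inr measure_closedBall_lt_top.ne)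
  have hgB : ∀ ξ, g ξ * (Metric.closedBall (0 : Esp N) 2).indicator (fun _ => (1:ℂ)) ξ = g ξ := by
    intro ξ
    by_cases h : ‖ξ‖ ≤ 2
    · rw [indicator_of_mem (by simpa using h), mul_one]
    · rw [hs ξ (by linarith), zero_mul]
  have hi : Integrable g := by
    have := hg.integrable_mul hB
    refine this.congr (ae_of_all _ fun ξ => hgB ξ)
  refine ⟨hi, ?_⟩
  have hg' : MemLp (fun ξ => (‖g ξ‖ : ℂ)) 2 volume := hg.norm.ofReal
  have hx' : MemLp (fun ξ => (xs ξ : ℂ) * (‖g ξ‖ : ℂ)) 2 volume := by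
    refine hx.of_le ?_ (ae_of_all _ fun ξ => by simp)
    exact ((continuous_xs (N := N)).measurable.complex_ofReal.aestronglyMeasurable).mul hg'.1
  have := eps_choice (X := (∫ ξ, ‖g ξ‖) ^ 2) (a := ∫ ξ, ‖g ξ‖ ^ 2) (d := ∫ ξ, ‖(xs ξ : ℂ) * g ξ‖ ^ 2) C 1 zero_le_one hC.le (by positivity) (by positivity) ?_
  · rw [Real.rpow_one] at this; linarith
  intro ε hε
  have h := pair_weight hε hg' hB hx'
  have e1 : ∫ ξ, (‖g ξ‖ : ℂ) * (starRingEnd ℂ) ((Metric.closedBall (0 : Esp N) 2).indicator (fun _ => (1:ℂ)) ξ) = ((∫ ξ, ‖g ξ‖ : ℝ) : ℂ) := by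
    rw [← integral_complex_ofReal]
    congr 1; ext ξ
    by_cases h : ‖ξ‖ ≤ 2
    · rw [indicator_of_mem (by simpa using h)]; simp
    · rw [hs ξ (by linarith)]; simp
  rw [e1, Complex.norm_real, Real.norm_of_nonneg (by positivity)] at h
  simp only [norm_mul, Complex.norm_real, norm_norm] at h
  simp only [norm_mul, Complex.norm_real, Real.rpow_one]
  have h3 := pow_le_pow_left₀ (by positivity) h 2
  refine h3.trans ?_
  rw [mul_pow, Real.sq_sqrt (by positivity), Real.sq_sqrt (by positivity), mul_comm]
  gcongr
  exact hP ε hε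

end PartK

section PartL
open Set
open scoped FourierTransform
variable {N : ℕ}

theorem lintegral_sq_eq {α : Type*} [MeasurableSpace α] {μ : Measure α} (f : α → ℂ) :
    ∫⁻ x, ‖f x‖ₑ ^ (2:ℝ) ∂μ = eLpNorm f 2 μ ^ (2:ℝ) := by
  have := eLpNorm_nnreal_pow_eq_lintegral (μ := μ) (f := f) (p := 2) (by norm_num)
  simpa using this.symm

theorem ball_pow (hN : 2 ≤ N) {τ : ℝ} (hτ : τ < N) :
    ∃ c : ℝ, 0 < c ∧ ∀ R : ℝ, 0 < R → IntegrableOn (fun ξ : Esp N => ‖ξ‖ ^ (-τ)) (Metric.ball 0 R) ∧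
      ∫ ξ in Metric.ball (0 : Esp N) R, ‖ξ‖ ^ (-τ) ≤ c * R ^ ((N : ℝ) - τ) := by
  have : Nonempty (Fin N) := ⟨⟨0, by omega⟩⟩
  have : Nontrivial (Esp N) := inferInstance
  have hd : Module.finrank ℝ (Esp N) = N := by simp
  have hm : ((N - 1 : ℕ) : ℝ) = (N : ℝ) - 1 := by
    rw [Nat.cast_sub (by omega)]; simp
  have hpos : 0 < (N : ℝ) - τ := by linarith
  have hvol : 0 < volume.real (Metric.ball (0 : Esp N) 1) := by
    rw [measureReal_def, ENNReal.toReal_pos_iff]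
    exact ⟨Metric.measure_ball_pos _ _ one_pos, measure_ball_lt_top⟩
  have hN0 : (0:ℝ) < N := by have : 0 < N := by omega
                             exact_mod_cast this
  refine ⟨(N : ℝ) * (volume.real (Metric.ball (0 : Esp N) 1) * ((N : ℝ) - τ)⁻¹), by positivity, fun R hR => ?_⟩
  have e : ∀ y ∈ Ioo (0:ℝ) R, y ^ (N - 1) • y ^ (-τ) = y ^ ((N : ℝ) - 1 - τ) := by
    intro y hy
    have hy0 : 0 < y := hy.1
    rw [smul_eq_mul, ← Real.rpow_natCast, ← Real.rpow_add hy0, hm]; congr 1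
  have hii : IntervalIntegrable (fun y : ℝ => y ^ ((N : ℝ) - 1 - τ)) volume 0 R :=
    intervalIntegral.intervalIntegrable_rpow' (by linarith)
  constructor
  · rw [integrableOn_fun_norm_addHaar volume (f := fun r => r ^ (-τ)), hd]
    rw [integrableOn_congr_fun e measurableSet_Ioo]
    exact (hii.1).mono_set Ioo_subset_Ioc_self
  · rw [← integral_indicator measurableSet_ball]
    have e2 : ∀ ξ : Esp N, (Metric.ball (0 : Esp N) R).indicator (fun ξ => ‖ξ‖ ^ (-τ)) ξ = (fun r : ℝ => (Iio R).indicator (fun r => r ^ (-τ)) r) ‖ξ‖ := by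
      intro ξ; simp [indicator]
    simp_rw [e2]
    rw [integral_fun_norm_addHaar volume (fun r : ℝ => (Iio R).indicator (fun r => r ^ (-τ)) r), hd]
    have e3 : ∫ y in Ioi (0:ℝ), y ^ (N - 1) • (Iio R).indicator (fun r => r ^ (-τ)) y = ((N : ℝ) - τ)⁻¹ * R ^ ((N:ℝ) - τ) := by
      calc _ = ∫ y in Ioi (0:ℝ), (Iio R).indicator (fun r => r ^ (N - 1) • r ^ (-τ)) y := by
            congr 1; ext y; by_cases h : y ∈ Iio R
            · rw [indicator_of_mem h, indicator_of_mem h]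
            · rw [indicator_of_notMem h, indicator_of_notMem h, smul_zero]
        _ = ∫ y in Ioo (0:ℝ) R, y ^ (N - 1) • y ^ (-τ) := by
            rw [setIntegral_indicator measurableSet_Iio]; rfl
        _ = ∫ y in Ioo (0:ℝ) R, y ^ ((N : ℝ) - 1 - τ) := setIntegral_congr_fun measurableSet_Ioo e
        _ = ∫ y in (0:ℝ)..R, y ^ ((N : ℝ) - 1 - τ) := by
            rw [intervalIntegral.integral_of_le hR.le, integral_Ioc_eq_integral_Ioo]
        _ = _ := by
            rw [integral_rpow (Or.inl (by linarith)), show (N : ℝ) - 1 - τ + 1 = N - τ by ring, Real.zero_rpow hpos.ne']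
            rw [sub_zero, div_eq_inv_mul]
    rw [e3, nsmul_eq_mul, smul_eq_mul]
    apply le_of_eq; ring

theorem cut_bound {σ c R b : ℝ} (hb : 0 ≤ b) 
    (hc : IntegrableOn (fun ξ : Esp N => ‖ξ‖ ^ (-(2 * σ))) (Metric.ball 0 R) ∧
      ∫ ξ in Metric.ball (0 : Esp N) R, ‖ξ‖ ^ (-(2 * σ)) ≤ c * R ^ ((N : ℝ) - 2 * σ)) (hN : 2 ≤ N)
    {g : Esp N → ℂ} (hg : MemLp g 2 volume) (hw : MemLp (fun ξ => ((‖ξ‖ ^ σ : ℝ) : ℂ) * g ξ) 2 volume)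
    (hB : ∫ ξ, ‖((‖ξ‖ ^ σ : ℝ) : ℂ) * g ξ‖ ^ 2 ≤ b ^ 2) : 
    IntegrableOn g (Metric.ball 0 R) ∧ ∫ ξ in Metric.ball (0 : Esp N) R, ‖g ξ‖ ≤ √(c * R ^ ((N : ℝ) - 2 * σ)) * b := by
  have : Nonempty (Fin N) := ⟨⟨0, by omega⟩⟩
  have : Nontrivial (Esp N) := inferInstance
  constructor
  · have h1 : MemLp g 2 (volume.restrict (Metric.ball (0 : Esp N) R)) := hg.restrict _
    have : IsFiniteMeasure (volume.restrict (Metric.ball (0 : Esp N) R)) := ⟨by simpa using measure_ball_lt_top⟩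
    exact (h1.mono_exponent (by norm_num)).integrable le_rfl
  have key : ∀ ξ : Esp N, (‖ξ‖ ^ (-σ)) ^ 2 = ‖ξ‖ ^ (-(2 * σ)) := by
    intro ξ
    rw [← Real.rpow_natCast, ← Real.rpow_mul (norm_nonneg _)]; congr 1; push_cast; ring
  have m1 : MemLp (fun ξ : Esp N => ‖ξ‖ ^ (-σ)) 2 (volume.restrict (Metric.ball 0 R)) := by
    rw [memLp_two_iff_integrable_sq]
    · simp_rw [key]; exact hc.1
    · exact (measurable_norm.pow_const _).aestronglyMeasurable
  have cs := cauchy_schwarz_int (fun ξ : Esp N => by positivity) (fun ξ => norm_nonneg _) m1 (hw.restrict (Metric.ball 0 R)).norm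
  simp_rw [key] at cs
  calc _ = ∫ ξ in Metric.ball (0 : Esp N) R, ‖ξ‖ ^ (-σ) * ‖((‖ξ‖ ^ σ : ℝ) : ℂ) * g ξ‖ := by
        apply integral_congr_ae
        apply ae_restrict_of_ae
        filter_upwards [compl_mem_ae_iff.2 (measure_singleton (0 : Esp N))] with ξ hξ
        have h0 : 0 < ‖ξ‖ := norm_pos_iff.2 (by simpa using hξ)
        rw [norm_mul, Complex.norm_real, Real.norm_of_nonneg (by positivity), ← mul_assoc, ← Real.rpow_add h0]; simp
    _ ≤ _ := cs
    _ ≤ _ := by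
        gcongr
        · exact hc.2
        · rw [Real.sqrt_le_left hb]
          refine le_trans ?_ hB
          refine setIntegral_le_integral (by simpa using hw.integrable_norm_pow (by norm_num)) (ae_of_all _ fun ξ => by simp only [Pi.zero_apply]; positivity)

theorem level_bound {α : ℝ} (hα : 0 < α) (v : Lp ℂ 2 (volume : Measure (Esp N))) {S : Set (Esp N)} (hS : MeasurableSet S)
    {g : Esp N → ℂ} (hg : (𝓕 v : Lp ℂ 2 (volume : Measure (Esp N))) =ᵐ[volume] g)
    (hi : IntegrableOn g S) (hb : ∫ ξ in S, ‖g ξ‖ ≤ α / 2) :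
    volume {x | α < ‖v x‖} ≤ ENNReal.ofReal (4 * α ^ (-2:ℝ)) * ∫⁻ ξ in Sᶜ, ‖g ξ‖ₑ ^ (2:ℝ) := by
  have hg2 : MemLp g 2 volume := (memLp_congr_ae hg).1 (Lp.memLp _)
  have hg1 : MemLp (S.indicator g) 2 volume := hg2.indicator hS
  have hi1 : Integrable (S.indicator g) := (integrable_indicator_iff hS).2 hi
  let v1 : Lp ℂ 2 (volume : Measure (Esp N)) := 𝓕⁻ (hg1.toLp (S.indicator g))
  have hv1 : (𝓕 v1 : Lp ℂ 2 (volume : Measure (Esp N))) = hg1.toLp (S.indicator g) := FourierTransform.fourier_fourierInv_eq _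
  have hv1' : (𝓕 v1 : Lp ℂ 2 (volume : Measure (Esp N))) =ᵐ[volume] S.indicator g := by
    rw [hv1]; exact MemLp.coeFn_toLp _
  have hsup := sup_bound hi1 hg1 hv1'
  have hn : ∫ ξ, ‖S.indicator g ξ‖ = ∫ ξ in S, ‖g ξ‖ := by
    simp_rw [norm_indicator_eq_indicator_norm]; exact integral_indicator hS
  rw [hn] at hsup
  have hf2 : (𝓕 (v - v1) : Lp ℂ 2 (volume : Measure (Esp N))) = 𝓕 v - 𝓕 v1 := by
    exact map_sub (FourierTransform.fourierCLE ℂ (Lp ℂ 2 (volume : Measure (Esp N)))) v v1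
  have hf2' : (𝓕 (v - v1) : Lp ℂ 2 (volume : Measure (Esp N))) =ᵐ[volume] Sᶜ.indicator g := by
    rw [hf2]
    filter_upwards [Lp.coeFn_sub (𝓕 v : Lp ℂ 2 (volume : Measure (Esp N))) (𝓕 v1), hg, hv1'] with ξ h1 h2 h3
    rw [h1, Pi.sub_apply, h2, h3]
    by_cases h : ξ ∈ S <;> simp [h]
  have hL : ∫⁻ x, ‖(v - v1) x‖ₑ ^ (2:ℝ) = ∫⁻ ξ in Sᶜ, ‖g ξ‖ₑ ^ (2:ℝ) := by
    rw [lintegral_sq_eq, ← eLpNorm_fourier_Lp, eLpNorm_congr_ae hf2', ← lintegral_sq_eq, ← lintegral_indicator hS.compl]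
    apply lintegral_congr; intro ξ
    by_cases h : ξ ∈ S <;> simp [h]
  rw [← hL]
  have hsub : {x | α < ‖v x‖} ≤ᵐ[volume] {x | ENNReal.ofReal ((α / 2) ^ (2:ℝ)) ≤ ‖(v - v1) x‖ₑ ^ (2:ℝ)} := by
    filter_upwards [hsup, Lp.coeFn_sub v v1] with x h1 h2 hx
    have hx : α < ‖v x‖ := hx
    change ENNReal.ofReal ((α / 2) ^ (2:ℝ)) ≤ ‖(v - v1) x‖ₑ ^ (2:ℝ)
    rw [h2, Pi.sub_apply, ← ENNReal.ofReal_rpow_of_nonneg (by positivity) (by norm_num), ← ofReal_norm]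
    gcongr
    have := norm_sub_norm_le (v x) (v1 x)
    linarith
  refine (measure_mono_ae hsub).trans ?_
  refine (meas_ge_le_lintegral_div ?_ (by simp; positivity) (by simp)).trans ?_
  · exact ((Lp.stronglyMeasurable (v - v1)).measurable.enorm.pow_const _).aemeasurable
  · rw [ENNReal.div_eq_inv_mul, ← ENNReal.ofReal_inv_of_pos (by positivity)]
    gcongr
    apply le_of_eq
    rw [Real.div_rpow hα.le two_pos.le, Real.rpow_neg hα.le]
    norm_num
    field_simp

theorem inner_pow {p A : ℝ} (hp : 2 < p) (hA : 0 ≤ A) :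
    ∫⁻ t in Ioi (0:ℝ), (Iic A).indicator (fun t => ENNReal.ofReal (t ^ (p - 3))) t = ENNReal.ofReal (A ^ (p - 2) / (p - 2)) := by
  rw [setLIntegral_indicator measurableSet_Iic, inter_comm, Ioi_inter_Iic]
  have hii : IntervalIntegrable (fun y : ℝ => y ^ (p - 3)) volume 0 A :=
    intervalIntegral.intervalIntegrable_rpow' (by linarith)
  rw [← ofReal_integral_eq_lintegral_ofReal hii.1]
  · rw [← intervalIntegral.integral_of_le hA, integral_rpow (Or.inl (by linarith)), show p - 3 + 1 = p - 2 by ring,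
      Real.zero_rpow (by linarith), sub_zero]
  · filter_upwards [ae_restrict_mem measurableSet_Ioc] with y hy
    have : 0 < y := hy.1
    simp only [Pi.zero_apply]; positivity

end PartL

section PartM
open Set
open scoped FourierTransform
variable {N : ℕ}

theorem lemmaC_aux (hN : 2 ≤ N) {p σ : ℝ} (hp : 2 < p) (hσ : σ = N * (1 / 2 - 1 / p)) :
    ∃ C : ℝ, 0 < C ∧ ∀ (v : Lp ℂ 2 (volume : Measure (Esp N))) (b : ℝ), 0 < b →
      MemLp (fun ξ => ((‖ξ‖ ^ σ : ℝ) : ℂ) * (𝓕 v : Lp ℂ 2 (volume : Measure (Esp N))) ξ) 2 volume →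
      ∫ ξ, ‖((‖ξ‖ ^ σ : ℝ) : ℂ) * (𝓕 v : Lp ℂ 2 (volume : Measure (Esp N))) ξ‖ ^ 2 ≤ b ^ 2 →
      ∫⁻ x, ENNReal.ofReal (‖v x‖ ^ p) ≤ ENNReal.ofReal (C * b ^ p) := by
  have hN0 : (0:ℝ) < N := by have : 0 < N := by omega
                             exact_mod_cast this
  have hp0 : 0 < p := by linarith
  have hNσ : (N : ℝ) - 2 * σ = 2 * (N / p) := by rw [hσ]; field_simp; ring
  have hNp : 0 < (N : ℝ) / p := by positivity
  obtain ⟨c, hc, hcb⟩ := ball_pow hN (τ := 2 * σ) (by linarith)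
  set c1 := √c with hc1
  have hp2' : 0 < p - 2 := by linarith
  have hc1p : 0 < c1 := Real.sqrt_pos.2 hc
  refine ⟨p * (4 * ((2 * c1) ^ (p - 2) / (p - 2))), by positivity, fun v b hb hw hB => ?_⟩
  set g := (𝓕 v : Lp ℂ 2 (volume : Measure (Esp N))) with hg
  have hgm : Measurable g := (Lp.stronglyMeasurable g).measurable
  have hvm : Measurable v := (Lp.stronglyMeasurable v).measurable
  let A : Esp N → ℝ := fun ξ => 2 * c1 * b * ‖ξ‖ ^ ((N : ℝ) / p)
  have hAm : Measurable A := (measurable_norm.pow_const _).const_mul _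
  have hA0 : ∀ ξ, 0 ≤ A ξ := fun ξ => by positivity
  have hlev : ∀ α : ℝ, 0 < α → volume {x | α < ‖v x‖} ≤ ENNReal.ofReal (4 * α ^ (-2:ℝ)) * ∫⁻ ξ in {ξ | A ξ < α}ᶜ, ‖g ξ‖ₑ ^ (2:ℝ) := by
    intro α hα
    set R := (α / (2 * c1 * b)) ^ ((N : ℝ) / p)⁻¹ with hR
    have hR0 : 0 < R := by positivity
    have hS : {ξ | A ξ < α} = Metric.ball (0 : Esp N) R := by
      ext ξ
      simp only [mem_ofPred_eq, mem_ball_zero_iff, A]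
      rw [hR, Real.lt_rpow_inv_iff_of_pos (norm_nonneg _) (by positivity) hNp, lt_div_iff₀ (by positivity), mul_comm]
    obtain ⟨h1, h2⟩ := cut_bound hb.le (hcb R hR0) hN (Lp.memLp g) hw hB
    have h3 : √(c * R ^ ((N : ℝ) - 2 * σ)) * b = α / 2 := by
      have : R ^ ((N : ℝ) - 2 * σ) = (α / (2 * c1 * b)) ^ 2 := by
        rw [hNσ, hR, ← Real.rpow_mul (by positivity), ← Real.rpow_natCast]
        congr 1; push_cast; field_simp
      rw [this, Real.sqrt_mul hc.le, Real.sqrt_sq (by positivity), ← hc1]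
      field_simp
    rw [h3] at h2
    have := level_bound hα v (measurableSet_ball (x := (0 : Esp N)) (ε := R)) (Filter.EventuallyEq.refl _ _) h1 h2
    rw [hS]; exact this
  rw [lintegral_rpow_eq_lintegral_meas_lt_mul volume (ae_of_all _ fun x => norm_nonneg _) hvm.norm.aemeasurable hp0]
  calc _ ≤ ENNReal.ofReal p * ∫⁻ t in Ioi (0:ℝ), ∫⁻ ξ, 4 * (‖g ξ‖ₑ ^ (2:ℝ) * (Iic (A ξ)).indicator (fun t => ENNReal.ofReal (t ^ (p - 3))) t) := by
        refine mul_le_mul_right ?_ _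
        refine setLIntegral_mono' measurableSet_Ioi (fun t ht => ?_)
        have ht : 0 < t := ht
        refine (mul_le_mul_left (hlev t ht) _).trans (le_of_eq ?_)
        rw [← lintegral_indicator (measurableSet_lt hAm measurable_const).compl, mul_right_comm, ← ENNReal.ofReal_mul (by positivity)]
        rw [← lintegral_const_mul _ ((hgm.enorm.pow_const _).indicator (measurableSet_lt hAm measurable_const).compl)]
        apply lintegral_congr; intro ξ
        have e1 : 4 * t ^ (-2:ℝ) * t ^ (p - 1) = 4 * t ^ (p - 3) := by
          rw [mul_assoc, ← Real.rpow_add ht]; congr 2; ring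
        by_cases h : A ξ < t
        · rw [indicator_of_notMem (by simpa using h), indicator_of_notMem (by simpa using h)]; simp
        · rw [indicator_of_mem (by simpa using h), indicator_of_mem (by simpa using h), e1,
            ENNReal.ofReal_mul (by norm_num)]
          norm_num; ring
    _ = ENNReal.ofReal p * ∫⁻ ξ, ∫⁻ t in Ioi (0:ℝ), 4 * (‖g ξ‖ₑ ^ (2:ℝ) * (Iic (A ξ)).indicator (fun t => ENNReal.ofReal (t ^ (p - 3))) t) := by
        rw [lintegral_lintegral_swap]
        apply Measurable.aemeasurable
        have hset : MeasurableSet {q : ℝ × Esp N | q.1 ≤ A q.2} := measurableSet_le measurable_fst (hAm.comp measurable_snd)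
        have : (Function.uncurry fun (t : ℝ) (ξ : Esp N) => 4 * (‖g ξ‖ₑ ^ (2:ℝ) * (Iic (A ξ)).indicator (fun t => ENNReal.ofReal (t ^ (p - 3))) t))
          = fun q : ℝ × Esp N => 4 * (‖g q.2‖ₑ ^ (2:ℝ) * {q : ℝ × Esp N | q.1 ≤ A q.2}.indicator (fun q => ENNReal.ofReal (q.1 ^ (p - 3))) q) := by
          ext ⟨t, ξ⟩
          simp [Function.uncurry, indicator]
        rw [this]
        refine Measurable.const_mul (Measurable.mul ((hgm.enorm.pow_const _).comp measurable_snd) (Measurable.indicator ?_ hset)) _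
        exact (measurable_fst.pow_const _).ennreal_ofReal
    _ = ENNReal.ofReal p * ∫⁻ ξ, ENNReal.ofReal (4 * ((2 * c1 * b) ^ (p - 2) / (p - 2))) * ENNReal.ofReal (‖((‖ξ‖ ^ σ : ℝ) : ℂ) * g ξ‖ ^ 2) := by
        congr 1
        apply lintegral_congr; intro ξ
        have hm : Measurable (fun t : ℝ => (Iic (A ξ)).indicator (fun t => ENNReal.ofReal (t ^ (p - 3))) t) :=
          Measurable.indicator (measurable_id.pow_const _).ennreal_ofReal measurableSet_Iic
        rw [lintegral_const_mul _ (hm.const_mul _), lintegral_const_mul _ hm, inner_pow hp (hA0 ξ)]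
        have hp2 : 0 < p - 2 := by linarith
        rw [← ofReal_norm, ENNReal.ofReal_rpow_of_nonneg (norm_nonneg _) (by norm_num), show (4 : ENNReal) = ENNReal.ofReal 4 by norm_num,
          ← ENNReal.ofReal_mul (by positivity), ← ENNReal.ofReal_mul (by positivity), ← ENNReal.ofReal_mul (by positivity)]
        congr 1
        have e2 : (A ξ) ^ (p - 2) = (2 * c1 * b) ^ (p - 2) * (‖ξ‖ ^ σ) ^ 2 := by
          simp only [A]
          rw [Real.mul_rpow (by positivity) (by positivity), ← Real.rpow_mul (norm_nonneg _), ← Real.rpow_natCast (‖ξ‖ ^ σ), ← Real.rpow_mul (norm_nonneg _)]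
          congr 2; rw [hσ]; push_cast; field_simp
        rw [e2, norm_mul, mul_pow, Complex.norm_real, Real.norm_of_nonneg (by positivity), Real.rpow_two]
        ring
    _ = ENNReal.ofReal p * (ENNReal.ofReal (4 * ((2 * c1 * b) ^ (p - 2) / (p - 2))) * ENNReal.ofReal (∫ ξ, ‖((‖ξ‖ ^ σ : ℝ) : ℂ) * g ξ‖ ^ 2)) := by
        rw [lintegral_const_mul']
        · rw [ofReal_integral_eq_lintegral_ofReal (by simpa using hw.integrable_norm_pow (by norm_num)) (ae_of_all _ fun ξ => by simp only [Pi.zero_apply]; positivity)]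
        · exact ENNReal.ofReal_ne_top
    _ ≤ ENNReal.ofReal p * (ENNReal.ofReal (4 * ((2 * c1 * b) ^ (p - 2) / (p - 2))) * ENNReal.ofReal (b ^ 2)) := by
        gcongr
    _ = _ := by
        have hp2 : 0 < p - 2 := by linarith
        rw [← ENNReal.ofReal_mul (by positivity), ← ENNReal.ofReal_mul (by positivity)]
        congr 1
        have : b ^ p = b ^ (p - 2) * b ^ 2 := by
          rw [← Real.rpow_natCast, ← Real.rpow_add hb]; congr 1; push_cast; ring
        rw [this, Real.mul_rpow (by positivity) hb.le]; ring

/-- Lemma C (Sobolev). -/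
theorem lemmaC (hN : 2 ≤ N) {p σ : ℝ} (hp : 2 < p) (hσ : σ = N * (1 / 2 - 1 / p)) :
    ∃ C : ℝ, 0 < C ∧ ∀ (v : Lp ℂ 2 (volume : Measure (Esp N))),
      MemLp (fun ξ => ((‖ξ‖ ^ σ : ℝ) : ℂ) * (𝓕 v : Lp ℂ 2 (volume : Measure (Esp N))) ξ) 2 volume →
      ∫⁻ x, ENNReal.ofReal (‖v x‖ ^ p) ≤ ENNReal.ofReal (C * √(∫ ξ, ‖((‖ξ‖ ^ σ : ℝ) : ℂ) * (𝓕 v : Lp ℂ 2 (volume : Measure (Esp N))) ξ‖ ^ 2) ^ p) := by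
  obtain ⟨C, hC, h⟩ := lemmaC_aux hN hp hσ
  refine ⟨C, hC, fun v hw => ?_⟩
  set B := ∫ ξ, ‖((‖ξ‖ ^ σ : ℝ) : ℂ) * (𝓕 v : Lp ℂ 2 (volume : Measure (Esp N))) ξ‖ ^ 2 with hB
  have hB0 : 0 ≤ B := by positivity
  have hlim : Tendsto (fun b : ℝ => ENNReal.ofReal (C * b ^ p)) (𝓝[>] √B) (𝓝 (ENNReal.ofReal (C * √B ^ p))) := by
    have : Continuous (fun b : ℝ => ENNReal.ofReal (C * b ^ p)) := by
      apply ENNReal.continuous_ofReal.comp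
      apply Continuous.mul continuous_const
      exact Continuous.rpow_const continuous_id (fun _ => Or.inr (by linarith))
    exact (this.tendsto _).mono_left nhdsWithin_le_nhds
  refine ge_of_tendsto hlim ?_
  filter_upwards [self_mem_nhdsWithin] with b hb
  have hb : √B < b := hb
  have hb0 : 0 < b := lt_of_le_of_lt (Real.sqrt_nonneg _) hb
  exact h v b hb0 hw ((Real.sqrt_le_left hb0.le).1 hb.le)

end PartM

section PartN
open Set
open scoped FourierTransform
variable {N : ℕ}

theorem one_sub_rpow_ge {r s m : ℝ} (h0 : 0 ≤ r) (h1 : r ≤ 1) (hm : 0 < m) (hm1 : m ≤ 1) (hms : m ≤ s) :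
    m * (1 - r) ≤ 1 - r ^ s := by
  have h2 : r ^ s ≤ r ^ m := by
    rcases h0.eq_or_lt with h | h
    · rw [← h, Real.zero_rpow hm.ne', Real.zero_rpow (by linarith)]
    · exact Real.rpow_le_rpow_of_exponent_ge h h1 hms
  have h3 : r ^ m ≤ 1 + m * (r - 1) := by
    have := rpow_one_add_le_one_add_mul_self (s := r - 1) (by linarith) hm.le hm1
    simpa using this
  linarith

theorem symbol_low {s : ℝ} (hs : 0 < s) : ∃ C : ℝ, 0 < C ∧ ∀ r : ℝ, 0 ≤ r → r ≤ 2 → |r ^ 2 - 1| ≤ C * |r ^ s - 1| := by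
  set m := min s 1 with hm
  have hm0 : 0 < m := lt_min hs one_pos
  refine ⟨6 / m, by positivity, fun r h0 h2 => ?_⟩
  rw [div_mul_eq_mul_div, le_div_iff₀ hm0]
  rcases le_total r 1 with h1 | h1
  · have h3 := one_sub_rpow_ge h0 h1 hm0 (min_le_right _ _) (min_le_left _ _)
    have h4 : r ^ 2 ≤ 1 := by nlinarith
    have h5 : r ^ s ≤ 1 := Real.rpow_le_one h0 h1 hs.le
    rw [abs_of_nonpos (by linarith), abs_of_nonpos (by linarith)]
    nlinarith [mul_nonneg hm0.le (by linarith : (0:ℝ) ≤ 1 - r)]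
  · have hr0 : 0 < r := by linarith
    have h3 := one_sub_rpow_ge (r := r⁻¹) (by positivity) (inv_le_one_of_one_le₀ h1) hm0 (min_le_right _ _) (min_le_left _ _)
    have h5 : 1 ≤ r ^ s := Real.one_le_rpow h1 hs.le
    rw [Real.inv_rpow h0] at h3
    have h6 : 1 - (r ^ s)⁻¹ ≤ r ^ s - 1 := by
      have : (r ^ s - 1) - (1 - (r ^ s)⁻¹) = (r ^ s - 1) * (1 - (r ^ s)⁻¹) := by field_simp
      have h7 : (r ^ s)⁻¹ ≤ 1 := inv_le_one_of_one_le₀ h5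
      nlinarith
    have h8 : (r - 1) / 2 ≤ 1 - r⁻¹ := by
      have : 1 - r⁻¹ = (r - 1) / r := by field_simp
      rw [this]
      gcongr
    rw [abs_of_nonneg (by nlinarith), abs_of_nonneg (by linarith)]
    have h9 : m * ((r - 1) / 2) ≤ r ^ s - 1 := by
      have := mul_le_mul_of_nonneg_left h8 hm0.le
      linarith
    nlinarith [mul_nonneg hm0.le (by linarith : (0:ℝ) ≤ r - 1)]

theorem symbol_high {s : ℝ} (hs : 0 < s) : ∃ C : ℝ, 0 < C ∧ ∀ r : ℝ, 2 ≤ r → r ^ s ≤ C * |r ^ s - 1| := by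
  have h1 : (1:ℝ) < 2 ^ s := Real.one_lt_rpow one_lt_two hs
  refine ⟨2 ^ s / (2 ^ s - 1), div_pos (by linarith) (by linarith), fun r hr => ?_⟩
  have h2 : (2:ℝ) ^ s ≤ r ^ s := Real.rpow_le_rpow two_pos.le hr hs.le
  rw [abs_of_nonneg (by linarith), div_mul_eq_mul_div, le_div_iff₀ (by linarith)]
  nlinarith

theorem eLpNorm_le_of {w : Esp N → ℂ} {p X : ℝ} (hp : 0 < p) (hX : 0 ≤ X) (h : ∫⁻ x, ENNReal.ofReal (‖w x‖ ^ p) ≤ ENNReal.ofReal (X ^ p)) :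
    eLpNorm w (ENNReal.ofReal p) volume ≤ ENNReal.ofReal X := by
  rw [eLpNorm_eq_lintegral_rpow_enorm_toReal (by simpa using hp) (by simp), ENNReal.toReal_ofReal hp.le]
  have : ∀ x, ‖w x‖ₑ ^ p = ENNReal.ofReal (‖w x‖ ^ p) := fun x => by
    rw [← ofReal_norm, ENNReal.ofReal_rpow_of_nonneg (norm_nonneg _) hp.le]
  simp_rw [this]
  calc _ ≤ (ENNReal.ofReal (X ^ p)) ^ (1 / p) := by gcongr
    _ = _ := by
      rw [ENNReal.ofReal_rpow_of_nonneg (by positivity) (by positivity), ← Real.rpow_mul hX, mul_one_div_cancel hp.ne', Real.rpow_one]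

theorem lintegral_norm_sq {w : Esp N → ℂ} (hw : MemLp w 2 volume) : ∫⁻ x, ENNReal.ofReal (‖w x‖ ^ (2:ℝ)) = ENNReal.ofReal (∫ x, ‖w x‖ ^ 2) := by
  rw [ofReal_integral_eq_lintegral_ofReal (by simpa using hw.integrable_norm_pow (by norm_num)) (ae_of_all _ fun ξ => by simp only [Pi.zero_apply]; positivity)]
  simp

/-- Low frequency estimate. -/
theorem low_est (hN : 2 ≤ N) {p κ : ℝ} (hp : 2 < p) (hκ : 1 / 2 ≤ κ) (hκ1 : κ < 1) (hup : 1 - κ ≤ (((N : ℝ) + 1) / 2) * (1 / 2 - 1 / p)) :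
    ∃ C g : ℝ, 0 < C ∧ 1 - κ ≤ g ∧ g ≤ 1 / 2 ∧ ∀ (v : Lp ℂ 2 (volume : Measure (Esp N))) (h : Esp N → ℂ),
      (𝓕 v : Lp ℂ 2 (volume : Measure (Esp N))) =ᵐ[volume] h → (∀ ξ, 2 < ‖ξ‖ → h ξ = 0) → 
      MemLp (fun ξ => (xs ξ : ℂ) * h ξ) 2 volume →
      ∫⁻ x, ENNReal.ofReal (‖v x‖ ^ p) ≤ ENNReal.ofReal ((C * (√(∫ ξ, ‖h ξ‖ ^ 2) ^ (1 - g) * √(∫ ξ, ‖(xs ξ : ℂ) * h ξ‖ ^ 2) ^ g)) ^ p) := by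
  obtain ⟨θ, hθ⟩ : ∃ θ : ℝ, θ = 2 / ((N : ℝ) + 1) := ⟨_, rfl⟩
  obtain ⟨p0, hp0⟩ : ∃ p0 : ℝ, p0 = 2 / (1 - θ) := ⟨_, rfl⟩
  obtain ⟨CA, hCA, hA⟩ := lemmaA hN hθ hp0
  obtain ⟨CB, hCB, hB⟩ := lemmaB hN
  have hN' : (2:ℝ) ≤ N := by exact_mod_cast hN
  have hθ0 : 0 < θ := by rw [hθ]; positivity
  have hθ1 : θ < 1 := by rw [hθ, div_lt_one (by positivity)]; linarith
  have hθ1' : 0 < 1 - θ := by linarith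
  have hp2 : 2 < p0 := by rw [hp0, lt_div_iff₀ hθ1']; linarith
  have hp0p : 0 < p0 := by linarith
  have hpp : 0 < p := by linarith
  set K := max CA CB with hK
  have hK0 : 0 < K := lt_max_of_lt_left hCA
  -- common facts
  have common : ∀ (v : Lp ℂ 2 (volume : Measure (Esp N))) (h : Esp N → ℂ),
      (𝓕 v : Lp ℂ 2 (volume : Measure (Esp N))) =ᵐ[volume] h → (∀ ξ, 2 < ‖ξ‖ → h ξ = 0) → 
      MemLp (fun ξ => (xs ξ : ℂ) * h ξ) 2 volume →
      ∫⁻ x, ENNReal.ofReal (‖v x‖ ^ p0) ≤ ENNReal.ofReal ((K * (√(∫ ξ, ‖h ξ‖ ^ 2) * √(∫ ξ, ‖(xs ξ : ℂ) * h ξ‖ ^ 2))) ^ (p0 / 2)) ∧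
      (∀ᵐ x, ‖v x‖ ≤ (K * (√(∫ ξ, ‖h ξ‖ ^ 2) * √(∫ ξ, ‖(xs ξ : ℂ) * h ξ‖ ^ 2))) ^ ((1:ℝ) / 2)) ∧
      ∫⁻ x, ENNReal.ofReal (‖v x‖ ^ (2:ℝ)) = ENNReal.ofReal (√(∫ ξ, ‖h ξ‖ ^ 2) ^ 2) := by
    intro v h hv hs hx
    have hh2 : MemLp h 2 volume := (memLp_congr_ae hv).1 (Lp.memLp _)
    have hxv : (fun ξ => (xs ξ : ℂ) * (𝓕 v : Lp ℂ 2 (volume : Measure (Esp N))) ξ) =ᵐ[volume] fun ξ => (xs ξ : ℂ) * h ξ := by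
      filter_upwards [hv] with ξ hξ; rw [hξ]
    have hsq : √((∫ ξ, ‖(xs ξ : ℂ) * h ξ‖ ^ 2) * (∫ ξ, ‖h ξ‖ ^ 2)) = √(∫ ξ, ‖h ξ‖ ^ 2) * √(∫ ξ, ‖(xs ξ : ℂ) * h ξ‖ ^ 2) := by
      rw [Real.sqrt_mul (by positivity), mul_comm]
    refine ⟨?_, ?_, ?_⟩
    · have h1 := hA v ((memLp_congr_ae hxv).2 hx)
      have e1 : ∫ ξ, ‖(xs ξ : ℂ) * (𝓕 v : Lp ℂ 2 (volume : Measure (Esp N))) ξ‖ ^ 2 = ∫ ξ, ‖(xs ξ : ℂ) * h ξ‖ ^ 2 :=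
        integral_congr_ae (by filter_upwards [hv] with ξ hξ; rw [hξ])
      have e2 : ∫ ξ, ‖(𝓕 v : Lp ℂ 2 (volume : Measure (Esp N))) ξ‖ ^ 2 = ∫ ξ, ‖h ξ‖ ^ 2 :=
        integral_congr_ae (by filter_upwards [hv] with ξ hξ; rw [hξ])
      rw [e1, e2, hsq] at h1
      refine h1.trans (ENNReal.ofReal_le_ofReal (Real.rpow_le_rpow (by positivity) ?_ (by positivity)))
      gcongr
      exact le_max_left _ _
    · obtain ⟨hi, hb⟩ := hB h hh2 hs hx
      filter_upwards [sup_bound hi hh2 hv] with x hx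
      refine hx.trans ?_
      rw [← Real.sqrt_eq_rpow]
      apply Real.le_sqrt_of_sq_le
      rw [hsq] at hb
      refine hb.trans ?_
      gcongr
      exact le_max_right _ _
    · rw [lintegral_norm_sq (Lp.memLp v), Real.sq_sqrt (by positivity), sq_integral_eq (Lp.memLp v), ← eLpNorm_fourier_Lp, eLpNorm_congr_ae hv, sq_integral_eq hh2]
  rcases le_total p0 p with hc | hc
  · refine ⟨K ^ ((1:ℝ) / 2), 1 / 2, by positivity, by linarith, le_rfl, fun v h hv hs hx => ?_⟩
    obtain ⟨h1, h2, -⟩ := common v h hv hs hx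
    set a := √(∫ ξ, ‖h ξ‖ ^ 2)
    set d := √(∫ ξ, ‖(xs ξ : ℂ) * h ξ‖ ^ 2)
    have ha : 0 ≤ a := Real.sqrt_nonneg _
    have hd : 0 ≤ d := Real.sqrt_nonneg _
    set M := (K * (a * d)) ^ ((1:ℝ) / 2) with hM
    have hM0 : 0 ≤ M := by positivity
    have e : K ^ ((1:ℝ) / 2) * (a ^ (1 - (1:ℝ) / 2) * d ^ ((1:ℝ) / 2)) = M := by
      rw [hM, Real.mul_rpow hK0.le (by positivity), Real.mul_rpow ha hd]; norm_num
    have e' : (K * (a * d)) ^ (p0 / 2) = M ^ p0 := by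
      rw [hM, ← Real.rpow_mul (by positivity)]; congr 1; ring
    rw [e]
    rw [e'] at h1
    calc _ ≤ ∫⁻ x, ENNReal.ofReal (M ^ (p - p0)) * ENNReal.ofReal (‖v x‖ ^ p0) := by
          apply lintegral_mono_ae
          filter_upwards [h2] with x hx
          rw [← ENNReal.ofReal_mul (by positivity)]
          apply ENNReal.ofReal_le_ofReal
          calc ‖v x‖ ^ p = ‖v x‖ ^ (p - p0) * ‖v x‖ ^ p0 := by
                rw [← Real.rpow_add_of_nonneg (norm_nonneg _) (by linarith) (by linarith)]; congr 1; ring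
            _ ≤ _ := by gcongr
      _ = ENNReal.ofReal (M ^ (p - p0)) * ∫⁻ x, ENNReal.ofReal (‖v x‖ ^ p0) := lintegral_const_mul' _ _ ENNReal.ofReal_ne_top
      _ ≤ ENNReal.ofReal (M ^ (p - p0)) * ENNReal.ofReal (M ^ p0) := by gcongr
      _ = _ := by
          rw [← ENNReal.ofReal_mul (by positivity), ← Real.rpow_add_of_nonneg hM0 (by linarith) (by linarith)]; congr 2; ring
  · obtain ⟨g, hg⟩ : ∃ g : ℝ, g = (((N : ℝ) + 1) / 2) * (1 / 2 - 1 / p) := ⟨_, rfl⟩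
    obtain ⟨μ, hμ⟩ : ∃ μ : ℝ, μ = (p - 2) / (p0 - 2) := ⟨_, rfl⟩
    have hp02 : 0 < p0 - 2 := by linarith
    have hμ0 : 0 ≤ μ := by rw [hμ]; exact div_nonneg (by linarith) hp02.le
    have hμ1 : μ ≤ 1 := by rw [hμ, div_le_one hp02]; linarith
    have hpμ : p = 2 * (1 - μ) + p0 * μ := by rw [hμ]; field_simp; ring
    have hth : p0 - 2 = θ * p0 := by rw [hp0]; field_simp; ring
    have hgμ : p0 * μ / 2 = p * g := by
      rw [hμ, hth, hg, hθ]
      field_simp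
    have hg1 : g ≤ 1 / 2 := by
      have : p * g ≤ p * (1 / 2) := by rw [← hgμ]; nlinarith
      exact le_of_mul_le_mul_left this hpp
    have hg0 : 0 ≤ g := by rw [hg]; linarith
    have hlg : 2 * (1 - μ) = p * (1 - 2 * g) := by linarith
    refine ⟨K ^ g, g, by positivity, by rw [hg]; exact hup, hg1, fun v h hv hs hx => ?_⟩
    obtain ⟨h1, -, h2⟩ := common v h hv hs hx
    set a := √(∫ ξ, ‖h ξ‖ ^ 2)
    set d := √(∫ ξ, ‖(xs ξ : ℂ) * h ξ‖ ^ 2)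
    have ha : 0 ≤ a := Real.sqrt_nonneg _
    have hd : 0 ≤ d := Real.sqrt_nonneg _
    have hvm : Measurable v := (Lp.stronglyMeasurable v).measurable
    calc _ = ∫⁻ x, ENNReal.ofReal (‖v x‖ ^ (2:ℝ)) ^ (1 - μ) * ENNReal.ofReal (‖v x‖ ^ p0) ^ μ := by
          apply lintegral_congr; intro x
          rw [ENNReal.ofReal_rpow_of_nonneg (by positivity) (by linarith), ENNReal.ofReal_rpow_of_nonneg (by positivity) hμ0,
            ← ENNReal.ofReal_mul (by positivity), ← Real.rpow_mul (norm_nonneg _), ← Real.rpow_mul (norm_nonneg _),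
            ← Real.rpow_add_of_nonneg (norm_nonneg _) (by nlinarith) (by positivity), ← hpμ]
      _ ≤ (∫⁻ x, ENNReal.ofReal (‖v x‖ ^ (2:ℝ))) ^ (1 - μ) * (∫⁻ x, ENNReal.ofReal (‖v x‖ ^ p0)) ^ μ :=
          ENNReal.lintegral_mul_norm_pow_le (hvm.norm.pow_const _).ennreal_ofReal.aemeasurable (hvm.norm.pow_const _).ennreal_ofReal.aemeasurable (by linarith) hμ0 (by ring)
      _ ≤ ENNReal.ofReal (a ^ 2) ^ (1 - μ) * (ENNReal.ofReal ((K * (a * d)) ^ (p0 / 2))) ^ μ := by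
          rw [h2]; gcongr
      _ = _ := by
          rw [ENNReal.ofReal_rpow_of_nonneg (by positivity) (by linarith), ENNReal.ofReal_rpow_of_nonneg (by positivity) hμ0,
            ← ENNReal.ofReal_mul (by positivity), ← Real.rpow_natCast, ← Real.rpow_mul ha, ← Real.rpow_mul (by positivity)]
          congr 1
          push_cast
          rw [hlg, show p0 / 2 * μ = g * p by linarith, mul_comm p, Real.rpow_mul ha, Real.rpow_mul (by positivity), ← Real.mul_rpow (by positivity) (by positivity)]
          congr 1
          rw [Real.mul_rpow hK0.le (by positivity), Real.mul_rpow ha hd]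
          have : a ^ (1 - g) = a ^ (1 - 2 * g) * a ^ g := by
            rw [← Real.rpow_add_of_nonneg ha (by linarith) hg0]; congr 1; ring
          rw [this]; ring

end PartN

section PartO
open Set
open scoped FourierTransform
variable {N : ℕ}

theorem holder_real {α : Type*} [MeasurableSpace α] {μ : Measure α} {F G H : α → ℝ} {κ : ℝ} (h0 : 0 ≤ κ) (h1 : κ ≤ 1)
    (hF : Integrable F μ) (hG : Integrable G μ) (hH : Integrable H μ) (F0 : ∀ x, 0 ≤ F x) (G0 : ∀ x, 0 ≤ G x) (H0 : ∀ x, 0 ≤ H x)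
    (h : ∀ x, H x ≤ F x ^ κ * G x ^ (1 - κ)) : ∫ x, H x ∂μ ≤ (∫ x, F x ∂μ) ^ κ * (∫ x, G x ∂μ) ^ (1 - κ) := by
  have hF' : 0 ≤ ∫ x, F x ∂μ := integral_nonneg F0
  have hG' : 0 ≤ ∫ x, G x ∂μ := integral_nonneg G0
  rw [← ENNReal.ofReal_le_ofReal_iff (by positivity), ENNReal.ofReal_mul (by positivity), ← ENNReal.ofReal_rpow_of_nonneg hF' h0,
    ← ENNReal.ofReal_rpow_of_nonneg hG' (by linarith), ofReal_integral_eq_lintegral_ofReal hH (ae_of_all _ H0),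
    ofReal_integral_eq_lintegral_ofReal hF (ae_of_all _ F0), ofReal_integral_eq_lintegral_ofReal hG (ae_of_all _ G0)]
  refine le_trans (lintegral_mono fun x => ?_) (ENNReal.lintegral_mul_norm_pow_le hF.1.aemeasurable.ennreal_ofReal hG.1.aemeasurable.ennreal_ofReal h0 (by linarith) (by ring))
  rw [ENNReal.ofReal_rpow_of_nonneg (F0 x) h0, ENNReal.ofReal_rpow_of_nonneg (G0 x) (by linarith), ← ENNReal.ofReal_mul (by have := F0 x; positivity)]
  exact ENNReal.ofReal_le_ofReal (h x)

theorem sqrt_int_mono {f g : Esp N → ℂ} {c : ℝ} (hc : 0 ≤ c) (hg : MemLp g 2 volume) (h : ∀ x, ‖f x‖ ≤ c * ‖g x‖) :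
    √(∫ x, ‖f x‖ ^ 2) ≤ c * √(∫ x, ‖g x‖ ^ 2) := by
  rw [← Real.sqrt_sq hc, ← Real.sqrt_mul (by positivity), ← integral_const_mul]
  apply Real.sqrt_le_sqrt
  apply integral_mono_of_nonneg (ae_of_all _ fun x => by simp only [Pi.zero_apply]; positivity)
  · have : Integrable (fun x => ‖g x‖ ^ 2) := by simpa using hg.integrable_norm_pow (by norm_num)
    exact this.const_mul _
  · refine ae_of_all _ fun x => ?_
    simp only [Real.sqrt_sq hc]
    rw [← mul_pow]
    exact pow_le_pow_left₀ (norm_nonneg _) (h x) 2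

theorem memLp_mono_c {f g : Esp N → ℂ} {c : ℝ} (hf : AEStronglyMeasurable f volume) (hg : MemLp g 2 volume) (h : ∀ x, ‖f x‖ ≤ c * ‖g x‖) :
    MemLp f 2 volume := hg.of_le_mul hf (ae_of_all _ h)

set_option maxHeartbeats 4000000 in
theorem sufficiency (hN : 2 ≤ N) {p κ s : ℝ} (hp : 2 < p) (hs : 0 < s) (hκ : 1 / 2 ≤ κ) (hκ1 : κ < 1) 
    (hlo : ((N : ℝ) / s) * (1 / 2 - 1 / p) ≤ 1 - κ)
    (hup : 1 - κ ≤ (((N : ℝ) + 1) / 2) * (1 / 2 - 1 / p)) : ∃ C : ℝ, ∀ U : Hs N s, Qquot p κ U ≤ ENNReal.ofReal C := by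
  obtain ⟨C1, g, hC1, hg1, hg2, hlow⟩ := low_est hN hp hκ hκ1 hup
  obtain ⟨C2, hC2, hhigh⟩ := lemmaC hN hp rfl
  obtain ⟨C3, hC3, hsl⟩ := symbol_low hs
  obtain ⟨C4, hC4, hsh⟩ := symbol_high hs
  set σ := (N : ℝ) * (1 / 2 - 1 / p) with hσ
  have hpp : 0 < p := by linarith
  have hσ0 : 0 ≤ σ := by
    have : 1 / p ≤ 1 / 2 := one_div_le_one_div_of_le two_pos hp.le
    have h2 : 0 ≤ 1 / 2 - 1 / p := by linarith
    positivity
  have hσs : σ ≤ s * (1 - κ) := by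
    have := mul_le_mul_of_nonneg_left hlo hs.le
    refine le_trans (le_of_eq ?_) this
    rw [hσ]; field_simp
  have hκ0 : 0 < κ := by linarith
  have hg0 : 0 ≤ g := by linarith
  have hpi : (0:ℝ) < 4 * Real.pi ^ 2 := by positivity
  obtain ⟨C5, hC5⟩ : ∃ C5 : ℝ, C5 = C1 * ((4 * Real.pi ^ 2 * 3) ^ (g - (1 - κ)) * (4 * Real.pi ^ 2 * C3) ^ (1 - κ)) := ⟨_, rfl⟩
  obtain ⟨C6, hC6⟩ : ∃ C6 : ℝ, C6 = C2 ^ (1 / p) * C4 ^ (1 - κ) := ⟨_, rfl⟩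
  have hC50 : 0 < C5 := by rw [hC5]; positivity
  have hC60 : 0 < C6 := by rw [hC6]; positivity
  refine ⟨C5 + C6, fun U => ?_⟩
  -- weights
  have hwpos : ∀ ξ : Esp N, 1 ≤ (1 + ‖ξ‖ ^ 2) ^ (s / 2) := fun ξ =>
    Real.one_le_rpow (by nlinarith [sq_nonneg ‖ξ‖]) (by positivity)
  have hws : ∀ ξ : Esp N, ‖ξ‖ ^ s ≤ (1 + ‖ξ‖ ^ 2) ^ (s / 2) := by
    intro ξ
    calc ‖ξ‖ ^ s = (‖ξ‖ ^ 2) ^ (s / 2) := by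
          rw [← Real.rpow_natCast, ← Real.rpow_mul (norm_nonneg _)]; congr 1; push_cast; ring
      _ ≤ _ := Real.rpow_le_rpow (by positivity) (by linarith) (by positivity)
  have hwm : Measurable (fun ξ : Esp N => (1 + ‖ξ‖ ^ 2) ^ (s / 2)) := ((measurable_norm.pow_const 2).const_add 1).pow_const _
  have hhm : AEStronglyMeasurable U.hat volume := by
    have h1 := (hwm.inv.complex_ofReal.aestronglyMeasurable (μ := volume)).mul U.hat_mem.1
    refine h1.congr (ae_of_all _ fun ξ => ?_)
    simp only [Pi.mul_apply, Pi.inv_apply]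
    rw [← mul_assoc, ← Complex.ofReal_mul, inv_mul_cancel₀ (by have := hwpos ξ; linarith)]; simp
  have hwn : ∀ ξ : Esp N, ‖(((1 + ‖ξ‖ ^ 2) ^ (s / 2) : ℝ) : ℂ) * U.hat ξ‖ = (1 + ‖ξ‖ ^ 2) ^ (s / 2) * ‖U.hat ξ‖ := by
    intro ξ; rw [norm_mul, Complex.norm_real, Real.norm_of_nonneg (by have := hwpos ξ; linarith)]
  have hh2 : MemLp U.hat 2 volume := by
    refine U.hat_mem.of_le hhm (ae_of_all _ fun ξ => ?_)
    rw [hwn]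
    exact le_mul_of_one_le_left (norm_nonneg _) (hwpos ξ)
  have hsm : Measurable (fun ξ : Esp N => ‖ξ‖ ^ s) := measurable_norm.pow_const _
  have hD2 : MemLp (fun ξ => ((‖ξ‖ ^ s - 1 : ℝ) : ℂ) * U.hat ξ) 2 volume := by
    refine U.hat_mem.of_le ((hsm.sub_const 1).complex_ofReal.aestronglyMeasurable.mul hhm) (ae_of_all _ fun ξ => ?_)
    rw [hwn, norm_mul, Complex.norm_real, Real.norm_eq_abs]
    gcongr
    rw [abs_le]
    have h1 := hwpos ξ
    have h2 := hws ξ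
    have h3 : 0 ≤ ‖ξ‖ ^ s := by positivity
    constructor <;> linarith
  set v := U.u_mem.toLp U.u with hv
  have hvh : (𝓕 v : Lp ℂ 2 (volume : Measure (Esp N))) =ᵐ[volume] U.hat :=
    fourier_ae_eq_of_spec U.u_mem (hh2.locallyIntegrable (by norm_num)) U.fourier_spec
  set a := √(∫ ξ, ‖U.hat ξ‖ ^ 2) with ha
  set d := √(∫ ξ, ‖((‖ξ‖ ^ s - 1 : ℝ) : ℂ) * U.hat ξ‖ ^ 2) with hd
  have ha0 : 0 ≤ a := Real.sqrt_nonneg _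
  have hd0 : 0 ≤ d := Real.sqrt_nonneg _
  have haE : eLpNorm U.u 2 volume = ENNReal.ofReal a := by
    rw [ha, sq_integral_eq hh2, Real.sqrt_sq ENNReal.toReal_nonneg, ENNReal.ofReal_toReal hh2.eLpNorm_ne_top, ← eLpNorm_congr_ae hvh, eLpNorm_fourier_Lp,
      eLpNorm_congr_ae U.u_mem.coeFn_toLp]
  have hdE : dNorm U = ENNReal.ofReal d := by
    rw [hd, sq_integral_eq hD2, Real.sqrt_sq ENNReal.toReal_nonneg, ENNReal.ofReal_toReal hD2.eLpNorm_ne_top]; rfl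
  -- splitting
  set S : Set (Esp N) := Metric.closedBall 0 2 with hS
  have hSm : MeasurableSet S := measurableSet_closedBall
  set hl := S.indicator U.hat with hhl
  set hh := Sᶜ.indicator U.hat with hhh
  have hl2 : MemLp hl 2 volume := hh2.indicator hSm
  have hhh2 : MemLp hh 2 volume := hh2.indicator hSm.compl
  let vl : Lp ℂ 2 (volume : Measure (Esp N)) := 𝓕⁻ (hl2.toLp hl)
  let vh : Lp ℂ 2 (volume : Measure (Esp N)) := 𝓕⁻ (hhh2.toLp hh)
  have hvl : (𝓕 vl : Lp ℂ 2 (volume : Measure (Esp N))) =ᵐ[volume] hl := by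
    have : (𝓕 vl : Lp ℂ 2 (volume : Measure (Esp N))) = hl2.toLp hl := FourierTransform.fourier_fourierInv_eq _
    rw [this]; exact MemLp.coeFn_toLp _
  have hvhh : (𝓕 vh : Lp ℂ 2 (volume : Measure (Esp N))) =ᵐ[volume] hh := by
    have : (𝓕 vh : Lp ℂ 2 (volume : Measure (Esp N))) = hhh2.toLp hh := FourierTransform.fourier_fourierInv_eq _
    rw [this]; exact MemLp.coeFn_toLp _
  have hsum : v = vl + vh := by
    have h1 : (𝓕 v : Lp ℂ 2 (volume : Measure (Esp N))) = 𝓕 (vl + vh) := by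
      have h2 : (𝓕 (vl + vh) : Lp ℂ 2 (volume : Measure (Esp N))) = 𝓕 vl + 𝓕 vh := 
        map_add (FourierTransform.fourierCLE ℂ (Lp ℂ 2 (volume : Measure (Esp N)))) vl vh
      rw [h2]
      apply Lp.ext
      filter_upwards [hvh, hvl, hvhh, Lp.coeFn_add (𝓕 vl : Lp ℂ 2 (volume : Measure (Esp N))) (𝓕 vh)] with ξ e1 e2 e3 e4
      rw [e4, Pi.add_apply, e1, e2, e3, hhl, hhh]
      by_cases h : ξ ∈ S <;> simp [h]
    have h4 := congrArg (fun w : Lp ℂ 2 (volume : Measure (Esp N)) => (𝓕⁻ w : Lp ℂ 2 (volume : Measure (Esp N)))) h1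
    simpa only [FourierTransform.fourierInv_fourier_eq] using h4
  have hlS : ∀ ξ, 2 < ‖ξ‖ → hl ξ = 0 := fun ξ hξ => by
    rw [hhl, indicator_of_notMem (by simpa [hS] using hξ)]
  have hhS : ∀ ξ, ‖ξ‖ ≤ 2 → hh ξ = 0 := fun ξ hξ => by
    rw [hhh, indicator_of_notMem (by simpa [hS] using hξ)]
  have hln : ∀ ξ, ‖hl ξ‖ ≤ 1 * ‖U.hat ξ‖ := fun ξ => by
    rw [one_mul]; exact norm_indicator_le_norm_self _ _
  have hhn : ∀ ξ, ‖hh ξ‖ ≤ 1 * ‖U.hat ξ‖ := fun ξ => by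
    rw [one_mul]; exact norm_indicator_le_norm_self _ _
  have hxm : AEStronglyMeasurable (fun ξ => (xs ξ : ℂ) * hl ξ) volume :=
    ((continuous_xs (N := N)).measurable.complex_ofReal.aestronglyMeasurable).mul hl2.1
  have hx1 : ∀ ξ, ‖(xs ξ : ℂ) * hl ξ‖ ≤ (4 * Real.pi ^ 2 * 3) * ‖hl ξ‖ := by
    intro ξ
    rcases le_or_gt ‖ξ‖ 2 with h | h
    · rw [norm_mul, Complex.norm_real]
      gcongr
      rw [xs, norm_mul, Real.norm_of_nonneg hpi.le, Real.norm_eq_abs]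
      gcongr
      rw [abs_le]
      constructor <;> nlinarith [norm_nonneg ξ]
    · rw [hlS ξ h]; simp
  have hx2 : ∀ ξ, ‖(xs ξ : ℂ) * hl ξ‖ ≤ (4 * Real.pi ^ 2 * C3) * ‖((‖ξ‖ ^ s - 1 : ℝ) : ℂ) * U.hat ξ‖ := by
    intro ξ
    rcases le_or_gt ‖ξ‖ 2 with h | h
    · rw [norm_mul, norm_mul, Complex.norm_real, Complex.norm_real, ← mul_assoc]
      refine mul_le_mul ?_ (by simpa using hln ξ) (norm_nonneg _) (by positivity)
      rw [xs, norm_mul, Real.norm_of_nonneg hpi.le, Real.norm_eq_abs, Real.norm_eq_abs, mul_assoc (4 * Real.pi ^ 2) C3]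
      exact mul_le_mul_of_nonneg_left (hsl _ (norm_nonneg _) h) hpi.le
    · rw [hlS ξ h]; simp; positivity
  have hxl : MemLp (fun ξ => (xs ξ : ℂ) * hl ξ) 2 volume := memLp_mono_c hxm hl2 hx1
  -- low part
  have low : eLpNorm vl (ENNReal.ofReal p) volume ≤ ENNReal.ofReal (C5 * (a ^ κ * d ^ (1 - κ))) := by
    have h1 := hlow vl hl hvl hlS hxl
    refine (eLpNorm_le_of hpp (by positivity) h1).trans (ENNReal.ofReal_le_ofReal ?_)
    set al := √(∫ ξ, ‖hl ξ‖ ^ 2) with hal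
    set dl := √(∫ ξ, ‖(xs ξ : ℂ) * hl ξ‖ ^ 2) with hdl
    have hal0 : 0 ≤ al := Real.sqrt_nonneg _
    have hdl0 : 0 ≤ dl := Real.sqrt_nonneg _
    have e1 : al ≤ a := by simpa using sqrt_int_mono zero_le_one hh2 hln
    have e2 : dl ≤ (4 * Real.pi ^ 2 * 3) * al := sqrt_int_mono (by positivity) hl2 hx1
    have e3 : dl ≤ (4 * Real.pi ^ 2 * C3) * d := sqrt_int_mono (by positivity) hD2 hx2
    rw [hC5, mul_assoc C1]
    refine mul_le_mul_of_nonneg_left ?_ hC1.le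
    calc al ^ (1 - g) * dl ^ g = al ^ (1 - g) * (dl ^ (g - (1 - κ)) * dl ^ (1 - κ)) := by
          rw [← Real.rpow_add_of_nonneg hdl0 (by linarith) (by linarith)]; congr 2; ring
      _ ≤ al ^ (1 - g) * (((4 * Real.pi ^ 2 * 3) * al) ^ (g - (1 - κ)) * ((4 * Real.pi ^ 2 * C3) * d) ^ (1 - κ)) := by
          refine mul_le_mul_of_nonneg_left (mul_le_mul (Real.rpow_le_rpow hdl0 e2 (by linarith)) (Real.rpow_le_rpow hdl0 e3 (by linarith)) (by positivity) (by positivity)) (by positivity)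
      _ = (4 * Real.pi ^ 2 * 3) ^ (g - (1 - κ)) * (4 * Real.pi ^ 2 * C3) ^ (1 - κ) * ((al ^ (1 - g) * al ^ (g - (1 - κ))) * d ^ (1 - κ)) := by
          rw [Real.mul_rpow (by positivity) hal0, Real.mul_rpow (by positivity) hd0]; ring
      _ = (4 * Real.pi ^ 2 * 3) ^ (g - (1 - κ)) * (4 * Real.pi ^ 2 * C3) ^ (1 - κ) * (al ^ κ * d ^ (1 - κ)) := by
          rw [← Real.rpow_add_of_nonneg hal0 (by linarith) (by linarith)]; congr 3; ring
      _ ≤ _ := by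
          refine mul_le_mul_of_nonneg_left (mul_le_mul_of_nonneg_right (Real.rpow_le_rpow hal0 e1 hκ0.le) (by positivity)) (by positivity)
  -- high part
  have hhs : ∀ ξ, ‖((‖ξ‖ ^ s : ℝ) : ℂ) * hh ξ‖ ≤ C4 * ‖((‖ξ‖ ^ s - 1 : ℝ) : ℂ) * U.hat ξ‖ := by
    intro ξ
    rcases le_or_gt ‖ξ‖ 2 with h | h
    · rw [hhS ξ h]; simp; positivity
    · rw [norm_mul, norm_mul, Complex.norm_real, Complex.norm_real, ← mul_assoc, Real.norm_of_nonneg (by positivity), Real.norm_eq_abs]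
      refine mul_le_mul (hsh _ h.le) (by simpa using hhn ξ) (norm_nonneg _) (by positivity)
  have hhsm : MemLp (fun ξ => ((‖ξ‖ ^ s : ℝ) : ℂ) * hh ξ) 2 volume :=
    memLp_mono_c (hsm.complex_ofReal.aestronglyMeasurable.mul hhh2.1) hD2 hhs
  have hpt : ∀ ξ : Esp N, 2 < ‖ξ‖ → ‖ξ‖ ^ σ ≤ (‖ξ‖ ^ s) ^ (1 - κ) := by
    intro ξ h
    rw [← Real.rpow_mul (norm_nonneg _)]
    exact Real.rpow_le_rpow_of_exponent_le (by linarith) hσs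
  have hhσ : ∀ ξ, ‖((‖ξ‖ ^ σ : ℝ) : ℂ) * hh ξ‖ ≤ 1 * ‖((‖ξ‖ ^ s : ℝ) : ℂ) * hh ξ‖ := by
    intro ξ
    rcases le_or_gt ‖ξ‖ 2 with h | h
    · rw [hhS ξ h]; simp
    · rw [norm_mul, norm_mul, Complex.norm_real, Complex.norm_real, one_mul, Real.norm_of_nonneg (by positivity), Real.norm_of_nonneg (by positivity)]
      gcongr
      · linarith
      · nlinarith
  have hσm : Measurable (fun ξ : Esp N => ‖ξ‖ ^ σ) := measurable_norm.pow_const _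
  have hhσm : MemLp (fun ξ => ((‖ξ‖ ^ σ : ℝ) : ℂ) * hh ξ) 2 volume :=
    memLp_mono_c (hσm.complex_ofReal.aestronglyMeasurable.mul hhh2.1) hhsm hhσ
  have hsq : ∀ {f : Esp N → ℂ}, MemLp f 2 volume → Integrable (fun x => ‖f x‖ ^ 2) := fun hf => by
    simpa using hf.integrable_norm_pow (by norm_num)
  have high : eLpNorm vh (ENNReal.ofReal p) volume ≤ ENNReal.ofReal (C6 * (a ^ κ * d ^ (1 - κ))) := by
    have hvσ : (fun ξ => ((‖ξ‖ ^ σ : ℝ) : ℂ) * (𝓕 vh : Lp ℂ 2 (volume : Measure (Esp N))) ξ) =ᵐ[volume] fun ξ => ((‖ξ‖ ^ σ : ℝ) : ℂ) * hh ξ := by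
      filter_upwards [hvhh] with ξ hξ; rw [hξ]
    have h1 := hhigh vh ((memLp_congr_ae hvσ).2 hhσm)
    have e1 : ∫ ξ, ‖((‖ξ‖ ^ σ : ℝ) : ℂ) * (𝓕 vh : Lp ℂ 2 (volume : Measure (Esp N))) ξ‖ ^ 2 = ∫ ξ, ‖((‖ξ‖ ^ σ : ℝ) : ℂ) * hh ξ‖ ^ 2 :=
      integral_congr_ae (by filter_upwards [hvhh] with ξ hξ; rw [hξ])
    rw [e1] at h1
    have e2 : C2 * √(∫ ξ, ‖((‖ξ‖ ^ σ : ℝ) : ℂ) * hh ξ‖ ^ 2) ^ p = (C2 ^ (1 / p) * √(∫ ξ, ‖((‖ξ‖ ^ σ : ℝ) : ℂ) * hh ξ‖ ^ 2)) ^ p := by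
      rw [Real.mul_rpow (by positivity) (by positivity), ← Real.rpow_mul hC2.le, one_div_mul_cancel hpp.ne', Real.rpow_one]
    rw [e2] at h1
    refine (eLpNorm_le_of hpp (by positivity) h1).trans (ENNReal.ofReal_le_ofReal ?_)
    have h3 := holder_real hκ0.le hκ1.le (hsq hhh2) (hsq hhsm) (hsq hhσm) (fun _ => by positivity) (fun _ => by positivity) (fun _ => by positivity) (by
      intro ξ
      rcases le_or_gt ‖ξ‖ 2 with h | h
      · rw [hhS ξ h]; simp; positivity
      · rw [norm_mul, norm_mul, Complex.norm_real, Complex.norm_real, Real.norm_of_nonneg (by positivity), Real.norm_of_nonneg (by positivity)]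
        have e5 : (‖hh ξ‖ ^ 2) ^ κ * ((‖ξ‖ ^ s * ‖hh ξ‖) ^ 2) ^ (1 - κ) = ((‖ξ‖ ^ s) ^ (1 - κ) * ‖hh ξ‖) ^ 2 := by
          have e6 : ‖hh ξ‖ ^ 2 = (‖hh ξ‖ ^ 2) ^ κ * (‖hh ξ‖ ^ 2) ^ (1 - κ) := by
            rw [← Real.rpow_add_of_nonneg (by positivity) hκ0.le (by linarith)]; simp
          have e7 : ((‖ξ‖ ^ s) ^ 2) ^ (1 - κ) = ((‖ξ‖ ^ s) ^ (1 - κ)) ^ 2 := (Real.rpow_pow_comm (by positivity) _ _).symm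
          rw [mul_pow, mul_pow, Real.mul_rpow (by positivity) (by positivity), e7]
          conv_rhs => rw [e6]
          ring
        rw [e5]
        have := hpt ξ h
        gcongr)
    have h4 : √(∫ ξ, ‖((‖ξ‖ ^ σ : ℝ) : ℂ) * hh ξ‖ ^ 2) ≤ √(∫ ξ, ‖hh ξ‖ ^ 2) ^ κ * √(∫ ξ, ‖((‖ξ‖ ^ s : ℝ) : ℂ) * hh ξ‖ ^ 2) ^ (1 - κ) := by
      refine (Real.sqrt_le_sqrt h3).trans (le_of_eq ?_)
      rw [Real.sqrt_mul (by positivity), Real.sqrt_eq_rpow, Real.sqrt_eq_rpow, Real.sqrt_eq_rpow, Real.sqrt_eq_rpow,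
        ← Real.rpow_mul (by positivity), ← Real.rpow_mul (by positivity), ← Real.rpow_mul (by positivity), ← Real.rpow_mul (by positivity), mul_comm κ, mul_comm (1 - κ)]
    have e3 : √(∫ ξ, ‖hh ξ‖ ^ 2) ≤ a := by simpa using sqrt_int_mono zero_le_one hh2 hhn
    have e4 : √(∫ ξ, ‖((‖ξ‖ ^ s : ℝ) : ℂ) * hh ξ‖ ^ 2) ≤ C4 * d := sqrt_int_mono hC4.le hD2 hhs
    have h5 : √(∫ ξ, ‖((‖ξ‖ ^ σ : ℝ) : ℂ) * hh ξ‖ ^ 2) ≤ a ^ κ * (C4 * d) ^ (1 - κ) :=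
      h4.trans (mul_le_mul (Real.rpow_le_rpow (by positivity) e3 hκ0.le) (Real.rpow_le_rpow (by positivity) e4 (by linarith)) (by positivity) (by positivity))
    rw [Real.mul_rpow hC4.le hd0] at h5
    rw [hC6, mul_assoc]
    refine (mul_le_mul_of_nonneg_left h5 (by positivity)).trans (le_of_eq (by ring))
  have tot : eLpNorm U.u (ENNReal.ofReal p) volume ≤ ENNReal.ofReal ((C5 + C6) * (a ^ κ * d ^ (1 - κ))) := by
    have h1 : U.u =ᵐ[volume] ((vl : Esp N → ℂ) + (vh : Esp N → ℂ)) := by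
      have h2 := U.u_mem.coeFn_toLp
      rw [← hv, hsum] at h2
      exact h2.symm.trans (Lp.coeFn_add vl vh)
    rw [eLpNorm_congr_ae h1, add_mul, ENNReal.ofReal_add (by positivity) (by positivity)]
    refine (eLpNorm_add_le (Lp.aestronglyMeasurable _) (Lp.aestronglyMeasurable _) ?_).trans (add_le_add low high)
    rw [← ENNReal.ofReal_one]; exact ENNReal.ofReal_le_ofReal (by linarith)
  unfold Qquot
  apply ENNReal.div_le_of_le_mul
  rw [haE, hdE, ENNReal.ofReal_rpow_of_nonneg ha0 hκ0.le, ENNReal.ofReal_rpow_of_nonneg hd0 (by linarith), ← ENNReal.ofReal_mul (by positivity), ← ENNReal.ofReal_mul (by positivity)]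
  exact tot

end PartO

section PartP
open Set
open scoped FourierTransform
variable {N : ℕ}

lemma exp_small {c C a b : ℝ} (hc : 0 < c) (h : ∀ᶠ δ : ℝ in 𝓝[>] 0, c * δ ^ a ≤ C * δ ^ b) : b ≤ a := by
  by_contra hab
  push Not at hab
  have h1 : Tendsto (fun δ : ℝ => C * δ ^ (b - a)) (𝓝[>] 0) (𝓝 (C * 0)) := by
    refine Tendsto.const_mul _ ?_
    have := (Real.continuousAt_rpow_const 0 (b - a) (Or.inr (by linarith))).tendsto
    rw [Real.zero_rpow (by linarith)] at this
    exact this.mono_left nhdsWithin_le_nhds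
  have h2 : ∀ᶠ δ : ℝ in 𝓝[>] 0, c ≤ C * δ ^ (b - a) := by
    filter_upwards [h, self_mem_nhdsWithin] with δ hδ h0
    have h0 : 0 < δ := h0
    have h3 : 0 < δ ^ a := Real.rpow_pos_of_pos h0 _
    have h4 : δ ^ b = δ ^ (b - a) * δ ^ a := by rw [← Real.rpow_add h0]; congr 1; ring
    rw [h4, ← mul_assoc] at hδ
    exact le_of_mul_le_mul_right hδ h3
  have := ge_of_tendsto h1 h2
  simp at this
  linarith

lemma ind_int {S : Set (Esp N)} (hS : MeasurableSet S) (hf : volume S ≠ ⊤) :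
    Integrable (S.indicator (fun _ => (1 : ℂ))) volume :=
  (integrable_indicator_iff hS).2 (integrableOn_const hf)

lemma ind_lower {S : Set (Esp N)} (hS : MeasurableSet S) (hf : volume S ≠ ⊤) (ξ₀ x : Esp N)
    (h : ∀ ξ ∈ S, |2 * Real.pi * inner ℝ x (ξ - ξ₀)| ≤ 1) :
    Real.cos 1 * (volume S).toReal ≤ ‖𝓕⁻ (S.indicator (fun _ => (1 : ℂ))) x‖ := by
  have e1 : 𝓕⁻ (S.indicator (fun _ => (1 : ℂ))) x = ∫ ξ in S, Complex.exp (((2 * Real.pi * inner ℝ ξ x : ℝ) : ℂ) * Complex.I) := by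
    rw [Real.fourierInv_eq', ← integral_indicator hS]
    congr 1; ext ξ
    by_cases hξ : ξ ∈ S <;> simp [hξ]
  set w : ℂ := Complex.exp (((-(2 * Real.pi * inner ℝ ξ₀ x) : ℝ) : ℂ) * Complex.I)
  have hw : ‖w‖ = 1 := Complex.norm_exp_ofReal_mul_I _
  have e2 : w * 𝓕⁻ (S.indicator (fun _ => (1 : ℂ))) x = ∫ ξ in S, Complex.exp (((2 * Real.pi * inner ℝ x (ξ - ξ₀) : ℝ) : ℂ) * Complex.I) := by
    rw [e1, ← integral_const_mul]
    congr 1; ext ξ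
    rw [← Complex.exp_add]
    congr 1
    rw [inner_sub_right, real_inner_comm x ξ, real_inner_comm x ξ₀]
    push_cast; ring
  have hintg : IntegrableOn (fun ξ => Complex.exp (((2 * Real.pi * inner ℝ x (ξ - ξ₀) : ℝ) : ℂ) * Complex.I)) S volume := by
    refine Integrable.mono' (g := fun _ => (1 : ℝ)) (integrableOn_const hf) ?_ (ae_of_all _ fun ξ => (Complex.norm_exp_ofReal_mul_I _).le)
    exact (by fun_prop : Continuous (fun ξ : Esp N => Complex.exp (((2 * Real.pi * inner ℝ x (ξ - ξ₀) : ℝ) : ℂ) * Complex.I))).aestronglyMeasurable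
  calc Real.cos 1 * (volume S).toReal = ∫ ξ in S, Real.cos 1 := by
        rw [setIntegral_const, smul_eq_mul, mul_comm]; rfl
    _ ≤ ∫ ξ in S, (Complex.exp (((2 * Real.pi * inner ℝ x (ξ - ξ₀) : ℝ) : ℂ) * Complex.I)).re := by
        refine setIntegral_mono_on (integrableOn_const hf) hintg.re hS fun ξ hξ => ?_
        rw [Complex.exp_ofReal_mul_I_re]
        have := h ξ hξ
        rw [← Real.cos_abs (2 * _ * _)]
        exact Real.cos_le_cos_of_nonneg_of_le_pi (abs_nonneg _) (by linarith [Real.pi_gt_three]) this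
    _ = (∫ ξ in S, Complex.exp (((2 * Real.pi * inner ℝ x (ξ - ξ₀) : ℝ) : ℂ) * Complex.I)).re := by
        have := integral_re (𝕜 := ℂ) hintg
        simpa using this
    _ ≤ ‖w * 𝓕⁻ (S.indicator (fun _ => (1 : ℂ))) x‖ := by rw [e2]; exact Complex.re_le_norm _
    _ = _ := by rw [norm_mul, hw, one_mul]

/-- The test element with Fourier transform the indicator of `S`. -/
def testHs (s : ℝ) (S : Set (Esp N)) (hS : MeasurableSet S) (R : ℝ) (hR : S ⊆ Metric.closedBall 0 R) : Hs N s where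
  u := 𝓕⁻ (S.indicator (fun _ => (1 : ℂ)))
  hat := S.indicator (fun _ => (1 : ℂ))
  u_mem := memLp_fourierInv (ind_int hS ((measure_mono hR).trans_lt measure_closedBall_lt_top).ne)
    (memLp_indicator_const 2 hS 1 (Or.inr ((measure_mono hR).trans_lt measure_closedBall_lt_top).ne))
  hat_mem := by
    have hf : volume S ≠ ⊤ := ((measure_mono hR).trans_lt measure_closedBall_lt_top).ne
    have hc : Continuous (fun ξ : Esp N => (1 + ‖ξ‖ ^ 2) ^ (s / 2)) :=
      Continuous.rpow_const (by fun_prop) (fun ξ => Or.inl (by positivity))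
    obtain ⟨K, hK⟩ := (isCompact_closedBall (0 : Esp N) R).exists_bound_of_continuousOn hc.continuousOn
    refine (memLp_indicator_const 2 hS (max K 0 : ℝ) (Or.inr hf) : MemLp _ _ volume).of_le (hc.measurable.complex_ofReal.mul (measurable_const.indicator hS)).aestronglyMeasurable (ae_of_all _ fun ξ => ?_)
    by_cases hξ : ξ ∈ S
    · simp only [indicator_of_mem hξ, mul_one, Complex.norm_real]
      exact (hK ξ (hR hξ)).trans ((le_max_left _ _).trans (le_abs_self _))
    · simp [hξ]
  fourier_spec := fun φ => inv_spec (ind_int hS ((measure_mono hR).trans_lt measure_closedBall_lt_top).ne) φ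

lemma testHs_l2 (s : ℝ) (S : Set (Esp N)) (hS : MeasurableSet S) (R : ℝ) (hR : S ⊆ Metric.closedBall 0 R) :
    eLpNorm (testHs s S hS R hR).u 2 volume = volume S ^ (1 / 2 : ℝ) := by
  set U := testHs s S hS R hR
  have hf : volume S ≠ ⊤ := ((measure_mono hR).trans_lt measure_closedBall_lt_top).ne
  have hh2 : MemLp U.hat 2 volume := memLp_indicator_const 2 hS 1 (Or.inr hf)
  have h := fourier_ae_eq_of_spec U.u_mem (hh2.locallyIntegrable (by norm_num)) U.fourier_spec
  rw [← eLpNorm_congr_ae U.u_mem.coeFn_toLp, ← eLpNorm_fourier_Lp, eLpNorm_congr_ae h]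
  change eLpNorm (S.indicator (fun _ => (1 : ℂ))) 2 volume = _
  rw [eLpNorm_indicator_const hS (by norm_num) (by norm_num)]
  simp

lemma necess_core {p κ s : ℝ} (hp : 2 < p) (hκ0 : 0 < κ) (hκ1 : κ < 1) {M : ENNReal} (hMt : M ≠ ⊤)
    (hM : ∀ U : Hs N s, U.Nontriv → Qquot p κ U ≤ M) {S X : Set (Esp N)} (hS : MeasurableSet S) (hX : MeasurableSet X)
    {R : ℝ} (hR : S ⊆ Metric.closedBall 0 R) (ξ₀ : Esp N)
    (h : ∀ ξ ∈ S, ∀ x ∈ X, |2 * Real.pi * inner ℝ x (ξ - ξ₀)| ≤ 1) {D : ℝ} (hD0 : 0 ≤ D)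
    (hD : ∀ ξ ∈ S, |‖ξ‖ ^ s - 1| ≤ D) {vS vX : ℝ} (hvS0 : 0 < vS) (hvX0 : 0 ≤ vX) (hvS : ENNReal.ofReal vS ≤ volume S)
    (hvX : ENNReal.ofReal vX ≤ volume X) :
    Real.cos 1 * vS ^ (1 / 2 : ℝ) * vX ^ (1 / p) ≤ M.toReal * D ^ (1 - κ) := by
  have hf : volume S ≠ ⊤ := ((measure_mono hR).trans_lt measure_closedBall_lt_top).ne
  have hpos : volume S ≠ 0 := ((ENNReal.ofReal_pos.2 hvS0).trans_le hvS).ne'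
  have hcos : 0 < Real.cos 1 := Real.cos_one_pos
  have hpp : 0 < p := by linarith
  set U := testHs s S hS R hR with hU
  have h2 := testHs_l2 s S hS R hR
  rw [← hU] at h2
  have hnt : U.Nontriv := by
    intro h0
    rw [eLpNorm_congr_ae h0, eLpNorm_zero] at h2
    have := h2.symm
    rw [ENNReal.rpow_eq_zero_iff] at this
    rcases this with h | h
    · exact hpos h.1
    · norm_num at h
  have hd : dNorm U ≤ ENNReal.ofReal D * volume S ^ (1 / 2 : ℝ) := by
    have : eLpNorm (S.indicator (fun _ => (D : ℝ))) 2 volume = ENNReal.ofReal D * volume S ^ (1 / 2 : ℝ) := by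
      rw [eLpNorm_indicator_const hS (by norm_num) (by norm_num), ← ofReal_norm, Real.norm_of_nonneg hD0]; simp
    rw [← this]
    refine eLpNorm_mono fun ξ => ?_
    change ‖((‖ξ‖ ^ s - 1 : ℝ) : ℂ) * S.indicator (fun _ => (1 : ℂ)) ξ‖ ≤ _
    by_cases hξ : ξ ∈ S
    · simp only [indicator_of_mem hξ, mul_one, Complex.norm_real, Real.norm_eq_abs]
      exact (hD ξ hξ).trans (le_abs_self _)
    · simp [hξ]
  have hlow : ENNReal.ofReal (Real.cos 1) * volume S * volume X ^ (1 / p) ≤ eLpNorm U.u (ENNReal.ofReal p) volume := by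
    have : eLpNorm (X.indicator (fun _ => Real.cos 1 * (volume S).toReal)) (ENNReal.ofReal p) volume = ENNReal.ofReal (Real.cos 1) * volume S * volume X ^ (1 / p) := by
      rw [eLpNorm_indicator_const hX (by simpa using hpp) (by simp), ← ofReal_norm, Real.norm_of_nonneg (by positivity), ENNReal.ofReal_mul hcos.le, ENNReal.ofReal_toReal hf, ENNReal.toReal_ofReal hpp.le]
    rw [← this]
    refine eLpNorm_mono fun x => ?_
    by_cases hx : x ∈ X
    · rw [indicator_of_mem hx, Real.norm_of_nonneg (by positivity)]
      exact ind_lower hS hf ξ₀ x fun ξ hξ => h ξ hξ x hx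
    · simp [hx]
  have hB : eLpNorm U.u 2 volume ^ κ * dNorm U ^ (1 - κ) ≤ ENNReal.ofReal D ^ (1 - κ) * volume S ^ (1 / 2 : ℝ) := by
    have hhalf0 : volume S ^ (1 / 2 : ℝ) ≠ 0 := by
      rw [Ne, ENNReal.rpow_eq_zero_iff]; simp [hpos]
    have hhalft : volume S ^ (1 / 2 : ℝ) ≠ ⊤ := ENNReal.rpow_ne_top_of_nonneg (by norm_num) hf
    rw [h2]
    calc (volume S ^ (1 / 2 : ℝ)) ^ κ * dNorm U ^ (1 - κ) ≤ (volume S ^ (1 / 2 : ℝ)) ^ κ * (ENNReal.ofReal D * volume S ^ (1 / 2 : ℝ)) ^ (1 - κ) :=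
          mul_le_mul_right (ENNReal.rpow_le_rpow hd (by linarith)) _
      _ = ENNReal.ofReal D ^ (1 - κ) * ((volume S ^ (1 / 2 : ℝ)) ^ κ * (volume S ^ (1 / 2 : ℝ)) ^ (1 - κ)) := by
          rw [ENNReal.mul_rpow_of_nonneg _ _ (by linarith)]; ring
      _ = _ := by rw [← ENNReal.rpow_add _ _ hhalf0 hhalft]; simp
  have hBt : ENNReal.ofReal D ^ (1 - κ) * volume S ^ (1 / 2 : ℝ) ≠ ⊤ :=
    ENNReal.mul_ne_top (ENNReal.rpow_ne_top_of_nonneg (by linarith) ENNReal.ofReal_ne_top) (ENNReal.rpow_ne_top_of_nonneg (by norm_num) hf)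
  have hQ := hM U hnt
  unfold Qquot at hQ
  rw [ENNReal.div_le_iff_le_mul (Or.inr hMt) (Or.inl (ne_top_of_le_ne_top hBt hB))] at hQ
  have h3 : ENNReal.ofReal (Real.cos 1) * volume S * volume X ^ (1 / p) ≤ M * (ENNReal.ofReal D ^ (1 - κ) * volume S ^ (1 / 2 : ℝ)) :=
    hlow.trans (hQ.trans (mul_le_mul_right hB _))
  have hXt : volume X ^ (1 / p) ≠ ⊤ := by
    intro htop
    rw [htop, ENNReal.mul_top (mul_ne_zero (by simpa using hcos) hpos), top_le_iff] at h3
    exact ENNReal.mul_ne_top hMt hBt h3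
  have hXt' : volume X ≠ ⊤ := by
    intro h0; rw [h0, ENNReal.top_rpow_of_pos (by positivity)] at hXt; exact hXt rfl
  have h4 := ENNReal.toReal_mono (ENNReal.mul_ne_top hMt hBt) h3
  simp only [ENNReal.toReal_mul, ← ENNReal.toReal_rpow, ENNReal.toReal_ofReal hcos.le, ENNReal.toReal_ofReal hD0] at h4
  set t := (volume S).toReal with ht
  have ht1 : vS ≤ t := (ENNReal.ofReal_le_iff_le_toReal hf).1 hvS
  have hx1 : vX ≤ (volume X).toReal := (ENNReal.ofReal_le_iff_le_toReal hXt').1 hvX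
  have ht0 : 0 < t := hvS0.trans_le ht1
  have e1 : t = t ^ (1 / 2 : ℝ) * t ^ (1 / 2 : ℝ) := by rw [← Real.rpow_add ht0]; norm_num
  have h5 : Real.cos 1 * t ^ (1 / 2 : ℝ) * (volume X).toReal ^ (1 / p) ≤ M.toReal * D ^ (1 - κ) := by
    refine le_of_mul_le_mul_right ?_ (Real.rpow_pos_of_pos ht0 (1 / 2))
    calc _ = Real.cos 1 * (t ^ (1 / 2 : ℝ) * t ^ (1 / 2 : ℝ)) * (volume X).toReal ^ (1 / p) := by ring
      _ = Real.cos 1 * t * (volume X).toReal ^ (1 / p) := by rw [← e1]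
      _ ≤ _ := h4
      _ = _ := by ring
  refine le_trans ?_ h5
  have h6 := Real.rpow_le_rpow hvS0.le ht1 (by norm_num : (0 : ℝ) ≤ 1 / 2)
  have h7 := Real.rpow_le_rpow hvX0 hx1 (by positivity : (0 : ℝ) ≤ 1 / p)
  exact mul_le_mul (mul_le_mul_of_nonneg_left h6 hcos.le) h7 (by positivity) (by positivity)

end PartP

section PartQ
open Set
open scoped FourierTransform
variable {N : ℕ}

/-- Coordinate box. -/
def cbox (c : Esp N) (b : Fin N → ℝ) : Set (Esp N) := {ξ | ∀ i, ξ i ∈ Ioo (c i - b i) (c i + b i)}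

lemma cbox_eq (c : Esp N) (b : Fin N → ℝ) :
    cbox c b = (WithLp.ofLp : Esp N → (Fin N → ℝ)) ⁻¹' (Set.univ.pi fun i => Ioo (c i - b i) (c i + b i)) := by
  ext ξ; simp [cbox]

lemma cbox_meas (c : Esp N) (b : Fin N → ℝ) : MeasurableSet (cbox c b) := by
  rw [cbox_eq]
  exact (PiLp.volume_preserving_ofLp (Fin N)).measurable (MeasurableSet.univ_pi fun i => measurableSet_Ioo)

lemma cbox_vol (c : Esp N) (b : Fin N → ℝ) (hb : ∀ i, 0 < b i) :
    ENNReal.ofReal (∏ i, b i) ≤ volume (cbox c b) := by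
  rw [cbox_eq, (PiLp.volume_preserving_ofLp (Fin N)).measure_preimage
    (MeasurableSet.univ_pi fun i => measurableSet_Ioo).nullMeasurableSet, Real.volume_pi_Ioo,
    ENNReal.ofReal_prod_of_nonneg fun i _ => (hb i).le]
  refine Finset.prod_le_prod' fun i _ => ENNReal.ofReal_le_ofReal ?_
  linarith [hb i]

lemma cbox_bdd (c : Esp N) (b : Fin N → ℝ) : ∃ R, cbox c b ⊆ Metric.closedBall 0 R := by
  refine ⟨∑ i, (|c i| + |b i|), fun ξ hξ => ?_⟩
  rw [mem_closedBall_zero_iff, EuclideanSpace.norm_eq, Real.sqrt_le_left (by positivity)]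
  have h1 : ∀ i, ‖ξ i‖ ≤ |c i| + |b i| := fun i => by
    have := hξ i
    rw [mem_Ioo] at this
    rw [Real.norm_eq_abs, abs_le]
    constructor <;> linarith [le_abs_self (c i), neg_abs_le (c i), le_abs_self (b i)]
  calc ∑ i, ‖ξ i‖ ^ 2 ≤ (∑ i, ‖ξ i‖) ^ 2 := Finset.sum_sq_le_sq_sum_of_nonneg fun i _ => norm_nonneg _
    _ ≤ _ := by gcongr with i; exact h1 i

lemma box_necess {p κ s : ℝ} (hN : 2 ≤ N) (hp : 2 < p) (hκ0 : 0 < κ) (hκ1 : κ < 1) {M : ENNReal} (hMt : M ≠ ⊤)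
    (hM : ∀ U : Hs N s, U.Nontriv → Qquot p κ U ≤ M) :
    ∃ c₀ : ℝ, 0 < c₀ ∧ ∀ (c : Esp N) (b : Fin N → ℝ) (D : ℝ), (∀ i, 0 < b i) → 0 ≤ D →
      (∀ ξ ∈ cbox c b, |‖ξ‖ ^ s - 1| ≤ D) → c₀ * (∏ i, b i) ^ (1 / 2 - 1 / p) ≤ M.toReal * D ^ (1 - κ) := by
  have hN0 : (0 : ℝ) < N := by positivity
  have hpi := Real.pi_pos
  set a : ℝ := 1 / (2 * Real.pi * N) with ha
  have ha0 : 0 < a := by positivity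
  refine ⟨Real.cos 1 * (a ^ N) ^ (1 / p), by have := Real.cos_one_pos; positivity, fun c b D hb hD0 hD => ?_⟩
  obtain ⟨R, hR⟩ := cbox_bdd c b
  have hP : 0 < ∏ i, b i := Finset.prod_pos fun i _ => hb i
  have hprod : ∏ i, (a / b i) = a ^ N * (∏ i, b i)⁻¹ := by
    rw [Finset.prod_div_distrib]; simp [div_eq_mul_inv]
  have hinner : ∀ ξ ∈ cbox c b, ∀ x ∈ cbox (0 : Esp N) (fun i => a / b i), |2 * Real.pi * inner ℝ x (ξ - c)| ≤ 1 := by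
    intro ξ hξ x hx
    have h1 : |inner ℝ x (ξ - c)| ≤ N * a := by
      rw [PiLp.inner_apply]
      refine (Finset.abs_sum_le_sum_abs _ _).trans ?_
      calc ∑ i, |inner ℝ (x i) ((ξ - c) i)| ≤ ∑ i : Fin N, a := by
            refine Finset.sum_le_sum fun i _ => ?_
            have h2 := hξ i
            have h3 := hx i
            simp only [mem_Ioo, PiLp.zero_apply] at h2 h3
            have h4 : |x i| ≤ a / b i := by rw [abs_le]; constructor <;> linarith
            have h5 : |(ξ - c) i| ≤ b i := by rw [PiLp.sub_apply, abs_le]; constructor <;> linarith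
            have h6 : inner ℝ (x i) ((ξ - c) i) = (ξ - c) i * x i := by simp [inner]
            rw [h6, abs_mul]
            calc _ ≤ b i * (a / b i) := mul_le_mul h5 h4 (abs_nonneg _) (hb i).le
              _ = a := by field_simp [(hb i).ne']
        _ = N * a := by simp
    rw [abs_mul, abs_of_pos (by positivity)]
    calc _ ≤ 2 * Real.pi * (N * a) := by gcongr
      _ = 1 := by rw [ha]; field_simp
  have h := necess_core hp hκ0 hκ1 hMt hM (cbox_meas c b) (cbox_meas 0 fun i => a / b i) hR c hinner hD0 hD hP
    (Finset.prod_nonneg fun i _ => (div_pos ha0 (hb i)).le) (cbox_vol c b hb) (cbox_vol 0 _ fun i => div_pos ha0 (hb i))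
  refine le_trans (le_of_eq ?_) h
  rw [hprod, Real.mul_rpow (by positivity) (by positivity), Real.inv_rpow hP.le, Real.rpow_sub hP]
  field_simp

/-- Large frequency condition. -/
lemma necess_iii {p κ s : ℝ} (hN : 2 ≤ N) (hs : 0 < s) (hp : 2 < p) (hκ0 : 0 < κ) (hκ1 : κ < 1) {M : ENNReal} (hMt : M ≠ ⊤)
    (hM : ∀ U : Hs N s, U.Nontriv → Qquot p κ U ≤ M) : ((N : ℝ) / s) * (1 / 2 - 1 / p) ≤ 1 - κ := by
  obtain ⟨c₀, hc₀, H⟩ := box_necess hN hp hκ0 hκ1 hMt hM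
  have hN0 : (0 : ℝ) < N := by positivity
  have key : -(s * (1 - κ)) ≤ -(N * (1 / 2 - 1 / p)) := by
    apply exp_small (C := M.toReal * ((N : ℝ) ^ s + 1) ^ (1 - κ)) hc₀
    filter_upwards [Ioo_mem_nhdsGT (show (0 : ℝ) < 1 by norm_num)] with δ hδ
    obtain ⟨h0, h1⟩ := hδ
    have hδs : 1 ≤ δ ^ (-s) := Real.one_le_rpow_of_pos_of_le_one_of_nonpos h0 h1.le (by linarith)
    have h := H 0 (fun _ => δ⁻¹) (((N : ℝ) ^ s + 1) * δ ^ (-s)) (fun _ => by positivity) (by positivity) (by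
      intro ξ hξ
      have h2 : ‖ξ‖ ≤ N * δ⁻¹ := by
        rw [EuclideanSpace.norm_eq, Real.sqrt_le_left (by positivity)]
        calc ∑ i, ‖ξ i‖ ^ 2 ≤ (∑ i, ‖ξ i‖) ^ 2 := Finset.sum_sq_le_sq_sum_of_nonneg fun i _ => norm_nonneg _
          _ ≤ (∑ i : Fin N, δ⁻¹) ^ 2 := by
              gcongr with i
              have := hξ i
              simp only [mem_Ioo, PiLp.zero_apply] at this
              rw [Real.norm_eq_abs, abs_le]; constructor <;> linarith
          _ = _ := by simp
      have h3 : ‖ξ‖ ^ s ≤ (N : ℝ) ^ s * δ ^ (-s) := by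
        refine (Real.rpow_le_rpow (norm_nonneg _) h2 hs.le).trans (le_of_eq ?_)
        rw [Real.mul_rpow hN0.le (by positivity), Real.inv_rpow h0.le, Real.rpow_neg h0.le]
      have h4 : 0 ≤ ‖ξ‖ ^ s := by positivity
      have h5 : 0 ≤ (N : ℝ) ^ s * δ ^ (-s) := by positivity
      rw [abs_le]; constructor <;> linarith)
    convert h using 1
    · congr 1
      simp only [Finset.prod_const, Finset.card_univ, Fintype.card_fin]
      rw [← Real.rpow_natCast, ← Real.rpow_mul (by positivity), Real.inv_rpow h0.le, Real.rpow_neg h0.le]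
    · rw [Real.mul_rpow (by positivity) (by positivity), ← Real.rpow_mul h0.le, mul_assoc]
      congr 3; ring
  rw [div_mul_eq_mul_div, div_le_iff₀ hs]
  linarith

lemma symb_near (a : ℝ) : ∃ C ε : ℝ, 0 < C ∧ 0 < ε ∧ ∀ t : ℝ, |t - 1| < ε → |t ^ a - 1| ≤ C * |t - 1| := by
  have h := (Real.hasDerivAt_rpow_const (x := 1) (p := a) (Or.inl one_ne_zero)).isBigO_sub
  obtain ⟨C, hC, h⟩ := h.exists_pos
  rw [Asymptotics.IsBigOWith, Metric.eventually_nhds_iff] at h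
  obtain ⟨ε, hε, h⟩ := h
  refine ⟨C, ε, hC, hε, fun t ht => ?_⟩
  simpa [Real.norm_eq_abs] using h (y := t) (by rwa [Real.dist_eq])

/-- Knapp condition. -/
lemma necess_ii {p κ s : ℝ} (hN : 2 ≤ N) (hp : 2 < p) (hκ0 : 0 < κ) (hκ1 : κ < 1) {M : ENNReal} (hMt : M ≠ ⊤)
    (hM : ∀ U : Hs N s, U.Nontriv → Qquot p κ U ≤ M) : 1 - κ ≤ (((N : ℝ) + 1) / 2) * (1 / 2 - 1 / p) := by
  obtain ⟨c₀, hc₀, H⟩ := box_necess hN hp hκ0 hκ1 hMt hM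
  obtain ⟨C, ε, hC, hε, hsy⟩ := symb_near (s / 2)
  have hN0 : (0 : ℝ) < N := by positivity
  let i₀ : Fin N := ⟨0, by omega⟩
  apply exp_small (C := M.toReal * (C * (N + 3)) ^ (1 - κ)) hc₀
  filter_upwards [Ioo_mem_nhdsGT (show (0 : ℝ) < min 1 (ε / (N + 3)) by positivity)] with δ hδ
  obtain ⟨h0, h1⟩ := hδ
  have hδ1 : δ < 1 := h1.trans_le (min_le_left _ _)
  have hδ2 : (N + 3) * δ < ε := by
    have := h1.trans_le (min_le_right _ _)
    rw [lt_div_iff₀ (by positivity)] at this; linarith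
  let b : Fin N → ℝ := fun i => if i = i₀ then δ else √δ
  have hb : ∀ i, 0 < b i := fun i => by
    simp only [b]; split_ifs <;> positivity
  let c : Esp N := EuclideanSpace.single i₀ 1
  have h := H c b ((C * (N + 3)) * δ) hb (by positivity) (by
    intro ξ hξ
    have e1 : ‖ξ‖ ^ 2 - 1 = ∑ i, (ξ i ^ 2 - if i = i₀ then 1 else 0) := by
      rw [EuclideanSpace.norm_sq_eq, Finset.sum_sub_distrib]; simp
    have e2 : |‖ξ‖ ^ 2 - 1| ≤ (N + 3) * δ := by
      rw [e1]
      refine (Finset.abs_sum_le_sum_abs _ _).trans ?_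
      calc ∑ i, |ξ i ^ 2 - if i = i₀ then 1 else 0| ≤ ∑ i, (δ + if i = i₀ then 3 * δ else 0) := by
            refine Finset.sum_le_sum fun i _ => ?_
            have h2 := hξ i
            by_cases hi : i = i₀
            · simp only [hi, c, b, mem_Ioo, EuclideanSpace.single_apply, if_true] at h2 ⊢
              rw [abs_le]; constructor <;> nlinarith
            · simp only [hi, c, b, mem_Ioo, EuclideanSpace.single_apply, if_false] at h2 ⊢
              have h3 : |ξ i| ≤ √δ := by rw [abs_le]; constructor <;> linarith
              have h4 : ξ i ^ 2 ≤ δ := by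
                rw [← sq_abs, ← Real.sq_sqrt h0.le]; gcongr
              rw [sub_zero, abs_of_nonneg (sq_nonneg _)]; linarith
        _ = (N + 3) * δ := by rw [Finset.sum_add_distrib]; simp; ring
    have e3 : ‖ξ‖ ^ s = (‖ξ‖ ^ 2) ^ (s / 2) := by
      rw [← Real.rpow_natCast, ← Real.rpow_mul (norm_nonneg _)]; congr 1; push_cast; ring
    rw [e3]
    refine (hsy _ (e2.trans_lt hδ2)).trans ?_
    rw [mul_assoc]; gcongr)
  convert h using 1
  · congr 1
    have e4 : ∏ i, b i = δ ^ (((N : ℝ) + 1) / 2) := by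
      have : ∀ i, b i = √δ * if i = i₀ then √δ else 1 := fun i => by
        simp only [b]; split_ifs <;> simp [Real.mul_self_sqrt h0.le]
      rw [Finset.prod_congr rfl fun i _ => this i, Finset.prod_mul_distrib]
      simp only [Finset.prod_const, Finset.card_univ, Fintype.card_fin, Finset.prod_ite_eq', Finset.mem_univ, if_true]
      rw [← pow_succ, Real.sqrt_eq_rpow, ← Real.rpow_natCast, ← Real.rpow_mul h0.le]
      congr 1; push_cast; ring
    rw [e4, ← Real.rpow_mul h0.le]
  · rw [Real.mul_rpow (by positivity) h0.le, mul_assoc]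

/-- Shell condition. -/
lemma necess_i {p κ s : ℝ} (hN : 2 ≤ N) (hp : 2 < p) (hκ0 : 0 < κ) (hκ1 : κ < 1) {M : ENNReal} (hMt : M ≠ ⊤)
    (hM : ∀ U : Hs N s, U.Nontriv → Qquot p κ U ≤ M) : 1 / 2 ≤ κ := by
  obtain ⟨C, ε, hC, hε, hsy⟩ := symb_near s
  have : Nonempty (Fin N) := ⟨⟨0, by omega⟩⟩
  have : Nontrivial (Esp N) := inferInstance
  set ω : ℝ := (volume (Metric.ball (0 : Esp N) 1)).toReal with hω
  have hωt : volume (Metric.ball (0 : Esp N) 1) ≠ ⊤ := measure_ball_lt_top.ne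
  have hω0 : 0 < ω := ENNReal.toReal_pos (Metric.measure_ball_pos volume _ one_pos).ne' hωt
  have hωE : volume (Metric.ball (0 : Esp N) 1) = ENNReal.ofReal ω := (ENNReal.ofReal_toReal hωt).symm
  have hpi := Real.pi_pos
  set r : ℝ := 1 / (4 * Real.pi) with hr
  have hr0 : 0 < r := by positivity
  have hcos := Real.cos_one_pos
  have key : 1 - κ ≤ 1 / 2 := by
    apply exp_small (c := Real.cos 1 * ω ^ (1 / 2 : ℝ) * (r ^ N * ω) ^ (1 / p)) (C := M.toReal * C ^ (1 - κ)) (by positivity)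
    filter_upwards [Ioo_mem_nhdsGT (show (0 : ℝ) < min 1 ε by positivity)] with δ hδ
    obtain ⟨h0, h1⟩ := hδ
    have hδ1 : δ < 1 := h1.trans_le (min_le_left _ _)
    have hδ2 : δ < ε := h1.trans_le (min_le_right _ _)
    have hvol : ∀ ρ : ℝ, 0 ≤ ρ → volume (Metric.ball (0 : Esp N) ρ) = ENNReal.ofReal (ρ ^ N * ω) := fun ρ hρ => by
      rw [Measure.addHaar_ball _ _ hρ, hωE, ← ENNReal.ofReal_mul (by positivity)]; simp
    have hvolc : volume (Metric.closedBall (0 : Esp N) 1) = ENNReal.ofReal ω := by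
      rw [Measure.addHaar_closedBall _ _ zero_le_one, hωE]; simp
    have h := necess_core (S := Metric.ball (0 : Esp N) (1 + δ) \ Metric.closedBall 0 1) (X := Metric.ball (0 : Esp N) r) (R := 2) (D := C * δ)
      (vS := ω * δ) (vX := r ^ N * ω) hp hκ0 hκ1 hMt hM (measurableSet_ball.diff measurableSet_closedBall) measurableSet_ball
      (sdiff_subset.trans (Metric.ball_subset_closedBall.trans (Metric.closedBall_subset_closedBall (by linarith)))) 0
      (by
        intro ξ hξ x hx
        have h2 : ‖ξ‖ ≤ 2 := by have := hξ.1; rw [mem_ball_zero_iff] at this; linarith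
        have h3 : ‖x‖ ≤ r := by rw [mem_ball_zero_iff] at hx; exact hx.le
        rw [abs_mul, abs_of_pos (by positivity), sub_zero]
        calc _ ≤ 2 * Real.pi * (r * 2) := by
              gcongr
              exact (abs_real_inner_le_norm _ _).trans (mul_le_mul h3 h2 (norm_nonneg _) hr0.le)
          _ = 1 := by rw [hr]; field_simp; norm_num) (by positivity)
      (by
        intro ξ hξ
        have h2 := hξ.1
        have h3 := hξ.2
        rw [mem_ball_zero_iff] at h2
        rw [mem_closedBall_zero_iff, not_le] at h3
        have h4 : |‖ξ‖ - 1| < δ := by rw [abs_lt]; constructor <;> linarith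
        refine (hsy _ (h4.trans hδ2)).trans ?_
        gcongr) (by positivity) (by positivity)
      (by
        rw [measure_sdiff (Metric.closedBall_subset_ball (by linarith)) measurableSet_closedBall.nullMeasurableSet measure_closedBall_lt_top.ne,
          hvol _ (by linarith), hvolc, ← ENNReal.ofReal_sub _ hω0.le]
        apply ENNReal.ofReal_le_ofReal
        have h5 := one_add_mul_le_pow (show (-2 : ℝ) ≤ δ by linarith) N
        have h6 : δ ≤ N * δ := le_mul_of_one_le_left h0.le (by exact_mod_cast (by omega : 1 ≤ N))
        nlinarith)
      (by rw [hvol _ hr0.le])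
    rw [Real.mul_rpow hω0.le h0.le, Real.mul_rpow hC.le h0.le] at h
    linarith
  linarith

end PartQ

/-- For `N ≥ 2`, `Q_κ` is bounded on `H^s(ℝ^N) \ {0}` if and only if
`κ ≥ 1/2` and `(N/s)(1/2 - 1/p) ≤ 1 - κ ≤ ((N+1)/2)(1/2 - 1/p)`. -/
theorem stmt2 (N : ℕ) (hN : 2 ≤ N) (s p κ : ℝ) (hs : 0 < s) (hp : 2 < p)
    (hκ0 : 0 < κ) (hκ1 : κ < 1) :
    (⨆ (U : Hs N s) (_ : U.Nontriv), Qquot p κ U) < ⊤ ↔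
      (1 / 2 ≤ κ ∧ ((N : ℝ) / s) * (1 / 2 - 1 / p) ≤ 1 - κ ∧
        1 - κ ≤ (((N : ℝ) + 1) / 2) * (1 / 2 - 1 / p)) := by
  constructor
  · intro h
    have hM : ∀ U : Hs N s, U.Nontriv → Qquot p κ U ≤ ⨆ (U : Hs N s) (_ : U.Nontriv), Qquot p κ U :=
      fun U hU => le_iSup₂ (f := fun (U : Hs N s) (_ : U.Nontriv) => Qquot p κ U) U hU
    exact ⟨necess_i hN hp hκ0 hκ1 h.ne hM, necess_iii hN hs hp hκ0 hκ1 h.ne hM, necess_ii hN hp hκ0 hκ1 h.ne hM⟩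
  · rintro ⟨h1, h2, h3⟩
    obtain ⟨C, hC⟩ := sufficiency hN hp hs h1 hκ1 h2 h3
    exact (iSup₂_le fun U _ => hC U).trans_lt ENNReal.ofReal_lt_top


end
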